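/- arXiv:1712.03504 — 2 statements merged into one kernel-verified Lean document; each statement's English description precedes it below -/
import Mathlib

section
/- Let G be a finite connected simple graph. Suppose that (i) G has at least two distinct cycles of length 6, (ii) G has no cycle of length 4, and (iii) G has no even cycle of length ≥ 8. Then deg(P_G) ≥ 3. -/
open MvPolynomial Pointwise

/-- `ρ({i,j}) = e_i + e_j` : the 0/1 (incidence) vector of an edge. -/
noncomputable def rho {N : ℕ} (e : Sym2 (Fin N)) : Fin N → ℝ :=
  fun v => if v ∈ e then 1 else 0

/-- The edge polytope of a graph on `Fin N`. -/
noncomputable def edgePolytope {N : ℕ} (G : SimpleGraph (Fin N)) : Set (Fin N → ℝ) :=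
  convexHull ℝ (rho '' G.edgeSet)

/-- Number of lattice points of the `t`-th dilation (`= 1` for `t = 0`). -/
noncomputable def ehr {N : ℕ} (P : Set (Fin N → ℝ)) (t : ℕ) : ℕ :=
  if t = 0 then 1 else Nat.card {x : Fin N → ℤ // (fun i => (x i : ℝ)) ∈ (t : ℝ) • P}

/-- The dimension of a polytope: the rank of the direction of its affine span. -/
noncomputable def polyDim {N : ℕ} (P : Set (Fin N → ℝ)) : ℕ :=
  Module.finrank ℝ (affineSpan ℝ P).direction

/-- The `i`-th coefficient of `(1-λ)^{d+1} (1 + Σ_{t≥1} |tP ∩ Z^N| λ^t)`. -/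
noncomputable def deltaCoeff {N : ℕ} (P : Set (Fin N → ℝ)) (i : ℕ) : ℤ :=
  ∑ j ∈ Finset.range (i + 1),
    (-1 : ℤ) ^ j * (Nat.choose (polyDim P + 1) j : ℤ) * (ehr P (i - j) : ℤ)

/-- The degree of the δ-polynomial of `P`. -/
noncomputable def polyDeg {N : ℕ} (P : Set (Fin N → ℝ)) : ℕ :=
  sSup {i : ℕ | deltaCoeff P i ≠ 0}

/-- The monomial `t_i t_j s` attached to an edge `{i,j}`; `s` is the variable `none`. -/
noncomputable def edgeMonom (K : Type*) [Field K] {V : Type*} (e : Sym2 V) :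
    MvPolynomial (Option V) K :=
  Sym2.lift ⟨fun i j => X (some i) * X (some j) * X none, fun i j => by ring⟩ e

/-- The edge ring `K[G]`, the subalgebra generated by the monomials `t^{ρ(e)} s`. -/
noncomputable def edgeRing (K : Type*) [Field K] {V : Type*} (G : SimpleGraph V) :
    Subalgebra K (MvPolynomial (Option V) K) :=
  Algebra.adjoin K (edgeMonom K '' G.edgeSet)

/-- The toric ideal `I_G`: kernel of `x_e ↦ t^{ρ(e)} s`. -/
noncomputable def toricIdeal (K : Type*) [Field K] {V : Type*} (G : SimpleGraph V) :
    Ideal (MvPolynomial G.edgeSet K) :=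
  RingHom.ker (MvPolynomial.aeval (fun e : G.edgeSet => edgeMonom K (e : Sym2 V)) :
    MvPolynomial G.edgeSet K →ₐ[K] MvPolynomial (Option V) K)

/-- `S/I` has a `q`-linear (minimal graded free) resolution: there is a graded free
resolution of `S/I` in which the free module at homological step `i ≥ 1` is generated
in the single degree `q + i - 1`; equivalently all Betti numbers `β_{i,j}` with
`j ≠ q + i - 1` vanish. -/
def HasLinearResolution {σ K : Type*} [Field K] (q : ℕ)
    (I : Ideal (MvPolynomial σ K)) : Prop :=
  ∃ (b : ℕ → ℕ)
    (φ₀ : (Fin (b 0) →₀ MvPolynomial σ K) →ₗ[MvPolynomial σ K] MvPolynomial σ K)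
    (φ : ∀ i : ℕ,
      (Fin (b (i + 1)) →₀ MvPolynomial σ K) →ₗ[MvPolynomial σ K]
        (Fin (b i) →₀ MvPolynomial σ K)),
    LinearMap.range φ₀ = I ∧
    LinearMap.ker φ₀ = LinearMap.range (φ 0) ∧
    (∀ i, LinearMap.ker (φ i) = LinearMap.range (φ (i + 1))) ∧
    (∀ j, (φ₀ (Finsupp.single j 1)).IsHomogeneous q) ∧
    (∀ i j k, ((φ i (Finsupp.single j 1)) k).IsHomogeneous 1)

/-!
Count lattice points of the cone over `P_G` inside half-open boxes spanned by linearly independent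
edge vectors: the `i`th coefficient of the `δ`-polynomial is the number of box points of height
`i`. If the smallest face of the cone containing a lattice point `m` spans the whole space,
reflecting the fractional part of `m` in the centre of its box gives a box point showing that the
degree is at least the dimension of that space minus the height of `m`. Adding to `m` an edge
vector outside the span of its face raises the height by one and the rank of the face by at least
one, so that `deg P_G` is at least the rank of the face of any `m` minus the height of `m`.

For the sum `m` of a perfect matching of a hexagon, of height `3`, the other perfect matching has
the same sum, so that the face contains all six edges, which have rank `5`. This gives
`deg P_G ≥ 2`, and it improves by one as soon as there is a linear relation, modulo the span of the
hexagon, between at least three edge vectors: adding to `m` the edges on one side of the relation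
brings those on the other side into the face, and one side can be chosen so that this costs less
than it gains. A second hexagon provides such a relation, unless it has the same vertices as the
first one or shares with it two vertices at distance two, and then a `4`-cycle appears.
-/

open Filter Topology

section SmallPerturbation

variable {x q : ℝ}

lemma tendsto_add_mul_nhdsGT_zero (x q : ℝ) :
    Tendsto (fun ε : ℝ => x + ε * q) (𝓝[>] 0) (𝓝 x) := by
  have h : Tendsto (fun ε : ℝ => x + ε * q) (𝓝 0) (𝓝 (x + 0 * q)) :=
    (tendsto_id.mul_const q).const_add x
  simpa using h.mono_left nhdsWithin_le_nhds

lemma eventually_add_mul_pos (hx : 0 < x) (q : ℝ) : ∀ᶠ ε : ℝ in 𝓝[>] 0, 0 < x + ε * q :=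
  (tendsto_add_mul_nhdsGT_zero x q).eventually_const_lt hx

lemma eventually_add_mul_ne_zero (x : ℝ) (hq : q ≠ 0) : ∀ᶠ ε : ℝ in 𝓝[>] 0, x + ε * q ≠ 0 := by
  have hne : ∀ᶠ ε : ℝ in 𝓝[>] 0, ε ≠ -x / q :=
    (nhdsGT_le_nhdsNE 0).trans (nhdsNE_le_cofinite 0) (eventually_cofinite_ne (-x / q))
  filter_upwards [hne] with ε hε h
  exact hε ((eq_div_iff hq).2 (by linarith))

lemma eventually_add_mul_pos_or_eventually_add_mul_neg (x : ℝ) (hq : q ≠ 0) :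
    (∀ᶠ ε : ℝ in 𝓝[>] 0, 0 < x + ε * q) ∨ ∀ᶠ ε : ℝ in 𝓝[>] 0, x + ε * q < 0 := by
  rcases lt_trichotomy x 0 with hx | rfl | hx
  · exact .inr ((tendsto_add_mul_nhdsGT_zero x q).eventually_lt_const hx)
  · rcases hq.lt_or_gt with hq | hq
    · refine .inr (eventually_mem_nhdsWithin.mono fun ε (hε : 0 < ε) => ?_)
      simpa using mul_neg_of_pos_of_neg hε hq
    · refine .inl (eventually_mem_nhdsWithin.mono fun ε (hε : 0 < ε) => ?_)
      simpa using mul_pos hε hq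
  · exact .inl (eventually_add_mul_pos hx q)

lemma eventually_add_mul_pos_of_frequently (hq : q ≠ 0)
    (h : ∃ᶠ ε : ℝ in 𝓝[>] 0, 0 < x + ε * q) : ∀ᶠ ε : ℝ in 𝓝[>] 0, 0 < x + ε * q :=
  (eventually_add_mul_pos_or_eventually_add_mul_neg x hq).resolve_right fun hneg =>
    h (hneg.mono fun _ => not_lt_of_gt)

lemma mem_Icc_of_eventually_add_mul_mem_Ioo {a b : ℝ}
    (h : ∀ᶠ ε : ℝ in 𝓝[>] 0, x + ε * q ∈ Set.Ioo a b) : x ∈ Set.Icc a b :=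
  isClosed_Icc.mem_of_tendsto (tendsto_add_mul_nhdsGT_zero x q)
    (h.mono fun _ hε => Set.Ioo_subset_Icc_self hε)

lemma exists_nat_eventually_sub_add_mul_mem_Ioo (hq : q ≠ 0)
    (h : ∀ᶠ ε : ℝ in 𝓝[>] 0, 0 < x + ε * q) :
    ∃ n : ℕ, ∀ᶠ ε : ℝ in 𝓝[>] 0, x - n + ε * q ∈ Set.Ioo (0 : ℝ) 1 := by
  have hbounded : ∃ n : ℕ, ¬ ∀ᶠ ε : ℝ in 𝓝[>] 0, 0 < x - n + ε * q := by
    obtain ⟨n, hn⟩ := exists_nat_gt x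
    refine ⟨n, fun hpos => ?_⟩
    obtain ⟨ε, hε, hε'⟩ := (hpos.and ((tendsto_add_mul_nhdsGT_zero (x - n) q).eventually_lt_const
      (sub_neg.2 hn))).exists
    exact lt_asymm hε hε'
  classical
  obtain ⟨n, hn⟩ : ∃ n, Nat.find hbounded = n + 1 :=
    Nat.exists_eq_add_one.2 ((Nat.find_pos hbounded).2 (by simpa using h))
  refine ⟨n, ?_⟩
  have hpos := not_not.1 (Nat.find_min hbounded (m := n) (by omega))
  have hneg := (eventually_add_mul_pos_or_eventually_add_mul_neg _ hq).resolve_left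
    (hn ▸ Nat.find_spec hbounded)
  filter_upwards [hpos, hneg] with ε hε hε'
  push_cast at hε'
  exact ⟨hε, by linarith⟩

end SmallPerturbation

section FaceSpan

variable {V : Type*} [AddCommGroup V] [Module ℝ V]

/-- The order ideal generated by `m` in the preordered vector space with positive cone `C`. For `m`
in `C` it is the linear span of the smallest face of `C` that contains `m`. -/
def faceSpan (C : PointedCone ℝ V) (m : V) : Submodule ℝ V where
  carrier := {u | ∃ r : ℝ, r • m - u ∈ C ∧ r • m + u ∈ C}
  zero_mem' := ⟨0, by simp⟩
  add_mem' := by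
    rintro u w ⟨r, hru, hru'⟩ ⟨s, hsw, hsw'⟩
    refine ⟨r + s, ?_, ?_⟩
    · convert C.add_mem hru hsw using 1
      module
    · convert C.add_mem hru' hsw' using 1
      module
  smul_mem' := by
    rintro t u ⟨r, hru, hru'⟩
    rcases le_total 0 t with ht | ht
    · refine ⟨t * r, ?_, ?_⟩
      · convert C.smul_mem ht hru using 1
        module
      · convert C.smul_mem ht hru' using 1
        module
    · refine ⟨-t * r, ?_, ?_⟩
      · convert C.smul_mem (neg_nonneg.2 ht) hru' using 1
        module
      · convert C.smul_mem (neg_nonneg.2 ht) hru using 1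
        module

variable {C : PointedCone ℝ V} {m u w : V}

lemma mem_faceSpan_of_smul_sub_mem {r : ℝ} (hm : m ∈ C) (hu : u ∈ C) (h : r • m - u ∈ C) :
    u ∈ faceSpan C m := by
  refine ⟨|r|, ?_, C.add_mem (C.smul_mem (abs_nonneg r) hm) hu⟩
  convert C.add_mem (C.smul_mem (sub_nonneg.2 (le_abs_self r)) hm) h using 1
  module

lemma mem_faceSpan_self (hm : m ∈ C) : m ∈ faceSpan C m :=
  mem_faceSpan_of_smul_sub_mem (r := 1) hm hm (by simp)

lemma faceSpan_le_add (hm : m ∈ C) (hw : w ∈ C) : faceSpan C m ≤ faceSpan C (m + w) := by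
  rintro u ⟨r, hr, hr'⟩
  have hmw : (|r| - r) • m + |r| • w ∈ C :=
    C.add_mem (C.smul_mem (sub_nonneg.2 (le_abs_self r)) hm) (C.smul_mem (abs_nonneg r) hw)
  refine ⟨|r|, ?_, ?_⟩
  · convert C.add_mem hr hmw using 1
    module
  · convert C.add_mem hr' hmw using 1
    module

lemma mem_faceSpan_add (hm : m ∈ C) (hw : w ∈ C) : w ∈ faceSpan C (m + w) :=
  mem_faceSpan_of_smul_sub_mem (r := 1) (C.add_mem hm hw) hw (by simpa using hm)

lemma mem_faceSpan_of_add_mem (hm : m ∈ C) (hu : u ∈ C) (hw : w ∈ C)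
    (h : u + w ∈ faceSpan C m) : u ∈ faceSpan C m := by
  obtain ⟨r, hr, -⟩ := h
  refine mem_faceSpan_of_smul_sub_mem (r := r) hm hu ?_
  convert C.add_mem hr hw using 1
  module

lemma faceSpan_le_span (hm : m ∈ C) : faceSpan C m ≤ Submodule.span ℝ (C : Set V) := by
  rintro u ⟨r, -, hr⟩
  have hmem := Submodule.sub_mem _ (Submodule.subset_span hr)
    (Submodule.smul_mem _ r (Submodule.subset_span (R := ℝ) hm))
  simpa using hmem

lemma eventually_sub_smul_mem_of_mem_faceSpan (hm : m ∈ C) (hu : u ∈ faceSpan C m) :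
    ∀ᶠ ε : ℝ in 𝓝[>] 0, m - ε • u ∈ C := by
  obtain ⟨r, hr, -⟩ := hu
  have hsmall := eventually_add_mul_pos one_pos (-r)
  filter_upwards [hsmall, self_mem_nhdsWithin] with ε hε (hpos : 0 < ε)
  convert C.add_mem (C.smul_mem hε.le hm) (C.smul_mem hpos.le hr) using 1
  module

end FaceSpan

section Coordinates

variable {ι V : Type*} [AddCommGroup V] [Module ℝ V] {v : ι → V} {σ : Finset ι} {x : V} {i : ι}

/-- `σ` indexes a basis of the linear span of the family `v`. -/
structure IsBasisSet (v : ι → V) (σ : Finset ι) : Prop where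
  indep : LinearIndepOn ℝ v (σ : Set ι)
  span_eq : Submodule.span ℝ (v '' σ) = Submodule.span ℝ (Set.range v)

lemma IsBasisSet.card_eq (hσ : IsBasisSet v σ) :
    σ.card = Module.finrank ℝ (Submodule.span ℝ (Set.range v)) := by
  rw [← hσ.span_eq, Set.image_eq_range, finrank_span_eq_card hσ.indep]
  exact (Fintype.card_coe σ).symm

/-- The coordinates of a vector with respect to the linearly independent family `v i`, `i ∈ σ`,
extended by zero to all of `ι`. The value is arbitrary outside the span of that family. -/
noncomputable def coord (v : ι → V) (σ : Finset ι) : V →ₗ[ℝ] ι → ℝ :=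
  Function.ExtendByZero.linearMap ℝ ((↑) : σ → ι) ∘ₗ
    (Fintype.linearCombination ℝ fun i : σ => v i).leftInverse

lemma coord_apply_of_notMem (hi : i ∉ σ) : coord v σ x i = 0 :=
  Function.extend_apply' _ _ _ fun ⟨j, hj⟩ => hi (hj ▸ j.2)

lemma coord_nonneg (hpos : ∀ i ∈ σ, 0 < coord v σ x i) (i : ι) : 0 ≤ coord v σ x i := by
  by_cases hi : i ∈ σ
  · exact (hpos i hi).le
  · exact (coord_apply_of_notMem hi).ge

lemma mem_span_of_mem_hull (hx : x ∈ PointedCone.hull ℝ (Set.range v)) :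
    x ∈ Submodule.span ℝ (Set.range v) :=
  PointedCone.hull_le_span _ _ hx

lemma coord_apply_self [DecidableEq ι] (hσ : LinearIndepOn ℝ v (σ : Set ι)) (hi : i ∈ σ) :
    coord v σ (v i) = Pi.single i 1 := by
  have hvi : v i = Fintype.linearCombination ℝ (fun j : σ => v j) (Pi.single ⟨i, hi⟩ 1) := by simp
  funext j
  by_cases hj : j ∈ σ
  · rw [hvi, coord, LinearMap.comp_apply, LinearMap.leftInverse_apply_of_inj]
    · refine (Subtype.val_injective.extend_apply
        (Pi.single ⟨i, hi⟩ 1 : σ → ℝ) 0 ⟨j, hj⟩).trans ?_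
      simp [Pi.single_apply]
    · exact LinearMap.ker_eq_bot.2 hσ.fintypeLinearCombination_injective
  · rw [coord_apply_of_notMem hj, Pi.single_eq_of_ne (ne_of_mem_of_not_mem hi hj).symm]

lemma coord_apply_eq_zero_of_mem_span {s : Set ι} (hσ : LinearIndepOn ℝ v (σ : Set ι))
    (hs : s ⊆ σ) (hx : x ∈ Submodule.span ℝ (v '' s)) (hi : i ∉ s) : coord v σ x i = 0 := by
  classical
  suffices h : Submodule.span ℝ (v '' s) ≤ LinearMap.ker (LinearMap.proj i ∘ₗ coord v σ) from h hx
  refine Submodule.span_le.2 (Set.image_subset_iff.2 fun j hj => ?_)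
  simp [coord_apply_self hσ (hs hj), ne_of_mem_of_not_mem hj hi]

variable [Fintype ι] {c : ι → ℝ}

lemma mem_span_image_iff_exists_sum_eq {s : Set ι} :
    x ∈ Submodule.span ℝ (v '' s) ↔ ∃ c : ι → ℝ, (∀ i ∉ s, c i = 0) ∧ ∑ i, c i • v i = x := by
  rw [Finsupp.mem_span_image_iff_linearCombination]
  constructor
  · rintro ⟨l, hl, rfl⟩
    exact ⟨l, fun i hi => (Finsupp.mem_supported' ℝ l).1 hl i hi,
      (l.sum_fintype (fun i a => a • v i) fun i => zero_smul ℝ (v i)).symm⟩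
  · rintro ⟨c, hc, rfl⟩
    refine ⟨Finsupp.equivFunOnFinite.symm c, (Finsupp.mem_supported' ℝ _).2 hc, ?_⟩
    simp [Finsupp.linearCombination_apply, Finsupp.sum_fintype]

lemma coord_sum_smul (hσ : LinearIndepOn ℝ v (σ : Set ι)) (hc : ∀ i ∉ σ, c i = 0) :
    coord v σ (∑ i, c i • v i) = c := by
  classical
  have hterm (i : ι) : c i • coord v σ (v i) = Pi.single i (c i) := by
    by_cases hi : i ∈ σ
    · rw [coord_apply_self hσ hi, ← Pi.single_smul, smul_eq_mul, mul_one]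
    · rw [hc i hi, zero_smul, Pi.single_zero]
  simp only [map_sum, map_smul, hterm, Finset.univ_sum_single]

namespace IsBasisSet

lemma sum_coord_smul (hσ : IsBasisSet v σ) (hx : x ∈ Submodule.span ℝ (Set.range v)) :
    ∑ i, coord v σ x i • v i = x := by
  rw [← hσ.span_eq] at hx
  obtain ⟨c, hc, rfl⟩ := mem_span_image_iff_exists_sum_eq.1 hx
  rw [coord_sum_smul hσ.indep hc]

lemma sum_coord (hσ : IsBasisSet v σ) {η : V →ₗ[ℝ] ℝ} (hη : ∀ i, η (v i) = 1)
    (hx : x ∈ Submodule.span ℝ (Set.range v)) : ∑ i, coord v σ x i = η x := by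
  conv_rhs => rw [← hσ.sum_coord_smul hx]
  simp [hη]

end IsBasisSet

end Coordinates

section GenericVectors

variable {ι V : Type*} [AddCommGroup V] [Module ℝ V] {v : ι → V} {y : V} {s : Set ι}

/-- `q` lies on no hyperplane spanned by vectors of the family `v`. -/
def IsGenericVector (v : ι → V) (q : V) : Prop :=
  ∀ σ, IsBasisSet v σ → ∀ i ∈ σ, coord v σ q i ≠ 0

variable [Finite ι]

lemma exists_isBasisSet_subset (hy : IsGenericVector v y)
    (hys : y ∈ Submodule.span ℝ (v '' s)) : ∃ τ : Finset ι, (τ : Set ι) ⊆ s ∧ IsBasisSet v τ := by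
  obtain ⟨t, hts, -, hspan, ht⟩ :=
    exists_linearIndepOn_extension (linearIndepOn_empty ℝ v) (Set.empty_subset s)
  obtain ⟨b, -, htb, hspan', hb⟩ := exists_linearIndepOn_extension ht (Set.subset_univ t)
  lift b to Finset ι using b.toFinite
  rw [Set.image_univ] at hspan'
  have hbasis : IsBasisSet v b := ⟨hb, (Submodule.span_mono (Set.image_subset_range v b)).antisymm
    (Submodule.span_le.2 hspan')⟩
  refine ⟨b, fun i hi => hts ?_, hbasis⟩
  by_contra hit
  exact hy _ hbasis i hi (coord_apply_eq_zero_of_mem_span hb htb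
    (Submodule.span_le.2 hspan hys) hit)

lemma IsGenericVector.eventually_add_smul {q : V} (hq : IsGenericVector v q) (x : V) :
    ∀ᶠ ε : ℝ in 𝓝[>] 0, IsGenericVector v (x + ε • q) := by
  simp only [IsGenericVector, eventually_all, map_add, map_smul, Pi.add_apply, Pi.smul_apply,
    smul_eq_mul]
  exact fun σ hσ i hi => eventually_add_mul_ne_zero _ (hq σ hσ i hi)

lemma exists_isGenericVector_mem_hull (v : ι → V) :
    ∃ q ∈ PointedCone.hull ℝ (Set.range v), IsGenericVector v q := by
  classical
  cases nonempty_fintype ι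
  obtain ⟨k, hk⟩ := Module.Dual.exists_forall_ne_zero_of_forall_exists
    (ι := {a : Finset ι × ι // IsBasisSet v a.1 ∧ a.2 ∈ a.1})
    (fun a => LinearMap.proj a.1.2 ∘ₗ coord v a.1.1 ∘ₗ Fintype.linearCombination ℝ v)
    (fun a => ⟨Pi.single a.1.2 1, by simp [coord_apply_self a.2.1.indep a.2.2]⟩)
  have hgen : IsGenericVector v (∑ i, k i • v i) := fun σ hσ i hi => hk ⟨(σ, i), hσ, hi⟩
  have hpos : ∀ᶠ ε : ℝ in 𝓝[>] 0, ∀ i, 0 < 1 + ε * k i :=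
    eventually_all.2 fun i => eventually_add_mul_pos one_pos (k i)
  obtain ⟨ε, hε, hεpos⟩ :=
    ((hgen.eventually_add_smul (∑ i, v i)).and hpos).exists
  refine ⟨∑ i, v i + ε • ∑ i, k i • v i, ?_, hε⟩
  have hsum : ∑ i, v i + ε • ∑ i, k i • v i = ∑ i, (1 + ε * k i) • v i := by
    simp only [add_smul, one_smul, mul_smul, Finset.sum_add_distrib, Finset.smul_sum]
  rw [hsum]
  exact sum_mem fun i _ => PointedCone.smul_mem _ (hεpos i).le (PointedCone.subset_hull ⟨i, rfl⟩)

end GenericVectors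

section LowerBases

variable {ι V : Type*} [Fintype ι] [AddCommGroup V] [Module ℝ V]
  {v : ι → V} {η : V →ₗ[ℝ] ℝ} {ω c : ι → ℝ} {σ τ : Finset ι} {y : V}

/-- The price of a vector when it is expressed in the basis `σ` and `v i` costs `ω i`. -/
noncomputable def basisCost (v : ι → V) (ω : ι → ℝ) (σ : Finset ι) : V →ₗ[ℝ] ℝ :=
  Fintype.linearCombination ℝ ω ∘ₗ coord v σ

lemma basisCost_apply (y : V) : basisCost v ω σ y = ∑ i, coord v σ y i * ω i :=
  rfl

/-- `σ` spans a cell of the lower envelope of the points `v i` lifted to heights `ω i`: every other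
lifted point lies strictly above the hyperplane through the lifted points of `σ`. For generic `ω`
these cells triangulate the cone generated by `v`. -/
structure IsLowerBasis (v : ι → V) (ω : ι → ℝ) (σ : Finset ι) : Prop extends IsBasisSet v σ where
  basisCost_lt : ∀ e ∉ σ, basisCost v ω σ (v e) < ω e

/-- No lift `ω e` lies on the hyperplane through the lifts of a basis that avoids `e`. -/
def IsGenericWeight (v : ι → V) (ω : ι → ℝ) : Prop :=
  ∀ σ, IsBasisSet v σ → ∀ e ∉ σ, basisCost v ω σ (v e) ≠ ω e

lemma IsBasisSet.basisCost_self (hσ : IsBasisSet v σ) {i : ι} (hi : i ∈ σ) :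
    basisCost v ω σ (v i) = ω i := by
  classical
  simp [basisCost_apply, coord_apply_self hσ.indep hi, Pi.single_apply]

namespace IsLowerBasis

lemma basisCost_le (hσ : IsLowerBasis v ω σ) (e : ι) : basisCost v ω σ (v e) ≤ ω e := by
  by_cases he : e ∈ σ
  · exact (hσ.basisCost_self he).le
  · exact (hσ.basisCost_lt e he).le

lemma basisCost_sum_smul_le (hσ : IsLowerBasis v ω σ) (hc : ∀ i, 0 ≤ c i) :
    basisCost v ω σ (∑ i, c i • v i) ≤ ∑ i, c i * ω i := by
  simp only [map_sum, map_smul, smul_eq_mul]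
  exact Finset.sum_le_sum fun i _ => mul_le_mul_of_nonneg_left (hσ.basisCost_le i) (hc i)

lemma basisCost_sum_smul_lt (hσ : IsLowerBasis v ω σ) (hc : ∀ i, 0 ≤ c i) {e : ι} (he : e ∉ σ)
    (hce : 0 < c e) : basisCost v ω σ (∑ i, c i • v i) < ∑ i, c i * ω i := by
  simp only [map_sum, map_smul, smul_eq_mul]
  exact Finset.sum_lt_sum (fun i _ => mul_le_mul_of_nonneg_left (hσ.basisCost_le i) (hc i))
    ⟨e, Finset.mem_univ e, mul_lt_mul_of_pos_left (hσ.basisCost_lt e he) hce⟩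

lemma subset_of_coord_pos (hσ : IsLowerBasis v ω σ) (hτ : IsLowerBasis v ω τ)
    (hy : y ∈ Submodule.span ℝ (Set.range v)) (hyσ : ∀ i ∈ σ, 0 < coord v σ y i)
    (hyτ : ∀ i ∈ τ, 0 < coord v τ y i) : τ ⊆ σ := by
  by_contra hsub
  obtain ⟨e, heτ, heσ⟩ := Finset.not_subset.1 hsub
  refine lt_irrefl (basisCost v ω σ y) ?_
  calc basisCost v ω σ y
      = basisCost v ω σ (∑ i, coord v τ y i • v i) := by rw [hτ.sum_coord_smul hy]
    _ < basisCost v ω τ y := hσ.basisCost_sum_smul_lt (coord_nonneg hyτ) heσ (hyτ e heτ)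
    _ = basisCost v ω τ (∑ i, coord v σ y i • v i) := by rw [hσ.sum_coord_smul hy]
    _ ≤ basisCost v ω σ y := hτ.basisCost_sum_smul_le (coord_nonneg hyσ)

lemma eq_of_coord_pos (hσ : IsLowerBasis v ω σ) (hτ : IsLowerBasis v ω τ)
    (hy : y ∈ Submodule.span ℝ (Set.range v)) (hyσ : ∀ i ∈ σ, 0 < coord v σ y i)
    (hyτ : ∀ i ∈ τ, 0 < coord v τ y i) : σ = τ :=
  (hτ.subset_of_coord_pos hσ hy hyτ hyσ).antisymm (hσ.subset_of_coord_pos hτ hy hyσ hyτ)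

end IsLowerBasis

lemma isCompact_setOf_sum_smul_eq (hη : ∀ i, η (v i) = 1) (y : V) :
    IsCompact {c : ι → ℝ | (∀ i, 0 ≤ c i) ∧ ∑ i, c i • v i = y} := by
  rcases Set.eq_empty_or_nonempty {c : ι → ℝ | (∀ i, 0 ≤ c i) ∧ ∑ i, c i • v i = y} with
    hempty | ⟨c₀, -, hc₀⟩
  · exact hempty ▸ isCompact_empty
  have hker (c : ι → ℝ) :
      ∑ i, c i • v i = y ↔ c - c₀ ∈ LinearMap.ker (Fintype.linearCombination ℝ v) := by
    rw [LinearMap.sub_mem_ker_iff, Fintype.linearCombination_apply,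
      Fintype.linearCombination_apply, hc₀]
  have hclosed : IsClosed {c : ι → ℝ | (∀ i, 0 ≤ c i) ∧ ∑ i, c i • v i = y} := by
    simp only [hker, Set.ofPred_and, Set.ofPred_forall]
    refine (isClosed_iInter fun i => isClosed_le continuous_const (continuous_apply i)).inter ?_
    exact (Submodule.closed_of_finiteDimensional _).preimage (continuous_id.sub continuous_const)
  refine isCompact_Icc.of_isClosed_subset hclosed
    (fun c hc => ⟨hc.1, fun i => ?_⟩ : _ ⊆ Set.Icc 0 fun _ => η y)
  have hsum : η y = ∑ j, c j := by simp [← hc.2, hη]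
  exact hsum ▸ Finset.single_le_sum (fun j _ => hc.1 j) (Finset.mem_univ i)

lemma mem_hull_range_iff :
    y ∈ PointedCone.hull ℝ (Set.range v) ↔ ∃ c : ι → ℝ, (∀ i, 0 ≤ c i) ∧ ∑ i, c i • v i = y := by
  rw [PointedCone.hull, Submodule.mem_span_range_iff_exists_fun]
  exact ⟨fun ⟨c, hc⟩ => ⟨fun i => c i, fun i => (c i).2, hc⟩,
    fun ⟨c, hc, hy⟩ => ⟨fun i => ⟨c i, hc i⟩, hy⟩⟩

/-- `c` is an optimal solution of the linear program of writing a vector as a nonnegative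
combination of the family `v` at minimal price. -/
def IsCheapest (v : ι → V) (ω c : ι → ℝ) : Prop :=
  (∀ i, 0 ≤ c i) ∧
    ∀ c' : ι → ℝ, (∀ i, 0 ≤ c' i) → ∑ i, c' i • v i = ∑ i, c i • v i →
      ∑ i, c i * ω i ≤ ∑ i, c' i * ω i

lemma exists_isCheapest (hη : ∀ i, η (v i) = 1) (ω : ι → ℝ)
    (hy : y ∈ PointedCone.hull ℝ (Set.range v)) :
    ∃ c, IsCheapest v ω c ∧ ∑ i, c i • v i = y := by
  obtain ⟨c, ⟨hc, hcy⟩, hmin⟩ := (isCompact_setOf_sum_smul_eq hη y).exists_isMinOn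
    (mem_hull_range_iff.1 hy)
    (show Continuous fun c : ι → ℝ => ∑ i, c i * ω i by fun_prop).continuousOn
  exact ⟨c, ⟨hc, fun c' hc' hc'y => hmin ⟨hc', hc'y.trans hcy⟩⟩, hcy⟩

lemma IsCheapest.sum_mul_nonneg (hc : IsCheapest v ω c) {g : ι → ℝ}
    (hg : ∑ i, g i • v i = 0) (hg_nonneg : ∀ i, c i = 0 → 0 ≤ g i) :
    0 ≤ ∑ i, g i * ω i := by
  have hfeasible (i : ι) : ∀ᶠ ε : ℝ in 𝓝[>] 0, 0 ≤ c i + ε * g i := by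
    rcases (hc.1 i).eq_or_lt with hci | hci
    · filter_upwards [self_mem_nhdsWithin] with ε (hε : 0 < ε)
      rw [← hci, zero_add]
      exact mul_nonneg hε.le (hg_nonneg i hci.symm)
    · exact (eventually_add_mul_pos hci (g i)).mono fun _ => le_of_lt
  obtain ⟨ε, hε, hpos : 0 < ε⟩ :=
    ((eventually_all.2 hfeasible).and self_mem_nhdsWithin).exists
  have hle := hc.2 (fun i => c i + ε * g i) hε
    (by simp only [add_smul, mul_smul, Finset.sum_add_distrib, ← Finset.smul_sum, hg, smul_zero,
      add_zero])
  simp only [add_mul, mul_assoc, Finset.sum_add_distrib, ← Finset.mul_sum] at hle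
  exact nonneg_of_mul_nonneg_right ((le_add_iff_nonneg_right _).1 hle) hpos

namespace IsCheapest

lemma basisCost_le (hc : IsCheapest v ω c) (hτ : IsBasisSet v τ) (hsupp : ∀ i ∈ τ, c i ≠ 0)
    (e : ι) : basisCost v ω τ (v e) ≤ ω e := by
  classical
  have hmem : v e ∈ Submodule.span ℝ (Set.range v) := Submodule.subset_span ⟨e, rfl⟩
  have h := hc.sum_mul_nonneg (g := Pi.single e 1 - coord v τ (v e))
    (by simp [sub_smul, Finset.sum_sub_distrib, hτ.sum_coord_smul hmem, Pi.single_apply])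
    (fun i hi => by
      rw [Pi.sub_apply, coord_apply_of_notMem fun h => hsupp i h hi, sub_zero]
      by_cases h : i = e <;> simp [h])
  simpa [sub_mul, Finset.sum_sub_distrib, basisCost_apply, Pi.single_apply] using h

lemma le_basisCost (hc : IsCheapest v ω c) (hτ : IsBasisSet v τ) (hsupp : ∀ i ∈ τ, c i ≠ 0)
    {e : ι} (he : c e ≠ 0) : ω e ≤ basisCost v ω τ (v e) := by
  classical
  have hmem : v e ∈ Submodule.span ℝ (Set.range v) := Submodule.subset_span ⟨e, rfl⟩
  have h := hc.sum_mul_nonneg (g := coord v τ (v e) - Pi.single e 1)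
    (by simp [sub_smul, Finset.sum_sub_distrib, hτ.sum_coord_smul hmem, Pi.single_apply])
    (fun i hi => by
      rw [Pi.sub_apply, coord_apply_of_notMem fun h => hsupp i h hi,
        Pi.single_eq_of_ne (by rintro rfl; exact he hi), sub_zero])
  simpa [sub_mul, Finset.sum_sub_distrib, basisCost_apply, Pi.single_apply] using h

end IsCheapest

/-- Complementary slackness: the support of an optimal solution of the linear program is the
wanted basis. -/
lemma exists_isLowerBasis_coord_pos (hη : ∀ i, η (v i) = 1) (hω : IsGenericWeight v ω)
    (hy : y ∈ PointedCone.hull ℝ (Set.range v)) (hgen : IsGenericVector v y) :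
    ∃ σ, IsLowerBasis v ω σ ∧ ∀ i ∈ σ, 0 < coord v σ y i := by
  obtain ⟨c, hc, rfl⟩ := exists_isCheapest hη ω hy
  obtain ⟨τ, hsupp, hτ⟩ := exists_isBasisSet_subset (s := {i | c i ≠ 0}) hgen
    (mem_span_image_iff_exists_sum_eq.2 ⟨c, fun i hi => not_not.1 hi, rfl⟩)
  have hzero (e : ι) (he : e ∉ τ) : c e = 0 := by
    by_contra hce
    exact hω τ hτ e he ((hc.basisCost_le hτ hsupp e).antisymm (hc.le_basisCost hτ hsupp hce))
  refine ⟨τ, ⟨hτ, fun e he => (hc.basisCost_le hτ hsupp e).lt_of_ne (hω τ hτ e he)⟩, ?_⟩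
  rw [coord_sum_smul hτ.indep hzero]
  exact fun i hi => (hc.1 i).lt_of_ne' (hsupp hi)

lemma exists_isGenericWeight (v : ι → V) : ∃ ω, IsGenericWeight v ω := by
  classical
  obtain ⟨ω, hω⟩ := Module.Dual.exists_forall_ne_zero_of_forall_exists
    (ι := {a : Finset ι × ι // a.2 ∉ a.1})
    (fun a => Fintype.linearCombination ℝ (coord v a.1.1 (v a.1.2) - Pi.single a.1.2 1))
    (fun a => ⟨Pi.single a.1.2 1, by simp [coord_apply_of_notMem a.2]⟩)
  refine ⟨ω, fun σ _ e he h => hω ⟨(σ, e), he⟩ ?_⟩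
  rw [basisCost_apply] at h
  simp [Fintype.linearCombination_apply, mul_sub, Finset.sum_sub_distrib, Pi.single_apply, ← h,
    mul_comm]

end LowerBases

section BoxPoints

variable {ι V : Type*} [AddCommGroup V] [Module ℝ V] {v : ι → V} {η : V →ₗ[ℝ] ℝ}
  {ω : ι → ℝ} {Λ : AddSubgroup V} {q x : V} {b b' : Finset ι × V} {z z' : ι →₀ ℕ} {t : ℕ}

/-- The lattice points of height `t` in the cone generated by `v`. -/
def latticeSlice (v : ι → V) (Λ : AddSubgroup V) (η : V →ₗ[ℝ] ℝ) (t : ℕ) : Set V :=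
  {x | x ∈ Λ ∧ x ∈ PointedCone.hull ℝ (Set.range v) ∧ η x = t}

lemma nonneg_of_mem_hull (hη : ∀ i, η (v i) = 1) (hx : x ∈ PointedCone.hull ℝ (Set.range v)) :
    0 ≤ η x := by
  induction hx using Submodule.span_induction with
  | mem x hx =>
    obtain ⟨i, rfl⟩ := hx
    exact (hη i).symm ▸ zero_le_one
  | zero => exact (map_zero η).ge
  | add x y _ _ hx hy => exact (map_add η x y).symm ▸ add_nonneg hx hy
  | smul r x _ hx => exact (map_smul η (r : ℝ) x).symm ▸ mul_nonneg r.2 hx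

lemma natFloor_eq_of_mem_hull (hη : ∀ i, η (v i) = 1) (hΛη : ∀ x ∈ Λ, ∃ k : ℤ, η x = k)
    (hxΛ : x ∈ Λ) (hx : x ∈ PointedCone.hull ℝ (Set.range v)) : (⌊η x⌋₊ : ℝ) = η x := by
  obtain ⟨k, hk⟩ := hΛη x hxΛ
  have hk_nonneg : 0 ≤ k := by exact_mod_cast hk ▸ nonneg_of_mem_hull hη hx
  lift k to ℕ using hk_nonneg
  simp [hk]

variable [Fintype ι]

/-- `b = (σ, y)` where `σ` spans a cell of the triangulation given by `ω` and `y` is a lattice point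
of the half-open unit box spanned by `σ`. The direction `q` decides which facets belong to the
box: a point belongs to it when it moves into the open box along `q`. -/
structure IsBoxPoint (v : ι → V) (ω : ι → ℝ) (Λ : AddSubgroup V) (q : V) (b : Finset ι × V) :
    Prop where
  isLowerBasis : IsLowerBasis v ω b.1
  mem_lattice : b.2 ∈ Λ
  mem_span : b.2 ∈ Submodule.span ℝ (Set.range v)
  eventually_mem_Ioo : ∀ i ∈ b.1, ∀ᶠ ε : ℝ in 𝓝[>] 0,
    coord v b.1 b.2 i + ε * coord v b.1 q i ∈ Set.Ioo (0 : ℝ) 1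

lemma natCast_combination_mem_lattice (hΛ : ∀ i, v i ∈ Λ) (z : ι →₀ ℕ) :
    ∑ i, (z i : ℝ) • v i ∈ Λ := by
  simp only [Nat.cast_smul_eq_nsmul]
  exact Λ.sum_mem fun i _ => Λ.nsmul_mem (hΛ i) (z i)

lemma natCast_combination_mem_hull (v : ι → V) (z : ι →₀ ℕ) :
    ∑ i, (z i : ℝ) • v i ∈ PointedCone.hull ℝ (Set.range v) :=
  mem_hull_range_iff.2 ⟨fun i => z i, fun i => (z i).cast_nonneg, rfl⟩

lemma exists_isLowerBasis_eventually_coord_pos (hη : ∀ i, η (v i) = 1)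
    (hω : IsGenericWeight v ω) (hq : IsGenericVector v q)
    (hx : ∀ᶠ ε : ℝ in 𝓝[>] 0, x + ε • q ∈ PointedCone.hull ℝ (Set.range v)) :
    ∃ σ, IsLowerBasis v ω σ ∧ ∀ i ∈ σ, ∀ᶠ ε : ℝ in 𝓝[>] 0,
      0 < coord v σ x i + ε * coord v σ q i := by
  have hfreq : ∃ᶠ ε : ℝ in 𝓝[>] 0, ∃ σ, IsLowerBasis v ω σ ∧
      ∀ i ∈ σ, 0 < coord v σ x i + ε * coord v σ q i := by
    refine Eventually.frequently ?_
    filter_upwards [hx, hq.eventually_add_smul x] with ε hmem hgen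
    simpa using exists_isLowerBasis_coord_pos hη hω hmem hgen
  obtain ⟨σ, hσ⟩ := frequently_exists.1 hfreq
  obtain ⟨-, hlower, -⟩ := hσ.exists
  exact ⟨σ, hlower, fun i hi => eventually_add_mul_pos_of_frequently (hq σ hlower.toIsBasisSet i hi)
    (hσ.mono fun ε h => h.2 i hi)⟩

lemma exists_isBoxPoint_add (hη : ∀ i, η (v i) = 1) (hω : IsGenericWeight v ω)
    (hΛ : ∀ i, v i ∈ Λ) (hq : IsGenericVector v q) (hxΛ : x ∈ Λ)
    (hxspan : x ∈ Submodule.span ℝ (Set.range v))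
    (hx : ∀ᶠ ε : ℝ in 𝓝[>] 0, x + ε • q ∈ PointedCone.hull ℝ (Set.range v)) :
    ∃ b, IsBoxPoint v ω Λ q b ∧ ∃ z : ι →₀ ℕ, z.support ⊆ b.1 ∧
      b.2 + ∑ i, (z i : ℝ) • v i = x := by
  obtain ⟨σ, hσ, hpos⟩ := exists_isLowerBasis_eventually_coord_pos hη hω hq hx
  choose! n hn using fun i (hi : i ∈ σ) =>
    exists_nat_eventually_sub_add_mul_mem_Ioo (hq σ hσ.toIsBasisSet i hi) (hpos i hi)
  classical
  let z : ι →₀ ℕ := Finsupp.equivFunOnFinite.symm fun i => if i ∈ σ then n i else 0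
  have hz (i : ι) (hi : i ∉ σ) : z i = 0 := by simp [z, hi]
  have hcoord : coord v σ (∑ i, (z i : ℝ) • v i) = fun i => (z i : ℝ) :=
    coord_sum_smul hσ.indep fun i hi => by simp [hz i hi]
  refine ⟨(σ, x - ∑ i, (z i : ℝ) • v i), ⟨hσ, ?_, ?_, fun i hi => ?_⟩, z, fun i hi => ?_,
    sub_add_cancel _ _⟩
  · exact Λ.sub_mem hxΛ (natCast_combination_mem_lattice hΛ z)
  · exact Submodule.sub_mem _ hxspan (mem_span_of_mem_hull (natCast_combination_mem_hull v z))
  · have hzi : z i = n i := by simp [z, hi]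
    simpa only [map_sub, Pi.sub_apply, hcoord, hzi] using hn i hi
  · exact not_not.1 fun h => Finsupp.mem_support_iff.1 hi (hz i h)

namespace IsBoxPoint

lemma coord_mem_Icc (hb : IsBoxPoint v ω Λ q b) {i : ι} (hi : i ∈ b.1) :
    coord v b.1 b.2 i ∈ Set.Icc (0 : ℝ) 1 :=
  mem_Icc_of_eventually_add_mul_mem_Ioo (hb.eventually_mem_Ioo i hi)

lemma mem_hull (hb : IsBoxPoint v ω Λ q b) : b.2 ∈ PointedCone.hull ℝ (Set.range v) := by
  refine mem_hull_range_iff.2 ⟨_, fun i => ?_, hb.isLowerBasis.sum_coord_smul hb.mem_span⟩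
  by_cases hi : i ∈ b.1
  · exact (hb.coord_mem_Icc hi).1
  · exact (coord_apply_of_notMem hi).ge

lemma height_le (hη : ∀ i, η (v i) = 1) (hb : IsBoxPoint v ω Λ q b) : η b.2 ≤ b.1.card := by
  rw [← hb.isLowerBasis.sum_coord hη hb.mem_span,
    ← Finset.sum_subset b.1.subset_univ fun i _ hi => coord_apply_of_notMem hi]
  exact (Finset.sum_le_card_nsmul _ _ 1 fun i hi => (hb.coord_mem_Icc hi).2).trans (by simp)

lemma coord_add (hb : IsBoxPoint v ω Λ q b) (hz : z.support ⊆ b.1) (i : ι) :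
    coord v b.1 (b.2 + ∑ i, (z i : ℝ) • v i) i = coord v b.1 b.2 i + z i := by
  have h := coord_sum_smul (c := fun i => (z i : ℝ)) hb.isLowerBasis.indep fun i hi => by
    simpa using fun h => hi (hz (Finsupp.mem_support_iff.2 h))
  rw [map_add, Pi.add_apply, h]

lemma eventually_coord_add_pos (hb : IsBoxPoint v ω Λ q b) (hz : z.support ⊆ b.1) :
    ∀ᶠ ε : ℝ in 𝓝[>] 0, ∀ i ∈ b.1,
      0 < coord v b.1 (b.2 + ∑ i, (z i : ℝ) • v i + ε • q) i := by
  refine (Finset.eventually_all _).2 fun i hi => (hb.eventually_mem_Ioo i hi).mono fun ε hε => ?_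
  rw [map_add, Pi.add_apply, hb.coord_add hz, map_smul, Pi.smul_apply, smul_eq_mul, add_right_comm]
  exact add_pos_of_pos_of_nonneg hε.1 (z i).cast_nonneg

lemma add_injective (hqspan : q ∈ Submodule.span ℝ (Set.range v)) (hb : IsBoxPoint v ω Λ q b)
    (hb' : IsBoxPoint v ω Λ q b') (hz : z.support ⊆ b.1) (hz' : z'.support ⊆ b'.1)
    (h : b.2 + ∑ i, (z i : ℝ) • v i = b'.2 + ∑ i, (z' i : ℝ) • v i) : b = b' ∧ z = z' := by
  obtain ⟨σ, y⟩ := b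
  obtain ⟨σ', y'⟩ := b'
  obtain rfl : σ = σ' := by
    obtain ⟨ε, hε, hε'⟩ :=
      ((hb.eventually_coord_add_pos hz).and (hb'.eventually_coord_add_pos hz')).exists
    rw [← h] at hε'
    refine hb.isLowerBasis.eq_of_coord_pos hb'.isLowerBasis ?_ hε hε'
    exact Submodule.add_mem _ (Submodule.add_mem _ hb.mem_span
      (mem_span_of_mem_hull (natCast_combination_mem_hull v z))) (Submodule.smul_mem _ ε hqspan)
  have hzz : z = z' := by
    ext i
    by_cases hi : i ∈ σ
    · obtain ⟨ε, hε, hε'⟩ := ((hb.eventually_mem_Ioo i hi).and (hb'.eventually_mem_Ioo i hi)).exists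
      have hsum : coord v σ y i + z i = coord v σ y' i + z' i := by
        rw [← hb.coord_add hz, ← hb'.coord_add hz', h]
      have hlt : (z i : ℝ) < z' i + 1 := by linarith [hε.1, hε'.2]
      have hlt' : (z' i : ℝ) < z i + 1 := by linarith [hε.2, hε'.1]
      norm_cast at hlt hlt'
      omega
    · rw [Finsupp.notMem_support_iff.1 fun h => hi (hz h),
        Finsupp.notMem_support_iff.1 fun h => hi (hz' h)]
  subst hzz
  exact ⟨Prod.ext rfl (add_right_cancel h), rfl⟩

lemma neg (hΛ : ∀ i, v i ∈ Λ) (hb : IsBoxPoint v ω Λ (-q) b) :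
    IsBoxPoint v ω Λ q (b.1, ∑ i ∈ b.1, v i - b.2) := by
  classical
  have hcoord : coord v b.1 (∑ i ∈ b.1, v i) = fun i => if i ∈ b.1 then 1 else 0 := by
    rw [← coord_sum_smul (c := fun i => if i ∈ b.1 then 1 else 0) hb.isLowerBasis.indep
      fun i hi => if_neg hi]
    simp
  refine ⟨hb.isLowerBasis, Λ.sub_mem (Λ.sum_mem fun i _ => hΛ i) hb.mem_lattice,
    Submodule.sub_mem _ (Submodule.sum_mem _ fun i _ => Submodule.subset_span ⟨i, rfl⟩)
      hb.mem_span, fun i hi => (hb.eventually_mem_Ioo i hi).mono fun ε hε => ?_⟩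
  simp only [map_neg, Pi.neg_apply, mul_neg, Set.mem_Ioo] at hε
  simp only [map_sub, Pi.sub_apply, hcoord, if_pos hi, Set.mem_Ioo]
  constructor <;> linarith [hε.1, hε.2]

lemma finite (hη : ∀ i, η (v i) = 1) (hΛη : ∀ x ∈ Λ, ∃ k : ℤ, η x = k)
    (hfin : ∀ t, (latticeSlice v Λ η t).Finite) : {b | IsBoxPoint v ω Λ q b}.Finite := by
  refine (Set.finite_univ.prod ((Set.finite_Iic (Fintype.card ι)).biUnion
    fun t _ => hfin t)).subset fun b hb => ⟨trivial, ?_⟩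
  have hfloor := natFloor_eq_of_mem_hull hη hΛη hb.mem_lattice hb.mem_hull
  refine Set.mem_biUnion (Nat.floor_le_of_le ?_) ⟨hb.mem_lattice, hb.mem_hull, hfloor.symm⟩
  exact (hb.height_le hη).trans (Nat.cast_le.2 (Finset.card_le_univ _))

lemma add_mem_latticeSlice (hη : ∀ i, η (v i) = 1) (hΛ : ∀ i, v i ∈ Λ)
    (hΛη : ∀ x ∈ Λ, ∃ k : ℤ, η x = k) (hb : IsBoxPoint v ω Λ q b)
    (hzt : ⌊η b.2⌋₊ + ∑ i, z i = t) :
    b.2 + ∑ i, (z i : ℝ) • v i ∈ latticeSlice v Λ η t := by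
  refine ⟨Λ.add_mem hb.mem_lattice (natCast_combination_mem_lattice hΛ z),
    Submodule.add_mem _ hb.mem_hull (natCast_combination_mem_hull v z), ?_⟩
  rw [map_add, ← natFloor_eq_of_mem_hull hη hΛη hb.mem_lattice hb.mem_hull, ← hzt]
  simp [hη]

end IsBoxPoint

end BoxPoints

section DeltaVector

lemma coeff_one_sub_X_pow_mul_mk {R : Type*} [CommRing R] (n : ℕ) (f : ℕ → R) (i : ℕ) :
    PowerSeries.coeff i ((1 - PowerSeries.X) ^ n * PowerSeries.mk f) =
      ∑ j ∈ Finset.range (i + 1), (-1 : R) ^ j * (n.choose j : R) * f (i - j) := by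
  have hcoeff (j : ℕ) : PowerSeries.coeff j ((1 - PowerSeries.X : PowerSeries R) ^ n) =
      (-1 : R) ^ j * (n.choose j : R) := by
    have hrescale : (1 - PowerSeries.X : PowerSeries R) ^ n =
        PowerSeries.rescale (-1) (((1 + Polynomial.X) ^ n : Polynomial R) : PowerSeries R) := by
      simp [sub_eq_add_neg, PowerSeries.rescale_X]
    rw [hrescale, PowerSeries.coeff_rescale, Polynomial.coeff_coe,
      Polynomial.coeff_one_add_X_pow]
  rw [PowerSeries.coeff_mul, Finset.Nat.sum_antidiagonal_eq_sum_range_succ_mk]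
  simp [hcoeff]

variable {ι V : Type*}

/-- The exponents `z` supported on `σ` for which `h + ∑ i, z i = t`. -/
noncomputable def shiftedExponents (σ : Finset ι) (h t : ℕ) : Finset (ι →₀ ℕ) :=
  open Classical in if h ≤ t then σ.finsuppAntidiag (t - h) else ∅

lemma coeff_X_pow_mul_mk_one_pow_card (R : Type*) [CommSemiring R] (σ : Finset ι) (h t : ℕ) :
    PowerSeries.coeff (R := R) t (PowerSeries.X ^ h * PowerSeries.mk 1 ^ σ.card) =
      (shiftedExponents σ h t).card := by
  classical
  rw [PowerSeries.coeff_X_pow_mul', ← Finset.prod_const, shiftedExponents]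
  split_ifs
  · rw [PowerSeries.coeff_prod]
    simp
  · simp

variable [Fintype ι] {σ : Finset ι} {h t : ℕ} {z : ι →₀ ℕ}

lemma mem_shiftedExponents :
    z ∈ shiftedExponents σ h t ↔ z.support ⊆ σ ∧ h + ∑ i, z i = t := by
  have hsum (hz : z.support ⊆ σ) : ∑ i, z i = ∑ i ∈ σ, z i :=
    (Finset.sum_subset σ.subset_univ fun i _ hi =>
      Finsupp.notMem_support_iff.1 fun hmem => hi (hz hmem)).symm
  classical
  unfold shiftedExponents
  split_ifs with ht
  · rw [Finset.mem_finsuppAntidiag, and_comm]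
    refine and_congr_right fun hz => ?_
    rw [hsum hz, eq_tsub_iff_add_eq_of_le ht, add_comm]
  · simp only [Finset.notMem_empty, false_iff]
    omega

variable [AddCommGroup V] [Module ℝ V] {v : ι → V} {η : V →ₗ[ℝ] ℝ} {ω : ι → ℝ}
  {Λ : AddSubgroup V} {q m : V} {B : Finset (Finset ι × V)}

lemma ncard_latticeSlice (hη : ∀ i, η (v i) = 1) (hω : IsGenericWeight v ω) (hΛ : ∀ i, v i ∈ Λ)
    (hΛη : ∀ x ∈ Λ, ∃ k : ℤ, η x = k) (hq : IsGenericVector v q)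
    (hqhull : q ∈ PointedCone.hull ℝ (Set.range v)) (hB : ∀ b, b ∈ B ↔ IsBoxPoint v ω Λ q b)
    (t : ℕ) :
    (latticeSlice v Λ η t).ncard = ∑ b ∈ B, (shiftedExponents b.1 ⌊η b.2⌋₊ t).card := by
  rw [← Finset.card_sigma, ← Set.ncard_coe_finset]
  symm
  refine Set.ncard_congr (fun a _ => a.1.2 + ∑ i, (a.2 i : ℝ) • v i) ?_ ?_ ?_
  · rintro ⟨b, z⟩ ha
    obtain ⟨hb, hz⟩ := Finset.mem_sigma.1 ha
    exact ((hB b).1 hb).add_mem_latticeSlice hη hΛ hΛη (mem_shiftedExponents.1 hz).2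
  · rintro ⟨b, z⟩ ⟨b', z'⟩ ha ha' h
    obtain ⟨hb, hz⟩ := Finset.mem_sigma.1 ha
    obtain ⟨hb', hz'⟩ := Finset.mem_sigma.1 ha'
    obtain ⟨rfl, rfl⟩ := ((hB b).1 hb).add_injective (mem_span_of_mem_hull hqhull)
      ((hB b').1 hb') (mem_shiftedExponents.1 hz).1 (mem_shiftedExponents.1 hz').1 h
    rfl
  · rintro x ⟨hxΛ, hx, hxt⟩
    obtain ⟨b, hb, z, hz, rfl⟩ := exists_isBoxPoint_add hη hω hΛ hq hxΛ (mem_span_of_mem_hull hx)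
      (eventually_mem_nhdsWithin.mono fun ε hε =>
        Submodule.add_mem _ hx (PointedCone.smul_mem _ (le_of_lt hε) hqhull))
    refine ⟨⟨b, z⟩, Finset.mem_sigma.2 ⟨(hB b).2 hb, mem_shiftedExponents.2 ⟨hz, ?_⟩⟩, rfl⟩
    rw [map_add, ← natFloor_eq_of_mem_hull hη hΛη hb.mem_lattice hb.mem_hull] at hxt
    simp only [map_sum, map_smul, hη, smul_eq_mul, mul_one] at hxt
    exact_mod_cast hxt

lemma one_sub_X_pow_mul_mk_ncard_latticeSlice (hη : ∀ i, η (v i) = 1) (hω : IsGenericWeight v ω)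
    (hΛ : ∀ i, v i ∈ Λ) (hΛη : ∀ x ∈ Λ, ∃ k : ℤ, η x = k) (hq : IsGenericVector v q)
    (hqhull : q ∈ PointedCone.hull ℝ (Set.range v)) (hB : ∀ b, b ∈ B ↔ IsBoxPoint v ω Λ q b) :
    (1 - PowerSeries.X) ^ Module.finrank ℝ (Submodule.span ℝ (Set.range v)) *
        PowerSeries.mk (fun t => ((latticeSlice v Λ η t).ncard : ℤ)) =
      ∑ b ∈ B, PowerSeries.X ^ ⌊η b.2⌋₊ := by
  set n := Module.finrank ℝ (Submodule.span ℝ (Set.range v))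
  have hseries : PowerSeries.mk (fun t => ((latticeSlice v Λ η t).ncard : ℤ)) =
      (∑ b ∈ B, PowerSeries.X ^ ⌊η b.2⌋₊) * PowerSeries.mk 1 ^ n := by
    ext t
    rw [PowerSeries.coeff_mk, ncard_latticeSlice hη hω hΛ hΛη hq hqhull hB, Finset.sum_mul, map_sum,
      Nat.cast_sum]
    refine Finset.sum_congr rfl fun b hb => ?_
    rw [← coeff_X_pow_mul_mk_one_pow_card, ((hB b).1 hb).isLowerBasis.card_eq]
  rw [hseries, mul_left_comm, ← mul_pow, mul_comm (1 - PowerSeries.X),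
    PowerSeries.mk_one_mul_one_sub_eq_one, one_pow, mul_one]

lemma exists_isBoxPoint_finrank_le (hη : ∀ i, η (v i) = 1) (hω : IsGenericWeight v ω)
    (hΛ : ∀ i, v i ∈ Λ) (hq : IsGenericVector v q) (hmΛ : m ∈ Λ)
    (hmspan : m ∈ Submodule.span ℝ (Set.range v))
    (hmq : ∀ᶠ ε : ℝ in 𝓝[>] 0, m - ε • q ∈ PointedCone.hull ℝ (Set.range v)) :
    ∃ b, IsBoxPoint v ω Λ q b ∧
      (Module.finrank ℝ (Submodule.span ℝ (Set.range v)) : ℝ) ≤ η b.2 + η m := by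
  obtain ⟨b, hb, z, -, rfl⟩ := exists_isBoxPoint_add hη hω hΛ (q := -q)
    (fun σ hσ i hi => by simpa using hq σ hσ i hi) hmΛ hmspan
    (by simpa only [smul_neg, ← sub_eq_add_neg] using hmq)
  refine ⟨_, hb.neg hΛ, ?_⟩
  have hz : 0 ≤ η (∑ i, (z i : ℝ) • v i) := nonneg_of_mem_hull hη (natCast_combination_mem_hull v z)
  have hcard : η (∑ i ∈ b.1, v i) = Module.finrank ℝ (Submodule.span ℝ (Set.range v)) := by
    simp [hη, hb.isLowerBasis.card_eq]
  rw [map_sub, hcard, map_add]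
  linarith

/-- Coefficient `i` of the numerator of the generating function that counts the points of `Λ` of
height `t` in the cone generated by `v`. -/
noncomputable def coneDeltaCoeff (v : ι → V) (Λ : AddSubgroup V) (η : V →ₗ[ℝ] ℝ) (i : ℕ) : ℤ :=
  PowerSeries.coeff i ((1 - PowerSeries.X) ^ Module.finrank ℝ (Submodule.span ℝ (Set.range v)) *
    PowerSeries.mk fun t => ((latticeSlice v Λ η t).ncard : ℤ))

lemma coneDeltaCoeff_ne_zero_iff (hη : ∀ i, η (v i) = 1) (hω : IsGenericWeight v ω)
    (hΛ : ∀ i, v i ∈ Λ) (hΛη : ∀ x ∈ Λ, ∃ k : ℤ, η x = k) (hq : IsGenericVector v q)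
    (hqhull : q ∈ PointedCone.hull ℝ (Set.range v)) (hB : ∀ b, b ∈ B ↔ IsBoxPoint v ω Λ q b)
    (i : ℕ) : coneDeltaCoeff v Λ η i ≠ 0 ↔ ∃ b ∈ B, ⌊η b.2⌋₊ = i := by
  have hcount : coneDeltaCoeff v Λ η i = {b ∈ B | ⌊η b.2⌋₊ = i}.card := by
    rw [coneDeltaCoeff, one_sub_X_pow_mul_mk_ncard_latticeSlice hη hω hΛ hΛη hq hqhull hB, map_sum]
    simp [PowerSeries.coeff_X_pow, eq_comm]
  rw [hcount, Nat.cast_ne_zero, Finset.card_ne_zero, Finset.filter_nonempty_iff]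

/-- The degree of the polynomial with coefficients `coneDeltaCoeff v Λ η`. -/
noncomputable def coneDegree (v : ι → V) (Λ : AddSubgroup V) (η : V →ₗ[ℝ] ℝ) : ℕ :=
  sSup {i | coneDeltaCoeff v Λ η i ≠ 0}

end DeltaVector

section LinearIndependence

variable {K ι V : Type*} [Field K] [AddCommGroup V] [Module K V] {v : ι → V}

lemma exists_finsupp_linearIndepOn_support {s : Set ι} {x : V}
    (hx : x ∈ Submodule.span K (v '' s)) : ∃ l : ι →₀ K, (l.support : Set ι) ⊆ s ∧
      LinearIndepOn K v (l.support : Set ι) ∧ Finsupp.linearCombination K v l = x := by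
  obtain ⟨b, hbs, -, hspan, hb⟩ :=
    exists_linearIndepOn_extension (linearIndepOn_empty K v) s.empty_subset
  obtain ⟨l, hl, hlx⟩ :=
    (Finsupp.mem_span_image_iff_linearCombination K).1 (Submodule.span_le.2 hspan hx)
  exact ⟨l, hl.trans hbs, hb.mono hl, hlx⟩

lemma finrank_add_card_le_finrank_sup_span {D : Submodule K V} [FiniteDimensional K D]
    {J : Finset ι} (hJ : LinearIndepOn K (D.mkQ ∘ v) (J : Set ι)) :
    Module.finrank K D + J.card ≤ Module.finrank K ↥(D ⊔ Submodule.span K (v '' J)) := by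
  have hindep := (Module.finBasis K D).linearIndependent.sumElim_of_quotient
    (fun j : J => v j) hJ
  have hcard := finrank_span_eq_card hindep
  rw [Fintype.card_sum, Fintype.card_fin, Fintype.card_coe] at hcard
  have := FiniteDimensional.span_of_finite K (J.finite_toSet.image v)
  rw [← hcard]
  refine Submodule.finrank_mono (Submodule.span_le.2 ?_)
  rintro - ⟨i | j, rfl⟩
  · exact Submodule.mem_sup_left (Module.finBasis K D i).2
  · exact Submodule.mem_sup_right (Submodule.subset_span ⟨j, j.2, rfl⟩)

end LinearIndependence

section FaceGrowth

variable {ι V : Type*} [AddCommGroup V] [Module ℝ V] {v : ι → V} {C : PointedCone ℝ V} {m x : V}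

lemma mem_faceSpan_of_sum_mem {s : Finset ι} {u : ι → V} (hm : m ∈ C) (hu : ∀ i ∈ s, u i ∈ C)
    (h : ∑ i ∈ s, u i ∈ faceSpan C m) {i : ι} (hi : i ∈ s) : u i ∈ faceSpan C m := by
  classical
  rw [← Finset.add_sum_erase s u hi] at h
  exact mem_faceSpan_of_add_mem hm (hu i hi)
    (Submodule.sum_mem C fun j hj => hu j (Finset.mem_of_mem_erase hj)) h

lemma mem_faceSpan_add_sum {s : Finset ι} (hm : m ∈ C) (hv : ∀ i ∈ s, v i ∈ C) {i : ι}
    (hi : i ∈ s) : v i ∈ faceSpan C (m + ∑ i ∈ s, v i) :=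
  have hsum := Submodule.sum_mem C hv
  mem_faceSpan_of_sum_mem (C.add_mem hm hsum) hv (mem_faceSpan_add hm hsum) hi

lemma mem_faceSpan_of_sum_smul_mem {s : Finset ι} {c : ι → ℝ} (hm : m ∈ C)
    (hv : ∀ i ∈ s, v i ∈ C) (hc : ∀ i ∈ s, 0 < c i) (h : ∑ i ∈ s, c i • v i ∈ faceSpan C m)
    {i : ι} (hi : i ∈ s) : v i ∈ faceSpan C m :=
  (Submodule.smul_mem_iff _ (hc i hi).ne').1
    (mem_faceSpan_of_sum_mem hm (fun j hj => C.smul_mem (hc j hj).le (hv j hj)) h hi)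

lemma mem_faceSpan_add_sum_of_sum_smul_sub_sum_smul_mem {P Q : Finset ι} {a b : ι → ℝ} (hm : m ∈ C)
    (hv : ∀ i, v i ∈ C) (ha : ∀ i ∈ P, 0 < a i)
    (h : ∑ i ∈ P, a i • v i - ∑ i ∈ Q, b i • v i ∈ faceSpan C m) {i : ι} (hi : i ∈ P) :
    v i ∈ faceSpan C (m + ∑ i ∈ Q, v i) := by
  have hsum := Submodule.sum_mem C fun i (_ : i ∈ Q) => hv i
  have hQ := Submodule.sum_mem _ fun i (hi : i ∈ Q) =>
    Submodule.smul_mem _ (b i) (mem_faceSpan_add_sum hm (fun i _ => hv i) hi)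
  refine mem_faceSpan_of_sum_smul_mem (C.add_mem hm hsum) (fun i _ => hv i) ha ?_ hi
  simpa using Submodule.add_mem _ (faceSpan_le_add hm hsum h) hQ

-- Adding all terms on one side of the relation to `m` puts the other side into the face as well.
lemma exists_finset_card_add_two_le_forall_mem_faceSpan (hm : m ∈ C) (hv : ∀ i, v i ∈ C)
    {l : ι →₀ ℝ} (hl : 3 ≤ l.support.card)
    (hrel : Finsupp.linearCombination ℝ v l ∈ faceSpan C m) :
    ∃ T : Finset ι, T.card + 2 ≤ l.support.card ∧
      ∀ i ∈ l.support, v i ∈ faceSpan C (m + ∑ j ∈ T, v j) := by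
  classical
  let P := {i ∈ l.support | 0 < l i}
  let Q := {i ∈ l.support | ¬ 0 < l i}
  have hcard : P.card + Q.card = l.support.card := Finset.card_filter_add_card_filter_not _
  have hmem (i : ι) (hi : i ∈ l.support) : i ∈ P ∨ i ∈ Q :=
    (em (0 < l i)).imp (fun h => Finset.mem_filter.2 ⟨hi, h⟩)
      fun h => Finset.mem_filter.2 ⟨hi, h⟩
  have hP (i : ι) (hi : i ∈ P) : 0 < l i := (Finset.mem_filter.1 hi).2
  have hQ (i : ι) (hi : i ∈ Q) : 0 < -l i := by
    obtain ⟨hil, hli⟩ := Finset.mem_filter.1 hi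
    exact neg_pos.2 ((not_lt.1 hli).lt_of_ne (Finsupp.mem_support_iff.1 hil))
  have hsides : ∑ i ∈ P, l i • v i - ∑ i ∈ Q, -l i • v i ∈ faceSpan C m := by
    simp only [neg_smul, Finset.sum_neg_distrib, sub_neg_eq_add]
    rwa [Finset.sum_filter_add_sum_filter_not]
  rcases le_or_gt 2 P.card with hP2 | hP2
  · refine ⟨Q, by omega, fun i hi => ?_⟩
    exact (hmem i hi).elim
      (mem_faceSpan_add_sum_of_sum_smul_sub_sum_smul_mem hm hv hP hsides)
      (mem_faceSpan_add_sum hm fun i _ => hv i)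
  · refine ⟨P, by omega, fun i hi => ?_⟩
    exact (hmem i hi).elim (mem_faceSpan_add_sum hm fun i _ => hv i)
      (mem_faceSpan_add_sum_of_sum_smul_sub_sum_smul_mem hm hv hQ
        (by simpa only [neg_sub] using Submodule.neg_mem _ hsides))

lemma exists_finset_card_lt_forall_mem_faceSpan (hm : m ∈ C) (hv : ∀ i, v i ∈ C) {l : ι →₀ ℝ}
    (hl : 2 ≤ l.support.card) {e : ι} (hel : e ∉ l.support)
    (hrel : v e - Finsupp.linearCombination ℝ v l ∈ faceSpan C m) :
    ∃ T : Finset ι, T.card < l.support.card ∧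
      ∀ i ∈ l.support, v i ∈ faceSpan C (m + ∑ j ∈ T, v j) := by
  classical
  have hsupport : (Finsupp.single e 1 + -l).support = insert e l.support := by
    rw [Finsupp.support_single_add (by rwa [Finsupp.support_neg]) one_ne_zero,
      Finset.cons_eq_insert, Finsupp.support_neg]
  have hcard : (insert e l.support).card = l.support.card + 1 := Finset.card_insert_of_notMem hel
  obtain ⟨T, hT, hlT⟩ := exists_finset_card_add_two_le_forall_mem_faceSpan hm hv
    (l := Finsupp.single e 1 + -l) (by rw [hsupport]; omega)
    (by simpa [← sub_eq_add_neg] using hrel)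
  rw [hsupport] at hT hlT
  exact ⟨T, by omega, fun i hi => hlT i (Finset.mem_insert_of_mem hi)⟩

lemma faceSpan_hull_le_span (hm : m ∈ PointedCone.hull ℝ (Set.range v)) :
    faceSpan (PointedCone.hull ℝ (Set.range v)) m ≤ Submodule.span ℝ (Set.range v) :=
  (faceSpan_le_span hm).trans (Submodule.span_le.2 fun _ => mem_span_of_mem_hull)

variable [Finite ι] {η : V →ₗ[ℝ] ℝ} {Λ : AddSubgroup V} {D : Submodule ℝ V}

lemma exists_finset_forall_mem_faceSpan_add_sum
    (hm : m ∈ PointedCone.hull ℝ (Set.range v)) :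
    ∃ J : Finset ι, (∀ i, v i ∈ faceSpan (PointedCone.hull ℝ (Set.range v)) (m + ∑ j ∈ J, v j)) ∧
      Module.finrank ℝ (faceSpan (PointedCone.hull ℝ (Set.range v)) m) + J.card ≤
        Module.finrank ℝ (Submodule.span ℝ (Set.range v)) := by
  set C := PointedCone.hull ℝ (Set.range v)
  set D := faceSpan C m
  have hv (i : ι) : v i ∈ C := PointedCone.subset_hull ⟨i, rfl⟩
  have hfin := FiniteDimensional.span_of_finite ℝ (Set.finite_range v)
  have hDS : D ≤ Submodule.span ℝ (Set.range v) := faceSpan_hull_le_span hm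
  have := Submodule.finiteDimensional_of_le hDS
  obtain ⟨J, -, -, hspan, hJ⟩ :=
    exists_linearIndepOn_extension (linearIndepOn_empty ℝ (D.mkQ ∘ v)) (Set.univ.empty_subset)
  lift J to Finset ι using J.toFinite
  have hsum := Submodule.sum_mem C fun (j : ι) (_ : j ∈ J) => hv j
  refine ⟨J, fun i => ?_, (finrank_add_card_le_finrank_sup_span hJ).trans
    (Submodule.finrank_mono (sup_le hDS (Submodule.span_mono (Set.image_subset_range _ _))))⟩
  have hi : v i ∈ D ⊔ Submodule.span ℝ (v '' J) := by
    rw [← Submodule.comap_map_mkQ, Submodule.mem_comap, Submodule.map_span, ← Set.image_comp]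
    exact hspan ⟨i, trivial, rfl⟩
  exact sup_le (faceSpan_le_add hm hsum) (Submodule.span_le.2 (Set.image_subset_iff.2 fun j hj =>
    mem_faceSpan_add_sum hm (fun j _ => hv j) hj)) hi

lemma finrank_le_coneDegree_add_of_mem_faceSpan (hη : ∀ i, η (v i) = 1)
    (hΛ : ∀ i, v i ∈ Λ) (hΛη : ∀ x ∈ Λ, ∃ k : ℤ, η x = k)
    (hfin : ∀ t, (latticeSlice v Λ η t).Finite) (hmΛ : m ∈ Λ)
    (hm : m ∈ PointedCone.hull ℝ (Set.range v))
    (hface : ∀ i, v i ∈ faceSpan (PointedCone.hull ℝ (Set.range v)) m) :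
    (Module.finrank ℝ (Submodule.span ℝ (Set.range v)) : ℝ) ≤
      coneDegree v Λ η + η m := by
  cases nonempty_fintype ι
  obtain ⟨ω, hω⟩ := exists_isGenericWeight v
  obtain ⟨q, hqhull, hq⟩ := exists_isGenericVector_mem_hull v
  have hBfin : {b | IsBoxPoint v ω Λ q b}.Finite := IsBoxPoint.finite hη hΛη hfin
  have hiff := coneDeltaCoeff_ne_zero_iff hη hω hΛ hΛη hq hqhull (B := hBfin.toFinset) (by simp)
  have hbdd : BddAbove {i | coneDeltaCoeff v Λ η i ≠ 0} := by
    refine ((hBfin.image fun b => ⌊η b.2⌋₊).subset fun i hi => ?_).bddAbove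
    simpa using (hiff i).1 hi
  have hqface : q ∈ faceSpan (PointedCone.hull ℝ (Set.range v)) m :=
    Submodule.span_le.2 (Set.range_subset_iff.2 hface) (mem_span_of_mem_hull hqhull)
  obtain ⟨b, hb, hle⟩ := exists_isBoxPoint_finrank_le hη hω hΛ hq hmΛ (mem_span_of_mem_hull hm)
    (eventually_sub_smul_mem_of_mem_faceSpan hm hqface)
  have hfloor : ⌊η b.2⌋₊ ≤ coneDegree v Λ η :=
    le_csSup hbdd ((hiff _).2 ⟨b, by simpa using hb, rfl⟩)
  rw [← natFloor_eq_of_mem_hull hη hΛη hb.mem_lattice hb.mem_hull] at hle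
  exact hle.trans (by gcongr)

lemma finrank_faceSpan_le_coneDegree_add (hη : ∀ i, η (v i) = 1)
    (hΛ : ∀ i, v i ∈ Λ) (hΛη : ∀ x ∈ Λ, ∃ k : ℤ, η x = k)
    (hfin : ∀ t, (latticeSlice v Λ η t).Finite) (hmΛ : m ∈ Λ)
    (hm : m ∈ PointedCone.hull ℝ (Set.range v)) :
    (Module.finrank ℝ (faceSpan (PointedCone.hull ℝ (Set.range v)) m) : ℝ) ≤
      coneDegree v Λ η + η m := by
  obtain ⟨J, hJ, hcard⟩ := exists_finset_forall_mem_faceSpan_add_sum hm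
  have hfull := finrank_le_coneDegree_add_of_mem_faceSpan hη hΛ hΛη hfin
    (Λ.add_mem hmΛ (Λ.sum_mem fun i _ => hΛ i))
    (Submodule.add_mem _ hm (Submodule.sum_mem _ fun i _ => PointedCone.subset_hull ⟨i, rfl⟩)) hJ
  have hheight : η (m + ∑ j ∈ J, v j) = η m + J.card := by simp [hη]
  have hcard' : (Module.finrank ℝ (faceSpan (PointedCone.hull ℝ (Set.range v)) m) : ℝ) + J.card ≤
    Module.finrank ℝ (Submodule.span ℝ (Set.range v)) := by exact_mod_cast hcard
  linarith

lemma finrank_add_one_le_coneDegree_add (hη : ∀ i, η (v i) = 1)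
    (hΛ : ∀ i, v i ∈ Λ) (hΛη : ∀ x ∈ Λ, ∃ k : ℤ, η x = k)
    (hfin : ∀ t, (latticeSlice v Λ η t).Finite) (hmΛ : m ∈ Λ)
    (hm : m ∈ PointedCone.hull ℝ (Set.range v))
    (hD : D ≤ faceSpan (PointedCone.hull ℝ (Set.range v)) m) {l : ι →₀ ℝ}
    (hindep : LinearIndepOn ℝ (D.mkQ ∘ v) (l.support : Set ι)) (hl : 2 ≤ l.support.card)
    {e : ι} (hel : e ∉ l.support) (hrel : v e - Finsupp.linearCombination ℝ v l ∈ D) :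
    (Module.finrank ℝ D + 1 : ℝ) ≤ coneDegree v Λ η + η m := by
  set C := PointedCone.hull ℝ (Set.range v)
  have hv (i : ι) : v i ∈ C := PointedCone.subset_hull ⟨i, rfl⟩
  obtain ⟨T, hT, hlT⟩ := exists_finset_card_lt_forall_mem_faceSpan hm hv hl hel (hD hrel)
  have hsum := Submodule.sum_mem C fun (j : ι) (_ : j ∈ T) => hv j
  have hfin_span := FiniteDimensional.span_of_finite ℝ (Set.finite_range v)
  have := Submodule.finiteDimensional_of_le (faceSpan_hull_le_span (C.add_mem hm hsum))
  have hle : D ⊔ Submodule.span ℝ (v '' l.support) ≤ faceSpan C (m + ∑ j ∈ T, v j) :=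
    sup_le (hD.trans (faceSpan_le_add hm hsum))
      (Submodule.span_le.2 (Set.image_subset_iff.2 hlT))
  have := Submodule.finiteDimensional_of_le (hD.trans (faceSpan_le_add hm hsum))
  have hrank : (Module.finrank ℝ D : ℝ) + l.support.card ≤
      Module.finrank ℝ (faceSpan C (m + ∑ j ∈ T, v j)) := by
    exact_mod_cast (finrank_add_card_le_finrank_sup_span hindep).trans (Submodule.finrank_mono hle)
  have hdeg := finrank_faceSpan_le_coneDegree_add hη hΛ hΛη hfin
    (Λ.add_mem hmΛ (Λ.sum_mem fun i _ => hΛ i)) (C.add_mem hm hsum)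
  have hheight : η (m + ∑ j ∈ T, v j) = η m + T.card := by simp [hη]
  have hT' : (T.card : ℝ) + 1 ≤ l.support.card := by exact_mod_cast hT
  linarith

end FaceGrowth

section EdgePolytope

lemma finrank_vectorSpan_add_one {K V : Type*} [Field K] [AddCommGroup V] [Module K V]
    [FiniteDimensional K V] {s : Set V} (hs : s.Nonempty) {η : V →ₗ[K] K}
    (hη : ∀ x ∈ s, η x = 1) :
    Module.finrank K (vectorSpan K s) + 1 = Module.finrank K (Submodule.span K s) := by
  obtain ⟨p, hp⟩ := hs
  have hp0 : p ≠ 0 := fun h => by simpa [h] using hη p hp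
  have hker : vectorSpan K s ≤ LinearMap.ker η := by
    rw [vectorSpan_def, Submodule.span_le]
    rintro _ ⟨x, hx, y, hy, rfl⟩
    simp [hη x hx, hη y hy]
  have hinf : vectorSpan K s ⊓ Submodule.span K {p} = ⊥ := by
    refine eq_bot_iff.2 ?_
    rintro x ⟨hx, hx'⟩
    obtain ⟨c, rfl⟩ := Submodule.mem_span_singleton.1 hx'
    have hc : c = 0 := by simpa [hη p hp] using hker hx
    simp [hc]
  have hsup : vectorSpan K s ⊔ Submodule.span K {p} = Submodule.span K s := by
    refine le_antisymm (sup_le ?_ (Submodule.span_mono (Set.singleton_subset_iff.2 hp))) ?_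
    · rw [vectorSpan_def, Submodule.span_le]
      rintro _ ⟨x, hx, y, hy, rfl⟩
      exact sub_mem (Submodule.subset_span hx) (Submodule.subset_span hy)
    · refine Submodule.span_le.2 fun x hx => ?_
      rw [← vsub_vadd x p]
      exact Submodule.add_mem_sup (vsub_mem_vectorSpan K hx hp)
        (Submodule.mem_span_singleton_self p)
  have hrank := Submodule.finrank_sup_add_finrank_inf_eq (vectorSpan K s) (Submodule.span K {p})
  rwa [hsup, hinf, finrank_bot, finrank_span_singleton hp0, add_zero, eq_comm] at hrank

variable {N : ℕ} {x m : Fin N → ℝ}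

/-- Half of the coordinate sum; it takes the value `1` on every edge vector. -/
noncomputable def height (N : ℕ) : (Fin N → ℝ) →ₗ[ℝ] ℝ :=
  (1 / 2 : ℝ) • ∑ i, LinearMap.proj i

/-- The integer vectors with even coordinate sum. -/
noncomputable def evenLattice (N : ℕ) : AddSubgroup (Fin N → ℝ) where
  carrier := {x | (∃ z : Fin N → ℤ, (fun i => (z i : ℝ)) = x) ∧ ∃ k : ℤ, height N x = k}
  zero_mem' := ⟨⟨0, by ext; simp⟩, 0, by simp⟩
  add_mem' := by
    rintro _ _ ⟨⟨z, rfl⟩, k, hk⟩ ⟨⟨w, rfl⟩, l, hl⟩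
    exact ⟨⟨z + w, by ext; simp⟩, k + l, by rw [map_add, hk, hl]; simp⟩
  neg_mem' := by
    rintro _ ⟨⟨z, rfl⟩, k, hk⟩
    exact ⟨⟨-z, by ext; simp⟩, -k, by rw [map_neg, hk]; simp⟩

lemma height_apply (x : Fin N → ℝ) : height N x = 1 / 2 * ∑ i, x i := by
  simp [height]

lemma rho_mk {a b : Fin N} (hab : a ≠ b) :
    rho s(a, b) = Pi.single a (1 : ℝ) + Pi.single b 1 := by
  ext k
  simp only [rho, Sym2.mem_iff, Pi.add_apply, Pi.single_apply]
  by_cases hk : k = a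
  · simp [hk, hab]
  · simp [hk]

variable (G : SimpleGraph (Fin N))

/-- The vertices of the edge polytope of `G`, as a family indexed by the edges. -/
noncomputable def edgeVec (e : G.edgeSet) : Fin N → ℝ :=
  rho (e : Sym2 (Fin N))

/-- The cone over the edge polytope of `G`. -/
noncomputable def edgeCone : PointedCone ℝ (Fin N → ℝ) :=
  PointedCone.hull ℝ (Set.range (edgeVec G))

lemma range_edgeVec : Set.range (edgeVec G) = rho '' G.edgeSet := by
  ext x
  simp [edgeVec]

lemma height_edgeVec (e : G.edgeSet) : height N (edgeVec G e) = 1 := by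
  obtain ⟨⟨a, b⟩, hab⟩ := e
  have hne : a ≠ b := G.ne_of_adj hab
  simp [edgeVec, rho_mk hne, height_apply, Finset.sum_add_distrib, one_add_one_eq_two]

lemma edgeVec_mem_evenLattice (e : G.edgeSet) : edgeVec G e ∈ evenLattice N := by
  classical
  exact ⟨⟨fun i => if i ∈ (e : Sym2 (Fin N)) then 1 else 0, by ext; simp [edgeVec, rho]⟩, 1,
    by simp [height_edgeVec]⟩

variable {G}

lemma polyDim_edgePolytope_add_one (hG : G.edgeSet.Nonempty) :
    polyDim (edgePolytope G) + 1 =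
      Module.finrank ℝ (Submodule.span ℝ (Set.range (edgeVec G))) := by
  rw [polyDim, edgePolytope, affineSpan_convexHull, direction_affineSpan, range_edgeVec]
  refine finrank_vectorSpan_add_one (hG.image _) (η := height N) ?_
  rintro _ ⟨e, he, rfl⟩
  exact height_edgeVec G ⟨e, he⟩

lemma mem_edgePolytope_iff : x ∈ edgePolytope G ↔ x ∈ edgeCone G ∧ height N x = 1 := by
  rw [edgePolytope, ← range_edgeVec]
  constructor
  · refine fun hx => convexHull_min (t := {x | x ∈ edgeCone G ∧ height N x = 1}) ?_ ?_ hx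
    · rintro _ ⟨e, rfl⟩
      exact ⟨PointedCone.subset_hull ⟨e, rfl⟩, height_edgeVec G e⟩
    · rintro x ⟨hx, hx'⟩ y ⟨hy, hy'⟩ a b ha hb hab
      refine ⟨add_mem (PointedCone.smul_mem _ ha hx) (PointedCone.smul_mem _ hb hy), ?_⟩
      simp [hx', hy', hab]
  · rintro ⟨hx, hx'⟩
    cases nonempty_fintype G.edgeSet
    obtain ⟨c, hc, rfl⟩ := mem_hull_range_iff.1 hx
    refine (convex_convexHull ℝ _).sum_mem (fun i _ => hc i) ?_
      fun i _ => subset_convexHull ℝ _ ⟨i, rfl⟩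
    simpa [height_edgeVec] using hx'

lemma mem_smul_edgePolytope_iff {t : ℕ} (ht : t ≠ 0) :
    x ∈ (t : ℝ) • edgePolytope G ↔ x ∈ edgeCone G ∧ height N x = t := by
  have ht' : (0 : ℝ) < t := by positivity
  rw [Set.mem_smul_set_iff_inv_smul_mem₀ ht'.ne', mem_edgePolytope_iff, map_smul, smul_eq_mul,
    inv_mul_eq_one₀ ht'.ne', eq_comm (a := (t : ℝ))]
  refine and_congr_left fun _ => ⟨fun h => ?_, PointedCone.smul_mem _ (by positivity)⟩
  simpa [smul_smul, ht'.ne'] using PointedCone.smul_mem _ ht'.le h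

lemma eq_zero_of_height_eq_zero (hx : x ∈ edgeCone G) (h : height N x = 0) : x = 0 := by
  cases nonempty_fintype G.edgeSet
  obtain ⟨c, hc, rfl⟩ := mem_hull_range_iff.1 hx
  simp only [map_sum, map_smul, height_edgeVec, smul_eq_mul, mul_one] at h
  rw [Finset.sum_eq_zero_iff_of_nonneg fun i _ => hc i] at h
  exact Finset.sum_eq_zero fun i hi => by rw [h i hi, zero_smul]

lemma ehr_edgePolytope (G : SimpleGraph (Fin N)) (t : ℕ) :
    ehr (edgePolytope G) t = (latticeSlice (edgeVec G) (evenLattice N) (height N) t).ncard := by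
  rw [ehr]
  split_ifs with ht
  · have hzero : latticeSlice (edgeVec G) (evenLattice N) (height N) t = {0} := by
      subst ht
      refine Set.eq_singleton_iff_unique_mem.2
        ⟨⟨zero_mem _, zero_mem _, by simp⟩, fun x hx => ?_⟩
      exact eq_zero_of_height_eq_zero hx.2.1 (by simpa using hx.2.2)
    rw [hzero, Set.ncard_singleton]
  · rw [← Nat.card_coe_set_eq]
    refine Nat.card_eq_of_bijective (fun x => ⟨fun i => (x.1 i : ℝ), ?_⟩) ⟨?_, ?_⟩
    · obtain ⟨hcone, hheight⟩ := (mem_smul_edgePolytope_iff ht).1 x.2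
      exact ⟨⟨⟨x.1, rfl⟩, t, by simpa using hheight⟩, hcone, hheight⟩
    · intro x y h
      ext i
      simpa using congrFun (congrArg Subtype.val h) i
    · rintro ⟨_, ⟨⟨z, rfl⟩, -⟩, hcone, hheight⟩
      exact ⟨⟨z, (mem_smul_edgePolytope_iff ht).2 ⟨hcone, hheight⟩⟩, rfl⟩

lemma apply_nonneg_of_mem_edgeCone (hx : x ∈ edgeCone G) (i : Fin N) : 0 ≤ x i := by
  cases nonempty_fintype G.edgeSet
  obtain ⟨c, hc, rfl⟩ := mem_hull_range_iff.1 hx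
  rw [Finset.sum_apply]
  refine Finset.sum_nonneg fun e _ => mul_nonneg (hc e) ?_
  unfold edgeVec rho
  split_ifs
  exacts [zero_le_one, le_rfl]

lemma finite_latticeSlice_edgeVec (G : SimpleGraph (Fin N)) (t : ℕ) :
    (latticeSlice (edgeVec G) (evenLattice N) (height N) t).Finite := by
  refine ((Set.finite_Icc (0 : Fin N → ℤ) fun _ => 2 * t).image fun z i => (z i : ℝ)).subset ?_
  rintro _ ⟨⟨⟨z, rfl⟩, -⟩, hcone, hheight⟩
  have hnonneg := apply_nonneg_of_mem_edgeCone hcone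
  refine ⟨z, ⟨fun i => by exact_mod_cast hnonneg i, fun i => ?_⟩, rfl⟩
  have hle := Finset.single_le_sum (fun j _ => hnonneg j) (Finset.mem_univ i)
  rw [height_apply] at hheight
  have hzt : (z i : ℝ) ≤ 2 * t := by linarith
  exact_mod_cast hzt

lemma polyDeg_edgePolytope (hG : G.edgeSet.Nonempty) :
    polyDeg (edgePolytope G) = coneDegree (edgeVec G) (evenLattice N) (height N) := by
  have hδ (i : ℕ) : deltaCoeff (edgePolytope G) i =
      coneDeltaCoeff (edgeVec G) (evenLattice N) (height N) i := by
    rw [coneDeltaCoeff, coeff_one_sub_X_pow_mul_mk, deltaCoeff, polyDim_edgePolytope_add_one hG]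
    simp only [ehr_edgePolytope]
  simp only [polyDeg, coneDegree, hδ]

lemma finrank_add_one_le_polyDeg_edgePolytope_add {D : Submodule ℝ (Fin N → ℝ)}
    (hmΛ : m ∈ evenLattice N) (hm : m ∈ edgeCone G) (hD : D ≤ faceSpan (edgeCone G) m)
    {l : G.edgeSet →₀ ℝ} (hindep : LinearIndepOn ℝ (D.mkQ ∘ edgeVec G) (l.support : Set G.edgeSet))
    (hl : 2 ≤ l.support.card) {e : G.edgeSet} (hel : e ∉ l.support)
    (hrel : edgeVec G e - Finsupp.linearCombination ℝ (edgeVec G) l ∈ D) :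
    (Module.finrank ℝ D + 1 : ℝ) ≤ polyDeg (edgePolytope G) + height N m := by
  rw [polyDeg_edgePolytope ⟨e, e.2⟩]
  exact finrank_add_one_le_coneDegree_add (height_edgeVec G) (edgeVec_mem_evenLattice G)
    (fun x hx => hx.2) (finite_latticeSlice_edgeVec G) hmΛ hm hD hindep hl hel hrel

end EdgePolytope

section CyclicMap

variable {V : Type*} {G : SimpleGraph V} {n : ℕ} {a : ℕ → V}

/-- A closed walk `a 0, a 1, …` in `G` that runs through its `n` distinct vertices periodically. For
`3 ≤ n` this is a cycle of length `n` with a base point and an orientation, encoded by a periodic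
sequence so that it can be rotated without changing type. -/
structure IsCyclicMap (G : SimpleGraph V) (n : ℕ) (a : ℕ → V) : Prop where
  eq_iff (i j : ℕ) : a i = a j ↔ i ≡ j [MOD n]
  adj (i : ℕ) : G.Adj (a i) (a (i + 1))

namespace IsCyclicMap

lemma rotate (ha : IsCyclicMap G n a) (c : ℕ) : IsCyclicMap G n fun i => a (i + c) where
  eq_iff i j := (ha.eq_iff _ _).trans
    ⟨Nat.ModEq.add_right_cancel' c, Nat.ModEq.add_right c⟩
  adj i := by simpa only [add_right_comm] using ha.adj (i + c)

lemma pos [Finite V] (ha : IsCyclicMap G n a) : 0 < n := by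
  refine Nat.pos_of_ne_zero ?_
  rintro rfl
  exact not_injective_infinite_finite a fun i j h => Nat.modEq_zero_iff.1 ((ha.eq_iff i j).1 h)

lemma reflect (ha : IsCyclicMap G (n + 1) a) : IsCyclicMap G (n + 1) fun i => a (n * i + 1) where
  eq_iff i j := by
    have hcoprime : (n + 1).gcd n = 1 := by simp
    refine (ha.eq_iff _ _).trans ⟨fun h => ?_, fun h => (h.mul_left n).add_right 1⟩
    exact (h.add_right_cancel' 1).cancel_left_of_coprime hcoprime
  adj i := by
    have hnext : a (n * (i + 1) + 1) = a (n * i) := (ha.eq_iff _ _).2 <| by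
      rw [mul_add, mul_one, add_assoc]
      exact Nat.add_modEq_right
    rw [hnext]
    exact (ha.adj (n * i)).symm

/-- The edge that joins the `i`th vertex to the next one. -/
def edge (ha : IsCyclicMap G n a) (i : ℕ) : G.edgeSet :=
  ⟨s(a i, a (i + 1)), ha.adj i⟩

lemma edge_congr (ha : IsCyclicMap G n a) {i j : ℕ} (h : i ≡ j [MOD n]) :
    ha.edge i = ha.edge j := by
  simp only [edge, (ha.eq_iff _ _).2 h, (ha.eq_iff _ _).2 (h.add_right 1)]

lemma edge_eq_iff (ha : IsCyclicMap G n a) (hn : 3 ≤ n) {i j : ℕ} :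
    ha.edge i = ha.edge j ↔ i ≡ j [MOD n] := by
  refine ⟨?_, ha.edge_congr⟩
  rw [← Subtype.coe_inj]
  simp only [edge, Sym2.eq_iff, ha.eq_iff]
  rintro (h | ⟨hij, hji⟩)
  · exact h.1
  · have htwo : j + 2 ≡ j + 0 [MOD n] := (hij.symm.add_right 1).trans hji
    have hdvd := (Nat.modEq_zero_iff_dvd).1 (Nat.ModEq.add_left_cancel' j htwo)
    exact absurd (Nat.le_of_dvd two_pos hdvd) (by omega)

end IsCyclicMap

end CyclicMap

section EvenCycle

variable {N n k l : ℕ} {G : SimpleGraph (Fin N)} {a b : ℕ → Fin N}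

namespace IsCyclicMap

lemma edgeVec_edge (ha : IsCyclicMap G n a) (i : ℕ) :
    edgeVec G (ha.edge i) = Pi.single (a i) 1 + Pi.single (a (i + 1)) 1 :=
  rho_mk (ha.adj i).ne

lemma edgeVec_edge_sub_succ (ha : IsCyclicMap G n a) (i : ℕ) :
    edgeVec G (ha.edge i) - edgeVec G (ha.edge (i + 1)) =
      Pi.single (a i) 1 - Pi.single (a (i + 2)) 1 := by
  rw [edgeVec_edge, edgeVec_edge, add_comm (Pi.single (a i) 1)]
  exact add_sub_add_left_eq_sub _ _ _

/-- The linear span of the edge vectors of a cycle. -/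
noncomputable def edgeSpan (ha : IsCyclicMap G n a) : Submodule ℝ (Fin N → ℝ) :=
  Submodule.span ℝ (Set.range fun i => edgeVec G (ha.edge i))

lemma le_finrank_edgeSpan_add_one (ha : IsCyclicMap G n a) :
    n ≤ Module.finrank ℝ ha.edgeSpan + 1 := by
  let W := ha.edgeSpan ⊔ Submodule.span ℝ {Pi.single (a 0) 1}
  have hmem (i : ℕ) : Pi.single (a i) 1 ∈ W := by
    induction i with
    | zero => exact Submodule.mem_sup_right (Submodule.mem_span_singleton_self _)
    | succ i ih =>
      have hedge : edgeVec G (ha.edge i) ∈ W :=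
        Submodule.mem_sup_left (Submodule.subset_span ⟨i, rfl⟩)
      rw [edgeVec_edge] at hedge
      exact (Submodule.add_mem_iff_right _ ih).1 hedge
  have hinj : Function.Injective fun i : Fin n => a i := fun i j h =>
    Fin.ext (Nat.ModEq.eq_of_lt_of_lt ((ha.eq_iff i j).1 h) i.2 j.2)
  have hindep := (Pi.linearIndependent_single_one (Fin N) ℝ).comp _ hinj
  calc
    n = Module.finrank ℝ (Submodule.span ℝ
        (Set.range ((fun i => Pi.single i (1 : ℝ)) ∘ fun i : Fin n => a i))) := by
      rw [finrank_span_eq_card hindep, Fintype.card_fin]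
    _ ≤ Module.finrank ℝ W :=
      Submodule.finrank_mono (Submodule.span_le.2 (Set.range_subset_iff.2 fun i => hmem i))
    _ ≤ Module.finrank ℝ ha.edgeSpan +
        Module.finrank ℝ (Submodule.span ℝ {(Pi.single (a 0) 1 : Fin N → ℝ)}) :=
      Submodule.finrank_add_le_finrank_add_finrank _ _
    _ ≤ Module.finrank ℝ ha.edgeSpan + 1 := by
      gcongr
      exact (finrank_span_le_card _).trans (by simp)

lemma dotProduct_eq_zero_of_mem_edgeSpan (ha : IsCyclicMap G n a) {σ x : Fin N → ℝ}
    (hσ : ∀ i, σ (a (i + 1)) = -σ (a i)) (hx : x ∈ ha.edgeSpan) : σ ⬝ᵥ x = 0 := by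
  induction hx using Submodule.span_induction with
  | mem x hx =>
    obtain ⟨i, rfl⟩ := hx
    simp [edgeVec_edge, hσ]
  | zero => exact dotProduct_zero σ
  | add x y _ _ hx hy => rw [dotProduct_add, hx, hy, add_zero]
  | smul c x _ hx => rw [dotProduct_smul, hx, smul_zero]

lemma apply_eq_zero_of_mem_edgeSpan (ha : IsCyclicMap G n a) {x : Fin N → ℝ} {v : Fin N}
    (hv : ∀ i, a i ≠ v) (hx : x ∈ ha.edgeSpan) : x v = 0 := by
  rw [← single_one_dotProduct v x]
  exact ha.dotProduct_eq_zero_of_mem_edgeSpan (fun i => by simp [hv]) hx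

/-- The sum of the vectors of every second edge of a cycle of length `2 * k`. -/
noncomputable def matchingSum (ha : IsCyclicMap G (2 * k) a) : Fin N → ℝ :=
  ∑ i ∈ Finset.range k, edgeVec G (ha.edge (2 * i))

lemma matchingSum_eq_sum_odd (ha : IsCyclicMap G (2 * k) a) :
    ha.matchingSum = ∑ i ∈ Finset.range k, edgeVec G (ha.edge (2 * i + 1)) := by
  have hperiodic : a (2 * k) = a (2 * 0) := (ha.eq_iff _ _).2 (by simp [Nat.ModEq])
  let u (i : ℕ) : Fin N → ℝ := Pi.single (a (2 * i)) 1
  rw [matchingSum, ← sub_eq_zero, ← Finset.sum_sub_distrib]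
  calc
    ∑ i ∈ Finset.range k, (edgeVec G (ha.edge (2 * i)) - edgeVec G (ha.edge (2 * i + 1))) =
        ∑ i ∈ Finset.range k, (u i - u (i + 1)) :=
      Finset.sum_congr rfl fun i _ => ha.edgeVec_edge_sub_succ (2 * i)
    _ = u 0 - u k := Finset.sum_range_sub' u k
    _ = 0 := by simp only [u, hperiodic, sub_self]

lemma matchingSum_mem_evenLattice (ha : IsCyclicMap G (2 * k) a) :
    ha.matchingSum ∈ evenLattice N :=
  AddSubgroup.sum_mem _ fun _ _ => edgeVec_mem_evenLattice G _

lemma matchingSum_mem_edgeCone (ha : IsCyclicMap G (2 * k) a) :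
    ha.matchingSum ∈ edgeCone G :=
  Submodule.sum_mem _ fun _ _ => PointedCone.subset_hull ⟨_, rfl⟩

lemma height_matchingSum (ha : IsCyclicMap G (2 * k) a) : height N ha.matchingSum = k := by
  simp [matchingSum, height_edgeVec]

lemma modEq_two_of_single_sub_single_mem_edgeSpan (ha : IsCyclicMap G (2 * k) a) {i j : ℕ}
    (h : Pi.single (a i) 1 - Pi.single (a j) 1 ∈ ha.edgeSpan) : i ≡ j [MOD 2] := by
  have hfactors : Function.FactorsThrough (fun i => (-1 : ℝ) ^ i) a := fun i j hij => by
    have hmod : i ≡ j [MOD 2] := ((ha.eq_iff i j).1 hij).of_mul_right k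
    change (-1 : ℝ) ^ i = (-1) ^ j
    rw [neg_one_pow_eq_pow_mod_two, hmod, ← neg_one_pow_eq_pow_mod_two]
  set σ : Fin N → ℝ := Function.extend a (fun i => (-1) ^ i) 0
  have hσ (i : ℕ) : σ (a i) = (-1) ^ i := hfactors.extend_apply 0 i
  have hzero := ha.dotProduct_eq_zero_of_mem_edgeSpan (σ := σ)
    (fun i => by rw [hσ, hσ, pow_succ, mul_neg_one]) h
  rw [dotProduct_sub, dotProduct_single_one, dotProduct_single_one, hσ, hσ, sub_eq_zero] at hzero
  rcases Nat.even_or_odd i with hi | hi <;> rcases Nat.even_or_odd j with hj | hj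
  all_goals
    simp only [hi.neg_one_pow, hj.neg_one_pow] at hzero
    grind [Nat.ModEq]

lemma edgeSpan_le_faceSpan (ha : IsCyclicMap G (2 * k) a) :
    ha.edgeSpan ≤ faceSpan (edgeCone G) ha.matchingSum := by
  have hm := ha.matchingSum_mem_edgeCone
  have hself := mem_faceSpan_self hm
  have hv (e : G.edgeSet) : edgeVec G e ∈ edgeCone G := PointedCone.subset_hull ⟨e, rfl⟩
  refine Submodule.span_le.2 ?_
  rintro _ ⟨i, rfl⟩
  have hlt : i % (2 * k) < 2 * k := Nat.mod_lt _ ha.pos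
  simp only [← ha.edge_congr (Nat.mod_modEq i (2 * k))]
  rcases Nat.even_or_odd' (i % (2 * k)) with ⟨j, hj | hj⟩
  · rw [hj]
    exact mem_faceSpan_of_sum_mem (u := fun i => edgeVec G (ha.edge (2 * i))) hm
      (fun i _ => hv _) hself (Finset.mem_range.2 (by omega))
  · rw [hj]
    refine mem_faceSpan_of_sum_mem (s := Finset.range k)
      (u := fun i => edgeVec G (ha.edge (2 * i + 1))) hm
      (fun i _ => hv _) ?_ (Finset.mem_range.2 (by omega))
    rwa [← ha.matchingSum_eq_sum_odd]

lemma edgeVec_edge_apply_eq_zero (ha : IsCyclicMap G n a) {i j : ℕ} (hj : ¬ i ≡ j [MOD n])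
    (hj' : ¬ i ≡ j + 1 [MOD n]) : edgeVec G (ha.edge j) (a i) = 0 := by
  have h : a i ≠ a j := (ha.eq_iff _ _).not.2 hj
  have h' : a i ≠ a (j + 1) := (ha.eq_iff _ _).not.2 hj'
  simp [edgeVec_edge, h, h']

lemma edgeVec_edge_zero_mem_span (ha : IsCyclicMap G (2 * k) a) :
    edgeVec G (ha.edge 0) ∈
      Submodule.span ℝ (edgeVec G '' (ha.edge '' {j | ¬ j ≡ 0 [MOD 2 * k]})) := by
  have hk : 0 < k := by have := ha.pos; omega
  have hmem {j : ℕ} (hj : 0 < j) (hjk : j < 2 * k) : edgeVec G (ha.edge j) ∈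
      Submodule.span ℝ (edgeVec G '' (ha.edge '' {j | ¬ j ≡ 0 [MOD 2 * k]})) :=
    Submodule.subset_span ⟨_, ⟨j, fun h => hj.ne' (h.eq_of_lt_of_lt hjk ha.pos), rfl⟩, rfl⟩
  have hsum := ha.matchingSum_eq_sum_odd
  rw [matchingSum, ← Finset.add_sum_erase _ _ (Finset.mem_range.2 hk), ← eq_sub_iff_add_eq] at hsum
  change edgeVec G (ha.edge 0) = _ at hsum
  rw [hsum]
  refine sub_mem (Submodule.sum_mem _ fun i hi => hmem (by omega) ?_)
    (Submodule.sum_mem _ fun i hi => hmem ?_ ?_)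
  all_goals grind

end IsCyclicMap

lemma exists_finsupp_edgeVec_edge_zero_sub_mem (hb : IsCyclicMap G (2 * l) b)
    (D : Submodule ℝ (Fin N → ℝ)) :
    ∃ c : G.edgeSet →₀ ℝ, (c.support : Set G.edgeSet) ⊆ hb.edge '' {j | ¬ j ≡ 0 [MOD 2 * l]} ∧
      LinearIndepOn ℝ (D.mkQ ∘ edgeVec G) (c.support : Set G.edgeSet) ∧
      edgeVec G (hb.edge 0) - Finsupp.linearCombination ℝ (edgeVec G) c ∈ D := by
  have hspan := Submodule.mem_map_of_mem (f := D.mkQ) hb.edgeVec_edge_zero_mem_span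
  rw [Submodule.map_span, ← Set.image_comp] at hspan
  obtain ⟨c, hc, hindep, hsum⟩ := exists_finsupp_linearIndepOn_support hspan
  refine ⟨c, hc, hindep, (Submodule.Quotient.eq D).1 ?_⟩
  rw [← D.mkQ_apply, ← hsum, ← D.mkQ_apply, Finsupp.apply_linearCombination]

lemma IsCyclicMap.eq_single_edge_one_of_card_support_le_one (hb : IsCyclicMap G n b)
    {c : G.edgeSet →₀ ℝ}
    (hc : (c.support : Set G.edgeSet) ⊆ hb.edge '' {j | ¬ j ≡ 0 [MOD n]})
    (hcard : c.support.card ≤ 1) (h1 : Finsupp.linearCombination ℝ (edgeVec G) c (b 1) = 1) :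
    c = Finsupp.single (hb.edge 1) 1 := by
  have : Nonempty G.edgeSet := ⟨hb.edge 0⟩
  obtain ⟨e, r, rfl⟩ := Finsupp.card_support_le_one'.1 hcard
  rw [Finsupp.linearCombination_single, Pi.smul_apply, smul_eq_mul] at h1
  have hr : r ≠ 0 := left_ne_zero_of_mul_eq_one h1
  obtain ⟨j, hj, rfl⟩ := hc (by simpa using hr : e ∈ (Finsupp.single e r).support)
  have hj1 : 1 ≡ j [MOD n] := by
    by_contra h
    have hzero := hb.edgeVec_edge_apply_eq_zero h fun h' => hj (h'.symm.add_right_cancel' 1)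
    exact right_ne_zero_of_mul_eq_one h1 hzero
  rw [← hb.edge_congr hj1] at h1 ⊢
  rw [show r = 1 by simpa [hb.edgeVec_edge, (hb.adj 1).ne] using h1]

lemma two_le_card_support_of_edgeVec_edge_zero_sub_mem (ha : IsCyclicMap G (2 * k) a)
    (hb : IsCyclicMap G (2 * l) b) (hb1 : ∀ i, a i ≠ b 1)
    (hb02 : ∀ i j, a i = b 0 → a j = b 2 → ¬ i ≡ j [MOD 2]) (hl : 2 ≤ l) {c : G.edgeSet →₀ ℝ}
    (hc : (c.support : Set G.edgeSet) ⊆ hb.edge '' {j | ¬ j ≡ 0 [MOD 2 * l]})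
    (hrel : edgeVec G (hb.edge 0) - Finsupp.linearCombination ℝ (edgeVec G) c ∈ ha.edgeSpan) :
    2 ≤ c.support.card := by
  by_contra! hcard
  have hb1c : Finsupp.linearCombination ℝ (edgeVec G) c (b 1) = 1 := by
    have hzero := ha.apply_eq_zero_of_mem_edgeSpan hb1 hrel
    rw [Pi.sub_apply, sub_eq_zero] at hzero
    simpa [hb.edgeVec_edge, (hb.adj 0).ne'] using hzero.symm
  rw [hb.eq_single_edge_one_of_card_support_le_one hc (Nat.le_of_lt_succ hcard) hb1c,
    Finsupp.linearCombination_single, one_smul, hb.edgeVec_edge_sub_succ 0, zero_add] at hrel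
  have hne : b 0 ≠ b 2 := (hb.eq_iff 0 2).not.2 fun h =>
    absurd (h.eq_of_lt_of_lt (by omega) (by omega)) (by norm_num)
  obtain ⟨i, hi⟩ : ∃ i, a i = b 0 := by
    by_contra! h
    simpa [hne] using ha.apply_eq_zero_of_mem_edgeSpan h hrel
  obtain ⟨j, hj⟩ : ∃ j, a j = b 2 := by
    by_contra! h
    simpa [hne.symm] using ha.apply_eq_zero_of_mem_edgeSpan h hrel
  rw [← hi, ← hj] at hrel
  exact hb02 i j hi hj (ha.modEq_two_of_single_sub_single_mem_edgeSpan hrel)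

lemma le_polyDeg_of_isCyclicMap (ha : IsCyclicMap G (2 * k) a)
    (hb : IsCyclicMap G (2 * l) b) (hb1 : ∀ i, a i ≠ b 1)
    (hb02 : ∀ i j, a i = b 0 → a j = b 2 → ¬ i ≡ j [MOD 2]) (hl : 2 ≤ l) :
    k ≤ polyDeg (edgePolytope G) := by
  obtain ⟨c, hc, hindep, hrel⟩ := exists_finsupp_edgeVec_edge_zero_sub_mem hb ha.edgeSpan
  have hcard := two_le_card_support_of_edgeVec_edge_zero_sub_mem ha hb hb1 hb02 hl hc hrel
  have hzero : hb.edge 0 ∉ c.support := fun h => by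
    obtain ⟨j, hj, hj0⟩ := hc h
    exact hj ((hb.edge_eq_iff (by omega)).1 hj0)
  have hdeg := finrank_add_one_le_polyDeg_edgePolytope_add ha.matchingSum_mem_evenLattice
    ha.matchingSum_mem_edgeCone ha.edgeSpan_le_faceSpan hindep hcard hzero hrel
  have hrank : (2 * k : ℝ) ≤ Module.finrank ℝ ha.edgeSpan + 1 := by
    exact_mod_cast ha.le_finrank_edgeSpan_add_one
  rw [ha.height_matchingSum] at hdeg
  have hk : (k : ℝ) ≤ polyDeg (edgePolytope G) := by linarith
  exact_mod_cast hk

end EvenCycle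

section Hexagon

lemma eq_of_adj_of_subsingleton_commonNeighbors {V : Type*} {G : SimpleGraph V}
    (hG : Pairwise fun x y => (G.commonNeighbors x y).Subsingleton) {x y z w : V} (hxy : G.Adj x y)
    (hyz : G.Adj y z) (hzw : G.Adj z w) (hwx : G.Adj w x) (hxz : x ≠ z) : y = w :=
  hG hxz ⟨hxy, hyz.symm⟩ ⟨hwx.symm, hzw⟩

namespace IsCyclicMap

variable {V : Type*} {G : SimpleGraph V} {a b : ℕ → V}

lemma not_modEq_two_of_common_neighbor
    (hG : Pairwise fun x y => (G.commonNeighbors x y).Subsingleton) (ha : IsCyclicMap G 6 a) {v : V}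
    (hv : ∀ i, a i ≠ v) {i j : ℕ} (hi : G.Adj (a i) v) (hj : G.Adj v (a j)) (hij : a i ≠ a j) :
    ¬ i ≡ j [MOD 2] := by
  intro h
  rw [ne_eq, ha.eq_iff] at hij
  have hstep : i + 2 ≡ j [MOD 6] ∨ j + 2 ≡ i [MOD 6] := by grind [Nat.ModEq]
  rcases hstep with hstep | hstep
  · have hadj := ha.adj (i + 1)
    rw [(ha.eq_iff _ _).2 hstep] at hadj
    exact hv (i + 1) (eq_of_adj_of_subsingleton_commonNeighbors hG (ha.adj i) hadj hj.symm hi.symm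
      ((ha.eq_iff _ _).not.2 hij))
  · have hadj := ha.adj (j + 1)
    rw [(ha.eq_iff _ _).2 hstep] at hadj
    exact hv (j + 1) (eq_of_adj_of_subsingleton_commonNeighbors hG hadj.symm (ha.adj j).symm
      hj.symm hi.symm ((ha.eq_iff _ _).not.2 hij))

lemma eq_one_or_eq_five_of_adj_zero (hG : Pairwise fun x y => (G.commonNeighbors x y).Subsingleton)
    (ha : IsCyclicMap G 6 a) (h2 : ¬ G.Adj (a 0) (a 2)) (h4 : ¬ G.Adj (a 0) (a 4)) {v : V}
    (hv : v ∈ Set.range a) (hadj : G.Adj (a 0) v) : v = a 1 ∨ v = a 5 := by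
  have h3 : ¬ G.Adj (a 0) (a 3) := fun h =>
    (ha.eq_iff 1 3).not.2 (by decide) (eq_of_adj_of_subsingleton_commonNeighbors hG (ha.adj 0)
      (ha.adj 1) (ha.adj 2) h.symm ((ha.eq_iff 0 2).not.2 (by decide)))
  obtain ⟨i, rfl⟩ := hv
  have hmod : a i = a (i % 6) := (ha.eq_iff _ _).2 (Nat.mod_modEq i 6).symm
  have hlt : i % 6 < 6 := Nat.mod_lt _ (by norm_num)
  rw [hmod] at hadj ⊢
  interval_cases i % 6 <;> simp_all

lemma adj_two_or_adj_four (hG : Pairwise fun x y => (G.commonNeighbors x y).Subsingleton)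
    (ha : IsCyclicMap G 6 a) (hb : IsCyclicMap G 6 b) (hab : Set.range a = Set.range b)
    (hnot : s(a 0, a 1) ∉ Set.range fun j => s(b j, b (j + 1))) :
    G.Adj (a 0) (a 2) ∨ G.Adj (a 0) (a 4) := by
  by_contra! ⟨h2, h4⟩
  have hmem (i : ℕ) : b i ∈ Set.range a := hab ▸ Set.mem_range_self i
  obtain ⟨j, hj⟩ : a 0 ∈ Set.range b := hab ▸ Set.mem_range_self 0
  have hprev : b (j + 5 + 1) = a 0 := hj ▸ (hb.eq_iff _ _).2 Nat.add_modEq_right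
  have hnext : b (j + 1) = a 5 :=
    (ha.eq_one_or_eq_five_of_adj_zero hG h2 h4 (hmem _) (hj ▸ hb.adj j)).resolve_left
      fun h => hnot ⟨j, by simp only [hj, h]⟩
  have hprev' : b (j + 5) = a 5 :=
    (ha.eq_one_or_eq_five_of_adj_zero hG h2 h4 (hmem _)
      (hprev ▸ (hb.adj (j + 5)).symm)).resolve_left
        fun h => hnot ⟨j + 5, by simp only [hprev, h, Sym2.eq_swap]⟩
  have hmod : 1 ≡ 5 [MOD 6] := ((hb.eq_iff _ _).1 (hnext.trans hprev'.symm)).add_left_cancel' j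
  exact absurd hmod (by decide)

lemma mk_zero_one_mem_range_edge (hG : Pairwise fun x y => (G.commonNeighbors x y).Subsingleton)
    (ha : IsCyclicMap G 6 a) (hb : IsCyclicMap G 6 b) (hab : Set.range a = Set.range b) :
    s(a 0, a 1) ∈ Set.range fun j => s(b j, b (j + 1)) := by
  by_contra hnot
  have hmod {i j : ℕ} (h : i ≡ j [MOD 6]) : a i = a j := (ha.eq_iff i j).2 h
  have hne {i j : ℕ} (h : ¬ i ≡ j [MOD 6]) : a i ≠ a j := (ha.eq_iff i j).not.2 h
  have hreflect : Set.range (fun i => a (5 * i + 1)) = Set.range a := by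
    refine Set.Subset.antisymm (Set.range_subset_iff.2 fun i => ⟨_, rfl⟩)
      (Set.range_subset_iff.2 fun i => ⟨5 * i + 1, hmod ?_⟩)
    simp only [Nat.ModEq]
    omega
  have h0 := ha.adj_two_or_adj_four hG hb hab hnot
  have h1 : G.Adj (a 1) (a 5) ∨ G.Adj (a 1) (a 3) := by
    rw [← hmod (by decide : 11 ≡ 5 [MOD 6]), ← hmod (by decide : 21 ≡ 3 [MOD 6])]
    refine ha.reflect.adj_two_or_adj_four hG hb (hreflect.trans hab) ?_
    rwa [hmod (by decide : 5 * 1 + 1 ≡ 0 [MOD 6]), Sym2.eq_swap]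
  have h05 : G.Adj (a 5) (a 0) := hmod (by decide : 6 ≡ 0 [MOD 6]) ▸ ha.adj 5
  have key {x y z w : V} (hxy : G.Adj x y) (hyz : G.Adj y z) (hzw : G.Adj z w) (hwx : G.Adj w x)
      (hxz : x ≠ z) : y = w :=
    eq_of_adj_of_subsingleton_commonNeighbors hG hxy hyz hzw hwx hxz
  rcases h0 with h0 | h0 <;> rcases h1 with h1 | h1
  · exact hne (by decide) (key (ha.adj 1) h0.symm h05.symm h1.symm (hne (by decide)))
  · exact hne (by decide) (key (ha.adj 0) h1 (ha.adj 2).symm h0.symm (hne (by decide)))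
  · exact hne (by decide) (key (ha.adj 0) h1 (ha.adj 4).symm h0.symm (hne (by decide)))
  · exact hne (by decide) (key (ha.adj 0) h1 (ha.adj 3) h0.symm (hne (by decide)))

lemma range_edge_subset (hG : Pairwise fun x y => (G.commonNeighbors x y).Subsingleton)
    (ha : IsCyclicMap G 6 a) (hb : IsCyclicMap G 6 b) (hab : Set.range a = Set.range b) :
    (Set.range fun i => s(a i, a (i + 1))) ⊆ Set.range fun i => s(b i, b (i + 1)) := by
  rintro _ ⟨i, rfl⟩
  have hrange : Set.range (fun j => a (j + i)) = Set.range a := by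
    refine Set.Subset.antisymm (Set.range_subset_iff.2 fun j => ⟨_, rfl⟩)
      (Set.range_subset_iff.2 fun j => ⟨j + 5 * i, (ha.eq_iff _ _).2 ?_⟩)
    simp only [Nat.ModEq]
    omega
  simpa only [zero_add, add_comm 1 i] using
    (ha.rotate i).mk_zero_one_mem_range_edge hG hb (hrange.trans hab)

end IsCyclicMap

section HexagonPair

variable {N : ℕ} {G : SimpleGraph (Fin N)} {a b : ℕ → Fin N}

lemma three_le_polyDeg_of_not_range_subset
    (hG : Pairwise fun x y => (G.commonNeighbors x y).Subsingleton) (ha : IsCyclicMap G 6 a)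
    (hb : IsCyclicMap G 6 b) (h : ¬ Set.range b ⊆ Set.range a) : 3 ≤ polyDeg (edgePolytope G) := by
  obtain ⟨_, ⟨j, rfl⟩, hj⟩ := Set.not_subset.1 h
  have hj1 : b (1 + (j + 5)) = b j := (hb.eq_iff _ _).2 (by simp only [Nat.ModEq]; omega)
  have hb' := hb.rotate (j + 5)
  have hv (i : ℕ) : a i ≠ b (1 + (j + 5)) := fun hi => hj ⟨i, hi.trans hj1⟩
  refine le_polyDeg_of_isCyclicMap (k := 3) (l := 3) ha hb' hv (fun i r hi hr => ?_) (by norm_num)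
  refine ha.not_modEq_two_of_common_neighbor hG hv (hi ▸ hb'.adj 0) (hr ▸ hb'.adj 1) ?_
  rw [hi, hr]
  exact (hb'.eq_iff 0 2).not.2 (by decide)

lemma three_le_polyDeg_of_isCyclicMap
    (hG : Pairwise fun x y => (G.commonNeighbors x y).Subsingleton) (ha : IsCyclicMap G 6 a)
    (hb : IsCyclicMap G 6 b)
    (hne : (Set.range fun i => s(a i, a (i + 1))) ≠ Set.range fun i => s(b i, b (i + 1))) :
    3 ≤ polyDeg (edgePolytope G) := by
  by_cases hba : Set.range b ⊆ Set.range a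
  · by_cases hab : Set.range a ⊆ Set.range b
    · have heq := hab.antisymm hba
      exact absurd ((ha.range_edge_subset hG hb heq).antisymm
        (hb.range_edge_subset hG ha heq.symm)) hne
    · exact three_le_polyDeg_of_not_range_subset hG hb ha hab
  · exact three_le_polyDeg_of_not_range_subset hG ha hb hba

end HexagonPair

end Hexagon

section Walk

variable {V : Type*} {G : SimpleGraph V} {u : V} {c : G.Walk u u}

lemma getVert_succ_mod_length (c : G.Walk u u) (i : ℕ) :
    c.getVert ((i + 1) % c.length) = c.getVert (i % c.length + 1) := by
  rw [← Nat.mod_add_mod]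
  rcases c.length.eq_zero_or_pos with h | h
  · simp [h]
  · rcases (Nat.add_one_le_of_lt (Nat.mod_lt i h)).lt_or_eq with hlt | heq
    · rw [Nat.mod_eq_of_lt hlt]
    · rw [heq, Nat.mod_self, c.getVert_zero, c.getVert_length]

lemma isCyclicMap_getVert (hc : c.IsCycle) :
    IsCyclicMap G c.length fun i => c.getVert (i % c.length) where
  eq_iff i j := by
    have hlt (i : ℕ) : i % c.length < c.length :=
      Nat.mod_lt _ (three_pos.trans_le hc.three_le_length)
    refine ⟨fun h => hc.getVert_injOn' ?_ ?_ h, fun h => congrArg c.getVert h⟩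
    all_goals exact Nat.le_sub_one_of_lt (hlt _)
  adj i := by
    rw [getVert_succ_mod_length]
    exact c.adj_getVert_succ (Nat.mod_lt _ (three_pos.trans_le hc.three_le_length))

lemma range_mk_getVert_mod_length (hc : c.IsCycle) :
    (Set.range fun i => s(c.getVert (i % c.length), c.getVert ((i + 1) % c.length))) =
      {e | e ∈ c.edges} := by
  ext ⟨x, y⟩
  simp only [Set.mem_range, Set.mem_ofPred_eq, getVert_succ_mod_length]
  refine Iff.trans ?_ (c.mk_mem_edges_iff_exists).symm
  refine ⟨fun ⟨i, hi⟩ => ⟨i % c.length,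
    Nat.mod_lt _ (three_pos.trans_le hc.three_le_length), hi⟩, fun ⟨i, hlt, hi⟩ => ⟨i, ?_⟩⟩
  rwa [Nat.mod_eq_of_lt hlt]

lemma pairwise_subsingleton_commonNeighbors
    (h4 : ¬ ∃ (u : V) (c : G.Walk u u), c.IsCycle ∧ c.length = 4) :
    Pairwise fun x y => (G.commonNeighbors x y).Subsingleton := by
  rintro x y hxy v ⟨hxv, hyv⟩ w ⟨hxw, hyw⟩
  by_contra hvw
  rw [SimpleGraph.mem_neighborSet] at hxv hyv hxw hyw
  refine h4 ⟨x, .cons hxv (.cons hyv.symm (.cons hyw (.cons hxw.symm .nil))), ?_, by simp⟩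
  rw [SimpleGraph.Walk.cons_isCycle_iff]
  simp [SimpleGraph.Walk.cons_isPath_iff, hxv.ne, hxv.ne', hyv.ne', hyw.ne, hxw.ne, hxw.ne', hxy,
    hxy.symm, hvw]

end Walk

theorem polyDeg_ge_three_of_two_six_cycles_general {N : ℕ} (G : SimpleGraph (Fin N))
    {v w : Fin N} (c₁ : G.Walk v v) (c₂ : G.Walk w w) (hc₁ : c₁.IsCycle) (hc₂ : c₂.IsCycle)
    (hlen₁ : c₁.length = 6) (hlen₂ : c₂.length = 6)
    (hne : {e | e ∈ c₁.edges} ≠ {e | e ∈ c₂.edges})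
    (h4 : ¬ ∃ (u : Fin N) (c : G.Walk u u), c.IsCycle ∧ c.length = 4) :
    3 ≤ polyDeg (edgePolytope G) := by
  have ha := hlen₁ ▸ isCyclicMap_getVert hc₁
  have hb := hlen₂ ▸ isCyclicMap_getVert hc₂
  refine three_le_polyDeg_of_isCyclicMap (pairwise_subsingleton_commonNeighbors h4) ha hb ?_
  rwa [← hlen₁, range_mk_getVert_mod_length hc₁, hlen₁, ← hlen₂, range_mk_getVert_mod_length hc₂]

/-- If a finite connected simple graph `G` has two distinct
`6`-cycles, no `4`-cycle, and no even cycle of length `≥ 8`, then `deg(P_G) ≥ 3`. -/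
theorem polyDeg_ge_three_of_two_six_cycles
    {N : ℕ} (G : SimpleGraph (Fin N)) (hG : G.Connected)
    {v w : Fin N} (c₁ : G.Walk v v) (c₂ : G.Walk w w)
    (hc₁ : c₁.IsCycle) (hc₂ : c₂.IsCycle)
    (hlen₁ : c₁.length = 6) (hlen₂ : c₂.length = 6)
    (hne : {e | e ∈ c₁.edges} ≠ {e | e ∈ c₂.edges})
    (h4 : ¬ ∃ (u : Fin N) (c : G.Walk u u), c.IsCycle ∧ c.length = 4)
    (h8 : ¬ ∃ (u : Fin N) (c : G.Walk u u), c.IsCycle ∧ Even c.length ∧ 8 ≤ c.length) :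
    3 ≤ polyDeg (edgePolytope G) :=
  polyDeg_ge_three_of_two_six_cycles_general G c₁ c₂ hc₁ hc₂ hlen₁ hlen₂ hne h4
end

section
/- Let G be a finite connected simple graph whose edge ring K[G] has a 3-linear resolution. Then the toric ideal I_G is generated by binomials of degree 3 arising from even closed walks of length 6, and the minimal number of generators of I_G is at most 2. -/
open MvPolynomial Pointwise

/-- The binomial `f_Γ = x_{i_1} x_{i_3} x_{i_5} - x_{i_2} x_{i_4} x_{i_6}` attached to
a closed walk `Γ = (v 0, v 1, …, v 6)` of length `6` (with `v 6 = v 0`). -/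
noncomputable def walkBinom (K : Type*) [Field K] {V : Type*} (G : SimpleGraph V)
    (v : ℕ → V) (h : ∀ k, k < 6 → G.Adj (v k) (v (k + 1))) :
    MvPolynomial G.edgeSet K :=
  X (⟨s(v 0, v 1), G.mem_edgeSet.2 (h 0 (by norm_num))⟩ : G.edgeSet) *
      X ⟨s(v 2, v 3), G.mem_edgeSet.2 (h 2 (by norm_num))⟩ *
      X ⟨s(v 4, v 5), G.mem_edgeSet.2 (h 4 (by norm_num))⟩ -
    X ⟨s(v 1, v 2), G.mem_edgeSet.2 (h 1 (by norm_num))⟩ *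
      X ⟨s(v 3, v 4), G.mem_edgeSet.2 (h 3 (by norm_num))⟩ *
      X ⟨s(v 5, v 6), G.mem_edgeSet.2 (h 5 (by norm_num))⟩

/-!
A linear presentation of an ideal `I` makes colon ideals linear: if `f` is one of the generators and
`J` is generated by the forms of that degree in `I` without the monomial `x ^ u` of `f`, then every
syzygy expressing `g * f ∈ J` is a combination of linear ones, so `J : f` is generated by linear
forms. For the toric ideal of a graph and a cubic binomial `f = x ^ u - x ^ v`, Koszul syzygies put
any further cubic form `g` in `J : f`. Hence some edge `e` can be exchanged: `x_e * x ^ u` is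
divisible by one side of another cubic relation, obtained from `u` by replacing one of its edges
with `e`.

There are no relations of degree at most two, so `G` has no four-cycle, and the two sides of a cubic
relation alternate along a closed walk of six distinct edges. Any relation among the edges joining
the vertices of this trail is a multiple of the given one, so an exchanged edge must leave the
trail. Applying linearity again, to the new cubic relation, yields further exchanges: an edge with
one end on the trail leads to a relation within the trail which is not a multiple of the given one,
and an edge with no end on the trail reappears on the other side of its own relation. Both are
absurd, so `I_G` has at most one generator, the binomial of a closed walk of length six.
-/

open scoped Matrix

section LinearPresentation

variable {σ K : Type*} [CommRing K] {q : ℕ} {I : Ideal (MvPolynomial σ K)}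

/-- `I` has a finite `q`-linear presentation: it is generated by finitely many forms `F j` of
degree `q`, whose syzygies are the combinations of the rows of a matrix `A` of linear forms.
These are the first two steps of a `q`-linear resolution. -/
def HasLinearPresentation (q : ℕ) (I : Ideal (MvPolynomial σ K)) : Prop :=
  ∃ (m n : ℕ) (F : Fin n → MvPolynomial σ K) (A : Matrix (Fin m) (Fin n) (MvPolynomial σ K)),
    Ideal.span (Set.range F) = I ∧ (∀ j, (F j).IsHomogeneous q) ∧
    (∀ k j, (A k j).IsHomogeneous 1) ∧ ∀ s, s ⬝ᵥ F = 0 ↔ ∃ p, p ᵥ* A = s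

theorem map_eq_sum_smul_map_single {R M ι : Type*} [Semiring R] [AddCommMonoid M] [Module R M]
    [Fintype ι] (φ : (ι →₀ R) →ₗ[R] M) (x : ι →₀ R) :
    φ x = ∑ j, x j • φ (Finsupp.single j 1) := by
  conv_lhs => rw [← Finsupp.univ_sum_single x, map_sum]
  refine Finset.sum_congr rfl fun j _ => ?_
  rw [← map_smul, Finsupp.smul_single, smul_eq_mul, mul_one]

theorem HasLinearResolution.hasLinearPresentation {K : Type*} [Field K]
    {I : Ideal (MvPolynomial σ K)} (h : HasLinearResolution q I) : HasLinearPresentation q I := by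
  obtain ⟨b, φ₀, φ, hI, hker, -, hF, hA⟩ := h
  have hφ (p : Fin (b 1) →₀ MvPolynomial σ K) :
      ⇑p ᵥ* Matrix.of (fun k j => φ 0 (Finsupp.single k 1) j) = ⇑(φ 0 p) := by
    ext1 j
    rw [map_eq_sum_smul_map_single, Finsupp.finsetSum_apply]
    rfl
  refine ⟨b 1, b 0, fun j => φ₀ (Finsupp.single j 1),
    Matrix.of fun k j => φ 0 (Finsupp.single k 1) j, ?_, hF, fun k j => hA 0 k j, fun s => ?_⟩
  · rw [← hI, Ideal.span, ← Finsupp.range_linearCombination]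
    congr 1
    ext j
    simp
  · obtain ⟨s, rfl⟩ := Finsupp.equivFunOnFinite.surjective s
    change ⇑s ⬝ᵥ _ = 0 ↔ ∃ p, _ = ⇑s
    rw [← show φ₀ s = ⇑s ⬝ᵥ _ from map_eq_sum_smul_map_single φ₀ s, ← LinearMap.mem_ker, hker]
    constructor
    · rintro ⟨p, rfl⟩
      exact ⟨p, hφ p⟩
    · rintro ⟨p, hp⟩
      refine ⟨Finsupp.equivFunOnFinite.symm p, DFunLike.coe_injective ?_⟩
      rw [← hφ, Finsupp.coe_equivFunOnFinite_symm, hp]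

theorem homogeneousComponent_mul_of_isHomogeneous {F : MvPolynomial σ K} (hF : F.IsHomogeneous q)
    (x : MvPolynomial σ K) : homogeneousComponent q (x * F) = C (coeff 0 x) * F := by
  let _ : GradedAlgebra (homogeneousSubmodule σ K) := gradedAlgebra
  have h := DirectSum.coe_decompose_mul_add_of_right_mem (homogeneousSubmodule σ K) (a := x)
    (i := 0) ((mem_homogeneousSubmodule q F).2 hF)
  rw [zero_add] at h
  rw [← homogeneousComponent_zero, ← decomposition.decompose'_apply x 0,
    ← decomposition.decompose'_apply (x * F) q]
  exact h

theorem exists_sum_C_mul_eq_of_mem_span {ι : Type*} [Fintype ι] {F : ι → MvPolynomial σ K}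
    (hF : ∀ j, (F j).IsHomogeneous q) {f : MvPolynomial σ K} (hf : f ∈ Ideal.span (Set.range F))
    (hfq : f.IsHomogeneous q) : ∃ a : ι → K, (fun j => C (a j)) ⬝ᵥ F = f := by
  obtain ⟨x, rfl⟩ := Ideal.mem_span_range_iff_exists_fun.1 hf
  refine ⟨fun j => coeff 0 (x j), ?_⟩
  rw [← homogeneousComponent_eq_self hfq, map_sum]
  exact Finset.sum_congr rfl fun j _ => (homogeneousComponent_mul_of_isHomogeneous (hF j) _).symm

/-- The ideal generated by the forms of degree `q` of `I` in the hyperplane `ℓ = 0`. -/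
noncomputable def hyperplaneIdeal (I : Ideal (MvPolynomial σ K)) (q : ℕ)
    (ℓ : MvPolynomial σ K →ₗ[K] K) : Ideal (MvPolynomial σ K) :=
  Ideal.span {D | D ∈ I ∧ D.IsHomogeneous q ∧ ℓ D = 0}

theorem exists_dotProduct_eq_of_mem_hyperplaneIdeal {ι : Type*} [Fintype ι]
    {F : ι → MvPolynomial σ K} (hF : ∀ j, (F j).IsHomogeneous q) {ℓ : MvPolynomial σ K →ₗ[K] K}
    {D : MvPolynomial σ K} (hD : D ∈ hyperplaneIdeal (Ideal.span (Set.range F)) q ℓ) :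
    ∃ s, s ⬝ᵥ F = D ∧ (s ⬝ᵥ fun j => C (ℓ (F j))) = 0 := by
  induction hD using Submodule.span_induction with
  | mem D hD =>
    obtain ⟨hDF, hDq, hℓ⟩ := hD
    obtain ⟨a, rfl⟩ := exists_sum_C_mul_eq_of_mem_span hF hDF hDq
    refine ⟨fun j => C (a j), rfl, ?_⟩
    simp only [dotProduct, ← smul_eq_C_mul, map_sum, map_smul, smul_eq_mul] at hℓ
    simp only [dotProduct, ← C_mul, ← map_sum, hℓ, C_0]
  | zero => exact ⟨0, zero_dotProduct F, zero_dotProduct _⟩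
  | add D D' _ _ h h' =>
    obtain ⟨s, hs, hs0⟩ := h
    obtain ⟨s', hs', hs0'⟩ := h'
    exact ⟨s + s', by rw [add_dotProduct, hs, hs'], by rw [add_dotProduct, hs0, hs0', add_zero]⟩
  | smul x D _ h =>
    obtain ⟨s, hs, hs0⟩ := h
    exact ⟨x • s, by rw [smul_dotProduct, hs], by rw [smul_dotProduct, hs0, smul_zero]⟩

/-- The colon ideal of `hyperplaneIdeal I q ℓ` with respect to a complementary form `f` is
generated by linear forms: a syzygy whose `f`-coordinate is `g` is a combination of linear ones. -/
theorem HasLinearPresentation.mem_span_isHomogeneous_one_of_mul_mem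
    (h : HasLinearPresentation q I) {ℓ : MvPolynomial σ K →ₗ[K] K} {f g : MvPolynomial σ K}
    (hf : f ∈ I) (hfq : f.IsHomogeneous q) (hℓ : ℓ f = 1) (hg : g * f ∈ hyperplaneIdeal I q ℓ) :
    g ∈ Ideal.span {l | l.IsHomogeneous 1 ∧ l * f ∈ hyperplaneIdeal I q ℓ} := by
  obtain ⟨m, n, F, A, rfl, hF, hA, hsyz⟩ := h
  set c : Fin n → MvPolynomial σ K := fun j => C (ℓ (F j)) with hc
  obtain ⟨a, rfl⟩ := exists_sum_C_mul_eq_of_mem_span hF hf hfq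
  set α : Fin n → MvPolynomial σ K := fun j => C (a j) with hα
  have hαc : α ⬝ᵥ c = 1 := by
    simp only [dotProduct, hα, ← smul_eq_C_mul, map_sum, map_smul, smul_eq_mul] at hℓ
    simp only [dotProduct, hα, hc, ← C_mul, ← map_sum, hℓ, C_1]
  obtain ⟨s, hs, hs0⟩ := exists_dotProduct_eq_of_mem_hyperplaneIdeal hF hg
  obtain ⟨p, hp⟩ := (hsyz (g • α - s)).1 (by
    rw [sub_dotProduct, smul_dotProduct, hs, smul_eq_mul, sub_self])
  have hgp : g = p ⬝ᵥ (A *ᵥ c) := by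
    rw [Matrix.dotProduct_mulVec, hp, sub_dotProduct, smul_dotProduct, hαc, hs0, smul_eq_mul,
      mul_one, sub_zero]
  rw [hgp]
  refine Ideal.sum_mem _ fun k _ => Ideal.mul_mem_left _ _ (Ideal.subset_span ⟨?_, ?_⟩)
  · exact IsHomogeneous.sum _ _ _ fun j _ => by
      simpa using (hA k j).mul (isHomogeneous_C σ (ℓ (F j)))
  · have hrow : ∑ j, A k j * F j = 0 := (hsyz (A k)).2 ⟨Pi.single k 1, Matrix.single_one_vecMul k A⟩
    have heq : (A *ᵥ c) k * (α ⬝ᵥ F) = ∑ j, -A k j * (F j - c j * (α ⬝ᵥ F)) := by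
      calc (A *ᵥ c) k * (α ⬝ᵥ F) = (∑ j, A k j * c j) * (α ⬝ᵥ F) - ∑ j, A k j * F j := by
            rw [hrow, sub_zero]
            rfl
        _ = ∑ j, -A k j * (F j - c j * (α ⬝ᵥ F)) := by
            rw [Finset.sum_mul, ← Finset.sum_sub_distrib]
            exact Finset.sum_congr rfl fun j _ => by ring
    rw [heq]
    refine Ideal.sum_mem _ fun j _ => Ideal.mul_mem_left _ _ (Ideal.subset_span ⟨?_, ?_, ?_⟩)
    · exact sub_mem (Ideal.subset_span ⟨j, rfl⟩) (Ideal.mul_mem_left _ _ hf)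
    · exact (hF j).sub (hfq.C_mul _)
    · rw [map_sub, hc, ← smul_eq_C_mul, map_smul, hℓ, smul_eq_mul, mul_one, sub_self]

theorem exists_mem_support_le_of_mem_span {S : Set (MvPolynomial σ K)} {x : MvPolynomial σ K}
    (hx : x ∈ Ideal.span S) {d : σ →₀ ℕ} (hd : d ∈ x.support) :
    ∃ D ∈ S, ∃ w ∈ D.support, w ≤ d := by
  have hS : Ideal.span S ≤
      Ideal.span ((fun w => monomial w (1 : K)) '' {w | ∃ D ∈ S, w ∈ D.support}) :=
    Ideal.span_le.2 fun D hD =>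
      mem_ideal_span_monomial_image.2 fun w hw => ⟨w, ⟨D, hD, hw⟩, le_rfl⟩
  obtain ⟨w, ⟨D, hD, hw⟩, hle⟩ := mem_ideal_span_monomial_image.1 (hS hx) d hd
  exact ⟨D, hD, w, hw, hle⟩

theorem degree_eq_of_mem_support {f : MvPolynomial σ K} (hf : f.IsHomogeneous q) {d : σ →₀ ℕ}
    (hd : d ∈ f.support) : d.degree = q :=
  (hf.degree_eq_sum_deg_support hd).symm

namespace HasLinearPresentation

theorem le_degree (h : HasLinearPresentation q I) {f : MvPolynomial σ K} (hf : f ∈ I)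
    {d : σ →₀ ℕ} (hd : d ∈ f.support) : q ≤ d.degree := by
  obtain ⟨m, n, F, A, rfl, hF, -, -⟩ := h
  obtain ⟨_, ⟨j, rfl⟩, w, hw, hle⟩ := exists_mem_support_le_of_mem_span hf hd
  exact (degree_eq_of_mem_support (hF j) hw).symm.trans_le (Finsupp.degree_mono hle)

theorem le_of_forall_isHomogeneous (h : HasLinearPresentation q I) {J : Ideal (MvPolynomial σ K)}
    (hJ : ∀ f ∈ I, f.IsHomogeneous q → f ∈ J) : I ≤ J := by
  obtain ⟨m, n, F, A, rfl, hF, -, -⟩ := h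
  refine Ideal.span_le.2 ?_
  rintro _ ⟨j, rfl⟩
  exact hJ _ (Ideal.subset_span ⟨j, rfl⟩) (hF j)

end HasLinearPresentation

end LinearPresentation

section ToricIdeal

variable {K : Type*} [Field K] {V : Type*} {G : SimpleGraph V}

/-- The exponent of `edgeMonom`: the variable `none` occurs once, and so do the ends of `e`. -/
noncomputable def edgeExponent (e : Sym2 V) : Option V →₀ ℕ :=
  Sym2.lift ⟨fun i j => Finsupp.single (some i) 1 + Finsupp.single (some j) 1 +
    Finsupp.single none 1, fun i j => by
      simp only [add_comm (Finsupp.single (some i) 1)]⟩ e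

theorem edgeMonom_eq_monomial (e : Sym2 V) : edgeMonom K e = monomial (edgeExponent e) 1 := by
  induction e with
  | h i j => simp [edgeMonom, edgeExponent, X, monomial_mul]

/-- The exponent of the image in the edge ring of the monomial with exponent `d`. -/
noncomputable def multidegree : (G.edgeSet →₀ ℕ) →ₗ[ℕ] Option V →₀ ℕ :=
  Finsupp.linearCombination ℕ fun e : G.edgeSet => edgeExponent (e : Sym2 V)

theorem multidegree_single_mk {x y : V} (h : G.Adj x y) (n : ℕ) :
    multidegree (Finsupp.single (⟨s(x, y), h⟩ : G.edgeSet) n) =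
      Finsupp.single (some x) n + Finsupp.single (some y) n + Finsupp.single none n := by
  simp [multidegree, edgeExponent]

theorem multidegree_none (d : G.edgeSet →₀ ℕ) : multidegree d none = d.degree := by
  induction d using Finsupp.induction_linear with
  | zero => simp
  | add d d' hd hd' => simp [hd, hd']
  | single e n =>
    obtain ⟨⟨x, y⟩, h⟩ := e
    simp [multidegree_single_mk h]

theorem degree_eq_of_multidegree_eq {d d' : G.edgeSet →₀ ℕ} (h : multidegree d = multidegree d') :
    d.degree = d'.degree := by
  rw [← multidegree_none, h, multidegree_none]

theorem aeval_edgeMonom_monomial (d : G.edgeSet →₀ ℕ) (c : K) :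
    aeval (fun e : G.edgeSet => edgeMonom K (e : Sym2 V)) (monomial d c) =
      monomial (multidegree d) c := by
  simp only [edgeMonom_eq_monomial, aeval_monomial, monomial_pow, one_pow, multidegree,
    Finsupp.linearCombination_apply]
  rw [monomial_finsupp_sum_index, algebraMap_eq]

theorem monomial_sub_monomial_mem_toricIdeal {d d' : G.edgeSet →₀ ℕ}
    (h : multidegree d = multidegree d') : monomial d 1 - monomial d' 1 ∈ toricIdeal K G := by
  rw [toricIdeal, RingHom.mem_ker, map_sub, sub_eq_zero]
  exact (aeval_edgeMonom_monomial d 1).trans (h ▸ (aeval_edgeMonom_monomial d' 1).symm)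

theorem exists_multidegree_eq_of_mem_toricIdeal {f : MvPolynomial G.edgeSet K}
    (hf : f ∈ toricIdeal K G) {d : G.edgeSet →₀ ℕ} (hd : d ∈ f.support) :
    ∃ d', d' ≠ d ∧ multidegree d = multidegree d' := by
  classical
  by_contra! hcon
  have h0 : aeval (fun e : G.edgeSet => edgeMonom K (e : Sym2 V)) f = 0 := hf
  rw [f.as_sum, map_sum] at h0
  have h1 := congrArg (coeff (multidegree d)) h0
  simp only [aeval_edgeMonom_monomial, coeff_sum, coeff_monomial, coeff_zero] at h1
  rw [Finset.sum_eq_single_of_mem d hd fun d' _ hne => if_neg fun h => hcon d' hne h.symm,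
    if_pos rfl] at h1
  exact mem_support_iff.1 hd h1

theorem mem_of_monomial_sub_monomial_mem {J : Ideal (MvPolynomial G.edgeSet K)}
    {f : MvPolynomial G.edgeSet K} (hf : f ∈ toricIdeal K G)
    (hJ : ∀ d ∈ f.support, ∀ d', multidegree d = multidegree d' →
      monomial d 1 - monomial d' 1 ∈ J) : f ∈ J := by
  set r : (Option V →₀ ℕ) → (G.edgeSet →₀ ℕ) := Function.invFun multidegree
  have hr (d : G.edgeSet →₀ ℕ) : multidegree d = multidegree (r (multidegree d)) :=
    (Function.invFun_eq ⟨d, rfl⟩).symm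
  set ψ : MvPolynomial (Option V) K →ₗ[K] MvPolynomial G.edgeSet K :=
    (basisMonomials (Option V) K).constr K fun w => monomial (r w) 1
  have hψ (w : Option V →₀ ℕ) (c : K) : ψ (monomial w c) = monomial (r w) c := by
    have h1 := (basisMonomials (Option V) K).constr_basis K (fun w => monomial (r w) (1 : K)) w
    rw [coe_basisMonomials] at h1
    rw [← mul_one c, ← smul_eq_mul, ← smul_monomial, map_smul, h1, smul_monomial]
  have h0 : ∑ d ∈ f.support, monomial (r (multidegree d)) (coeff d f) = 0 := by
    rw [← map_zero ψ, ← show aeval (fun e : G.edgeSet => edgeMonom K (e : Sym2 V)) f = 0 from hf]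
    conv_rhs => rw [f.as_sum]
    simp only [map_sum, aeval_edgeMonom_monomial, hψ]
  have hsum : f = ∑ d ∈ f.support, C (coeff d f) *
      (monomial d 1 - monomial (r (multidegree d)) 1) := by
    simp only [mul_sub, C_mul_monomial, mul_one, Finset.sum_sub_distrib, h0, sub_zero]
    exact f.as_sum
  rw [hsum]
  exact J.sum_mem fun d hd => J.mul_mem_left _ (hJ d hd _ (hr d))

end ToricIdeal

section Vertices

variable {V : Type*} {G : SimpleGraph V} {d d' : G.edgeSet →₀ ℕ}

/-- The vertices of the edges occurring in the monomial with exponent `d`. -/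
def vertices (d : G.edgeSet →₀ ℕ) : Set V :=
  {x | multidegree d (some x) ≠ 0}

theorem vertices_add (d d' : G.edgeSet →₀ ℕ) : vertices (d + d') = vertices d ∪ vertices d' := by
  ext x
  simp [vertices, or_iff_not_imp_left]

theorem vertices_nsmul_subset (n : ℕ) (d : G.edgeSet →₀ ℕ) : vertices (n • d) ⊆ vertices d := by
  intro x hx hx'
  simp [vertices, hx'] at hx

theorem vertices_single_mk {x y : V} (h : G.Adj x y) {n : ℕ} (hn : n ≠ 0) :
    vertices (Finsupp.single (⟨s(x, y), h⟩ : G.edgeSet) n) = {x, y} := by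
  classical
  ext z
  simp only [vertices, multidegree_single_mk, Set.mem_ofPred_eq, Finsupp.add_apply,
    Finsupp.single_apply, Set.mem_insert_iff, Set.mem_singleton_iff, Option.some.injEq]
  grind

theorem vertices_congr (h : multidegree d = multidegree d') : vertices d = vertices d' := by
  rw [vertices, h, vertices]

theorem exists_eq_single_add {σ : Type*} {d : σ →₀ ℕ} {e : σ} (h : d e ≠ 0) :
    ∃ d', d = Finsupp.single e 1 + d' :=
  ⟨d - Finsupp.single e 1, (add_tsub_cancel_of_le
    (Finsupp.single_le_iff.2 (Nat.one_le_iff_ne_zero.2 h))).symm⟩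

theorem mem_vertices_iff {x : V} : x ∈ vertices d ↔ ∃ e, d e ≠ 0 ∧ x ∈ (e : Sym2 V) := by
  have hx (e : Sym2 V) : edgeExponent e (some x) ≠ 0 ↔ x ∈ e := by
    classical
    induction e with
    | h i j => simp [edgeExponent, Finsupp.single_apply, eq_comm (a := x), or_iff_not_imp_left]
  simp [vertices, multidegree, Finsupp.linearCombination_apply, Finsupp.sum, ← hx]

theorem exists_eq_single_add_of_mem_vertices {x : V} (hx : x ∈ vertices d) :
    ∃ (y : V) (h : G.Adj x y) (d' : G.edgeSet →₀ ℕ),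
      d = Finsupp.single ⟨s(x, y), h⟩ 1 + d' := by
  obtain ⟨⟨_, h⟩, he, y, rfl⟩ := mem_vertices_iff.1 hx
  exact ⟨y, h, exists_eq_single_add he⟩

/-- The exponent `d` as a function of unordered pairs of vertices, zero outside the edges. -/
noncomputable def edgeMult (d : G.edgeSet →₀ ℕ) : Sym2 V →₀ ℕ :=
  d.mapDomain Subtype.val

theorem edgeMult_apply (d : G.edgeSet →₀ ℕ) (e : G.edgeSet) : edgeMult d e = d e :=
  Finsupp.mapDomain_apply Subtype.val_injective d e

theorem edgeMult_eq_zero {x y : V} (h : ¬ G.Adj x y) (d : G.edgeSet →₀ ℕ) :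
    edgeMult d s(x, y) = 0 :=
  Finsupp.mapDomain_of_notMem_range d _ (by simpa using h)

variable {ι : Type*} {q : ι → V}

theorem sum_edgeMult [Fintype ι] (hq : Function.Injective q) (hd : vertices d ⊆ Set.range q)
    (x : V) : ∑ i, edgeMult d s(x, q i) = multidegree d (some x) := by
  classical
  induction d using Finsupp.induction_linear with
  | zero => simp [edgeMult]
  | add d d' ih ih' =>
    rw [vertices_add, Set.union_subset_iff] at hd
    simp only [edgeMult, Finsupp.mapDomain_add, Finsupp.add_apply, Finset.sum_add_distrib,
      map_add] at ih ih' ⊢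
    rw [ih hd.1, ih' hd.2]
  | single e n =>
    obtain ⟨⟨a, b⟩, h⟩ := e
    obtain rfl | hn := eq_or_ne n 0
    · simp [edgeMult]
    rw [vertices_single_mk h hn, Set.pair_subset_iff] at hd
    obtain ⟨⟨i, rfl⟩, j, rfl⟩ := hd
    have hij : q i ≠ q j := G.ne_of_adj h
    rw [multidegree_single_mk h]
    simp only [edgeMult, Finsupp.mapDomain_single, Finsupp.single_apply, Finsupp.add_apply,
      Option.some.injEq, reduceCtorEq, if_false, add_zero]
    by_cases hi : q i = x
    · subst hi
      simp [hij.symm, hq.eq_iff]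
    · by_cases hj : q j = x
      · subst hj
        simp [hij, hq.eq_iff]
      · simp [hi, hj]

theorem eq_of_edgeMult_eq (hd : vertices d ⊆ Set.range q) (hd' : vertices d' ⊆ Set.range q)
    (h : ∀ i j, edgeMult d s(q i, q j) = edgeMult d' s(q i, q j)) : d = d' := by
  ext ⟨⟨x, y⟩, hxy⟩
  by_contra hne
  have hmem : ∀ z ∈ s(x, y), z ∈ Set.range q := fun z hz => by
    by_cases h0 : d ⟨s(x, y), hxy⟩ = 0
    · exact hd' (mem_vertices_iff.2 ⟨_, fun h0' => hne (h0.trans h0'.symm), hz⟩)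
    · exact hd (mem_vertices_iff.2 ⟨_, h0, hz⟩)
  obtain ⟨i, rfl⟩ := hmem x (Sym2.mem_mk_left x y)
  obtain ⟨j, rfl⟩ := hmem y (Sym2.mem_mk_right _ y)
  exact hne (by simpa only [← edgeMult_apply] using h i j)

end Vertices

section NoQuadraticRelation

variable {K : Type*} [Field K] {V : Type*} {G : SimpleGraph V} {u v : G.edgeSet →₀ ℕ}

theorem eq_of_le_of_degree_eq {σ : Type*} {d d' : σ →₀ ℕ} (hle : d ≤ d')
    (h : d.degree = d'.degree) : d = d' := by
  obtain ⟨r, rfl⟩ := exists_add_of_le hle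
  rw [map_add, left_eq_add] at h
  rw [(Finsupp.degree_eq_zero_iff r).1 h, add_zero]

/-- The toric ideal of `G` contains no binomial of degree at most two. -/
def NoQuadraticRelation (G : SimpleGraph V) : Prop :=
  ∀ d d' : G.edgeSet →₀ ℕ, d.degree ≤ 2 → multidegree d = multidegree d' → d = d'

theorem HasLinearPresentation.noQuadraticRelation (h : HasLinearPresentation 3 (toricIdeal K G)) :
    NoQuadraticRelation G := by
  classical
  intro d d' hd hdd'
  by_contra hne
  have hmem : d ∈ (monomial d 1 - monomial d' 1 : MvPolynomial G.edgeSet K).support := by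
    simp [coeff_monomial, Ne.symm hne]
  have := h.le_degree (monomial_sub_monomial_mem_toricIdeal hdd') hmem
  omega

/-- The exponents of a nonzero cubic binomial `x ^ u - x ^ v` of the toric ideal. -/
structure IsCubicRelation (u v : G.edgeSet →₀ ℕ) : Prop where
  degree_eq : u.degree = 3
  multidegree_eq : multidegree u = multidegree v
  ne : u ≠ v

theorem IsCubicRelation.symm (h : IsCubicRelation u v) : IsCubicRelation v u :=
  ⟨degree_eq_of_multidegree_eq h.multidegree_eq ▸ h.degree_eq, h.multidegree_eq.symm, h.ne.symm⟩

namespace NoQuadraticRelation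

theorem eq_zero_of_ne_zero (hG : NoQuadraticRelation G) (h : IsCubicRelation u v) {e : G.edgeSet}
    (he : u e ≠ 0) : v e = 0 := by
  by_contra he'
  obtain ⟨d, rfl⟩ := exists_eq_single_add he
  obtain ⟨d', rfl⟩ := exists_eq_single_add he'
  have hd := h.degree_eq
  have hdd' := h.multidegree_eq
  rw [map_add, Finsupp.degree_single] at hd
  rw [map_add, map_add] at hdd'
  exact h.ne (congrArg _ (hG d d' (by omega) (add_left_cancel hdd')))

theorem not_isCubicRelation_add (hG : NoQuadraticRelation G) {r r' d d' : G.edgeSet →₀ ℕ}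
    (hr : r ≠ 0) (hr' : d ≠ 0) (hrr' : multidegree r = multidegree r') :
    ¬ IsCubicRelation (d + r) (d' + r') := by
  intro h
  obtain ⟨e, he⟩ := DFunLike.ne_iff.1 hr
  have hd := h.degree_eq
  rw [map_add] at hd
  have := mt (Finsupp.degree_eq_zero_iff d).1 hr'
  obtain rfl := hG r r' (by omega) hrr'
  have := hG.eq_zero_of_ne_zero h (e := e) (by simp_all)
  simp_all

theorem eq_of_add_smul_eq (hG : NoQuadraticRelation G) (h : IsCubicRelation u v)
    {w w' : G.edgeSet →₀ ℕ} (hw : IsCubicRelation w w') {n : ℕ}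
    (hn : w + n • u = w' + n • v) : w = v ∧ w' = u := by
  have hn0 : n ≠ 0 := by
    rintro rfl
    exact hw.ne (by simpa using hn)
  have hle (e : G.edgeSet) : v e ≤ w e ∧ u e ≤ w' e := by
    have he := DFunLike.congr_fun hn e
    have hu : u e ≤ n * u e := Nat.le_mul_of_pos_left _ (Nat.pos_of_ne_zero hn0)
    have hv : v e ≤ n * v e := Nat.le_mul_of_pos_left _ (Nat.pos_of_ne_zero hn0)
    simp only [Finsupp.add_apply, Finsupp.smul_apply, smul_eq_mul] at he
    by_cases h0 : u e = 0
    · rw [h0] at he ⊢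
      omega
    · rw [hG.eq_zero_of_ne_zero h h0] at he ⊢
      omega
  have hwv := eq_of_le_of_degree_eq (fun e => (hle e).1) (h.symm.degree_eq.trans hw.degree_eq.symm)
  have hw'u := eq_of_le_of_degree_eq (fun e => (hle e).2) (h.degree_eq.trans hw.symm.degree_eq.symm)
  exact ⟨hwv.symm, hw'u.symm⟩

end NoQuadraticRelation

/-- Any closed walk of length four is degenerate, that is, `G` has no four-cycle. -/
def FourCycleFree (G : SimpleGraph V) : Prop :=
  ∀ ⦃a b c d : V⦄, G.Adj a b → G.Adj b c → G.Adj c d → G.Adj d a → a = c ∨ b = d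

theorem NoQuadraticRelation.fourCycleFree (hG : NoQuadraticRelation G) : FourCycleFree G := by
  intro a b c d hab hbc hcd hda
  have key := hG (Finsupp.single ⟨s(a, b), hab⟩ 1 + Finsupp.single ⟨s(c, d), hcd⟩ 1)
    (Finsupp.single ⟨s(b, c), hbc⟩ 1 + Finsupp.single ⟨s(d, a), hda⟩ 1) (by simp) (by
      simp only [map_add, multidegree_single_mk]
      abel)
  have h0 : (Finsupp.single ⟨s(b, c), hbc⟩ 1 + Finsupp.single ⟨s(d, a), hda⟩ 1 :
      G.edgeSet →₀ ℕ) ⟨s(a, b), hab⟩ ≠ 0 := by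
    simp [← key]
  have h1 : s(a, b) = s(b, c) ∨ s(a, b) = s(d, a) := by
    by_contra! hne
    refine h0 ?_
    rw [Finsupp.add_apply, Finsupp.single_eq_of_ne (hne.1 ∘ congrArg Subtype.val),
      Finsupp.single_eq_of_ne (hne.2 ∘ congrArg Subtype.val), add_zero]
  simp only [Sym2.eq_iff] at h1
  have := hab.ne
  grind

end NoQuadraticRelation

section SixTrail

variable {V : Type*} {G : SimpleGraph V} {p : Fin 6 → V}

/-- The edges of a closed walk of length six. -/
def walkEdge (hp : ∀ i, G.Adj (p i) (p (i + 1))) (i : Fin 6) : G.edgeSet :=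
  ⟨s(p i, p (i + 1)), hp i⟩

/-- The exponent of the product of every other edge of a closed walk of length six. -/
noncomputable def altEdges (hp : ∀ i, G.Adj (p i) (p (i + 1))) (i : Fin 6) : G.edgeSet →₀ ℕ :=
  Finsupp.single (walkEdge hp i) 1 + Finsupp.single (walkEdge hp (i + 2)) 1 +
    Finsupp.single (walkEdge hp (i + 4)) 1

theorem altEdges_add_two (hp : ∀ i, G.Adj (p i) (p (i + 1))) (i : Fin 6) :
    altEdges hp (i + 2) = altEdges hp i := by
  rw [altEdges, altEdges, show i + 2 + 2 = i + 4 by omega, show i + 2 + 4 = i by omega]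
  abel

theorem altEdges_walkEdge_ne_zero (hp : ∀ i, G.Adj (p i) (p (i + 1))) (i : Fin 6) :
    altEdges hp i (walkEdge hp i) ≠ 0 := by
  simp [altEdges]

theorem eq_walkEdge_of_altEdges_ne_zero {hp : ∀ i, G.Adj (p i) (p (i + 1))} {i : Fin 6}
    {e : G.edgeSet} (he : altEdges hp i e ≠ 0) :
    e = walkEdge hp i ∨ e = walkEdge hp (i + 2) ∨ e = walkEdge hp (i + 4) := by
  classical
  simp only [altEdges, Finsupp.add_apply, Finsupp.single_apply] at he
  grind

theorem vertices_altEdges_subset (hp : ∀ i, G.Adj (p i) (p (i + 1))) (i : Fin 6) :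
    vertices (altEdges hp i) ⊆ Set.range p := by
  simp [altEdges, walkEdge, vertices_add, vertices_single_mk, Set.insert_subset_iff]

theorem multidegree_altEdges_zero_eq_one (hp : ∀ i, G.Adj (p i) (p (i + 1))) :
    multidegree (altEdges hp 0) = multidegree (altEdges hp 1) := by
  have hedge (j : Fin 6) : multidegree (Finsupp.single (walkEdge hp j) 1) = _ :=
    multidegree_single_mk (hp j) 1
  simp only [altEdges, map_add, hedge, Fin.reduceAdd, zero_add]
  abel

theorem exists_walk_step {a c : V} {u v : G.edgeSet →₀ ℕ} (hc : c ∈ vertices u)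
    (h : Finsupp.single (some a) 1 + multidegree u = Finsupp.single (some c) 1 + multidegree v) :
    ∃ (x y : V) (hcx : G.Adj c x) (hxy : G.Adj x y) (u' v' : G.edgeSet →₀ ℕ),
      u = Finsupp.single ⟨s(c, x), hcx⟩ 1 + u' ∧ v = Finsupp.single ⟨s(x, y), hxy⟩ 1 + v' ∧
      Finsupp.single (some a) 1 + multidegree u' =
        Finsupp.single (some y) 1 + multidegree v' := by
  obtain ⟨x, hcx, u', rfl⟩ := exists_eq_single_add_of_mem_vertices hc
  have hx : x ∈ vertices v := by
    intro (h0 : multidegree v (some x) = 0)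
    have := DFunLike.congr_fun h (some x)
    simp [multidegree_single_mk hcx, h0, hcx.ne.symm] at this
  obtain ⟨y, hxy, v', rfl⟩ := exists_eq_single_add_of_mem_vertices hx
  refine ⟨x, y, hcx, hxy, u', v', rfl, rfl, ?_⟩
  rw [map_add, map_add, multidegree_single_mk hcx, multidegree_single_mk hxy] at h
  refine add_left_cancel (a := Finsupp.single (some c) 1 + Finsupp.single (some x) 1 +
    Finsupp.single none 1) (Eq.trans ?_ (h.trans ?_)) <;> abel

theorem NoQuadraticRelation.mem_vertices_of_isCubicRelation_add (hG : NoQuadraticRelation G)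
    {d d' u v : G.edgeSet →₀ ℕ} (h : IsCubicRelation (d + u) (d' + v)) (hd : d ≠ 0) (hu : u ≠ 0)
    {a c : V}
    (hac : Finsupp.single (some a) 1 + multidegree u =
      Finsupp.single (some c) 1 + multidegree v) : c ∈ vertices u := by
  intro (h0 : multidegree u (some c) = 0)
  obtain rfl | hne := eq_or_ne a c
  · exact hG.not_isCubicRelation_add hu hd (add_left_cancel hac) h
  · have := DFunLike.congr_fun hac (some c)
    simp only [Finsupp.add_apply, Finsupp.single_eq_same, h0] at this
    rw [Finsupp.single_eq_of_ne (by simpa using hne.symm)] at this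
    omega

/-- The edges of `u` and of `v` are followed alternately, starting at any vertex. The walk cannot
return to it before all edges are used, as this would leave a relation of smaller degree. -/
theorem NoQuadraticRelation.exists_altEdges_eq (hG : NoQuadraticRelation G)
    {u v : G.edgeSet →₀ ℕ} (h : IsCubicRelation u v) :
    ∃ (p : Fin 6 → V) (hp : ∀ i, G.Adj (p i) (p (i + 1))),
      u = altEdges hp 0 ∧ v = altEdges hp 1 := by
  have hu := h.degree_eq
  have hv := h.symm.degree_eq
  obtain ⟨⟨⟨a, b⟩, hab⟩, he⟩ := DFunLike.ne_iff.1 (show u ≠ 0 by rintro rfl; simp at hu)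
  obtain ⟨b₁, a₁, hab₁, hba₁, u₁, v₁, rfl, rfl, h₁⟩ := exists_walk_step
    (mem_vertices_iff.2 ⟨_, he, Sym2.mem_mk_left a b⟩) (congrArg _ h.multidegree_eq)
  simp only [map_add, Finsupp.degree_single] at hu hv
  have ha₁ : a₁ ∈ vertices u₁ := hG.mem_vertices_of_isCubicRelation_add h (by simp)
    (by rintro rfl; simp at hu) h₁
  obtain ⟨b₂, a₂, hab₂, hba₂, u₂, v₂, rfl, rfl, h₂⟩ := exists_walk_step ha₁ h₁
  simp only [map_add, Finsupp.degree_single] at hu hv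
  rw [← add_assoc, ← add_assoc] at h
  have ha₂ : a₂ ∈ vertices u₂ := hG.mem_vertices_of_isCubicRelation_add h (by simp)
    (by rintro rfl; simp at hu) h₂
  obtain ⟨b₃, a₃, hab₃, hba₃, u₃, v₃, rfl, rfl, h₃⟩ := exists_walk_step ha₂ h₂
  simp only [map_add, Finsupp.degree_single] at hu hv
  obtain rfl := (Finsupp.degree_eq_zero_iff u₃).1 (by omega)
  obtain rfl := (Finsupp.degree_eq_zero_iff v₃).1 (by omega)
  obtain rfl : a = a₃ := by simpa [Finsupp.single_left_inj] using h₃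
  refine ⟨![a, b₁, a₁, b₂, a₂, b₃], fun i => ?_, ?_, ?_⟩
  · fin_cases i
    exacts [hab₁, hba₁, hab₂, hba₂, hab₃, hba₃]
  · rw [altEdges, add_zero, add_assoc]
    rfl
  · rw [altEdges, add_zero, add_assoc]
    rfl

/-- A closed walk of length six without repeated edges. -/
structure IsSixTrail (G : SimpleGraph V) (p : Fin 6 → V) : Prop where
  adj : ∀ i, G.Adj (p i) (p (i + 1))
  injective_walkEdge : Function.Injective (walkEdge adj)

theorem NoQuadraticRelation.isSixTrail (hG : NoQuadraticRelation G)
    {hp : ∀ i, G.Adj (p i) (p (i + 1))} (h : IsCubicRelation (altEdges hp 0) (altEdges hp 1)) :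
    IsSixTrail G p := by
  have hrel (i : Fin 6) : IsCubicRelation (altEdges hp i) (altEdges hp (i + 1)) := by
    have h2 : altEdges hp 2 = altEdges hp 0 := altEdges_add_two hp 0
    have h3 : altEdges hp 3 = altEdges hp 1 := altEdges_add_two hp 1
    have h4 : altEdges hp 4 = altEdges hp 0 := (altEdges_add_two hp 2).trans h2
    have h5 : altEdges hp 5 = altEdges hp 1 := (altEdges_add_two hp 3).trans h3
    fin_cases i <;>
      simp only [Fin.zero_eta, Fin.mk_one, Fin.reduceFinMk, Fin.reduceAdd, zero_add, h2, h3, h4, h5]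
    exacts [h, h.symm, h, h.symm, h, h.symm]
  have h1 (i : Fin 6) : walkEdge hp i ≠ walkEdge hp (i + 1) := fun heq =>
    altEdges_walkEdge_ne_zero hp (i + 1) (heq ▸
      hG.eq_zero_of_ne_zero (hrel i) (altEdges_walkEdge_ne_zero hp i))
  have h3 (i : Fin 6) : walkEdge hp i ≠ walkEdge hp (i + 3) := fun heq =>
    altEdges_walkEdge_ne_zero hp (i + 1 + 2) (by
      rw [altEdges_add_two, show i + 1 + 2 = i + 3 by omega, ← heq]
      exact hG.eq_zero_of_ne_zero (hrel i) (altEdges_walkEdge_ne_zero hp i))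
  have h2 (i : Fin 6) : walkEdge hp i ≠ walkEdge hp (i + 2) := fun heq => by
    rcases Sym2.eq_iff.1 (congrArg Subtype.val heq) with ⟨h02, -⟩ | ⟨-, h12⟩
    · refine h1 i (Subtype.ext (Sym2.eq_iff.2 (Or.inr ⟨?_, rfl⟩)))
      rw [h02, show i + 1 + 1 = i + 2 by omega]
    · exact (hp (i + 1)).ne (by rw [h12, show i + 1 + 1 = i + 2 by omega])
  refine ⟨hp, fun i j hij => ?_⟩
  obtain ⟨k, rfl⟩ : ∃ k, j = i + k := ⟨j - i, (add_sub_cancel i j).symm⟩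
  have h4 := h2 (i + 4)
  have h5 := h1 (i + 5)
  rw [show i + 4 + 2 = i by omega] at h4
  rw [show i + 5 + 1 = i by omega] at h5
  fin_cases k
  exacts [(add_zero i).symm, absurd hij (h1 i), absurd hij (h2 i), absurd hij (h3 i),
    absurd hij.symm h4, absurd hij.symm h5]

end SixTrail

theorem eq_and_eq_of_hexagon {a a' c c' : Fin 6 → ℕ} {i k : Fin 6}
    (hsum : ∀ j, a j + a (j + 5) + c j + c (j + 4) = a' j + a' (j + 5) + c' j + c' (j + 4))
    (hc : ∀ j ≠ k, c j = c' j) (ha : a i = a' i) : a = a' ∧ c = c' := by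
  -- In the alternating sum of the six equations the terms in `a` cancel and `c k` occurs twice.
  have hck : c k = c' k := by
    have h0 := hsum k
    have h1 := hsum (k + 1)
    have h2 := hsum (k + 2)
    have h3 := hsum (k + 3)
    have h4 := hsum (k + 4)
    have h5 := hsum (k + 5)
    have e1 := hc (k + 1) (by omega)
    have e2 := hc (k + 2) (by omega)
    have e3 := hc (k + 3) (by omega)
    have e4 := hc (k + 4) (by omega)
    have e5 := hc (k + 5) (by omega)
    simp only [add_assoc k, Fin.reduceAdd, add_zero] at *
    omega
  have hcc : c = c' := funext fun j => (eq_or_ne j k).elim (fun hj => hj ▸ hck) (hc j)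
  subst hcc
  have hsucc (j : Fin 6) (hj : a j = a' j) : a (j + 1) = a' (j + 1) := by
    have := hsum (j + 1)
    rw [show j + 1 + 5 = j by omega] at this
    omega
  have h1 := hsucc i ha
  have h2 := hsucc _ h1
  have h3 := hsucc _ h2
  have h4 := hsucc _ h3
  have h5 := hsucc _ h4
  refine ⟨funext fun j => ?_, rfl⟩
  obtain ⟨l, rfl⟩ : ∃ l, j = i + l := ⟨j - i, (add_sub_cancel i j).symm⟩
  simp only [add_assoc, Fin.reduceAdd] at h2 h3 h4 h5
  fin_cases l
  exacts [by simpa using ha, h1, h2, h3, h4, h5]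

namespace IsSixTrail

variable {V : Type*} {G : SimpleGraph V} {p : Fin 6 → V} {d d' : G.edgeSet →₀ ℕ}

theorem ne_add_two (h : IsSixTrail G p) (i : Fin 6) : p i ≠ p (i + 2) := by
  intro h2
  have : i = i + 1 := h.injective_walkEdge (Subtype.ext (Sym2.eq_iff.2 (Or.inr
    ⟨by rw [h2, show i + 1 + 1 = i + 2 by omega], rfl⟩)))
  omega

theorem ne_of_eq_add_three (h : IsSixTrail G p) {i : Fin 6} (h3 : p i = p (i + 3)) :
    p (i + 1) ≠ p (i + 4) := by
  intro h4
  have : i = i + 3 := h.injective_walkEdge (Subtype.ext (Sym2.eq_iff.2 (Or.inl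
    ⟨h3, by rw [h4, show i + 3 + 1 = i + 4 by omega]⟩)))
  omega

theorem injective_or_exists_eq_add_three (h : IsSixTrail G p) :
    Function.Injective p ∨ ∃ k, p k = p (k + 3) := by
  by_contra! hcon
  obtain ⟨hinj, hne⟩ := hcon
  refine hinj fun i j hij => ?_
  have hcase : ∀ i j : Fin 6, i = j ∨ j = i + 1 ∨ j = i + 2 ∨ j = i + 3 ∨ i = j + 2 ∨
      i = j + 1 := by decide
  rcases hcase i j with rfl | rfl | rfl | rfl | rfl | rfl
  · rfl
  · exact absurd hij (h.adj i).ne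
  · exact absurd hij (h.ne_add_two i)
  · exact absurd hij (hne i)
  · exact absurd hij.symm (h.ne_add_two j)
  · exact absurd hij.symm (h.adj j).ne

theorem rotate (h : IsSixTrail G p) (k : Fin 6) : IsSixTrail G fun i => p (i + k) where
  adj i := by
    rw [add_right_comm]
    exact h.adj (i + k)
  injective_walkEdge i j hij := by
    refine add_right_cancel (b := k) (h.injective_walkEdge ?_)
    simpa only [walkEdge, add_right_comm] using hij

theorem not_adj_add_three (h : IsSixTrail G p) (hG : FourCycleFree G) (i : Fin 6) :
    ¬ G.Adj (p i) (p (i + 3)) := by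
  intro h3
  have h12 := h.adj (i + 1)
  have h23 := h.adj (i + 2)
  have hne := h.ne_add_two (i + 1)
  rw [show i + 1 + 1 = i + 2 by omega] at h12
  rw [show i + 2 + 1 = i + 3 by omega] at h23
  rw [show i + 1 + 2 = i + 3 by omega] at hne
  exact (hG (h.adj i) h12 h23 h3.symm).elim (h.ne_add_two i) hne

theorem not_adj_add_two_of_notMem_range (h : IsSixTrail G p) (hG : FourCycleFree G) {y : V}
    (hy : y ∉ Set.range p) {i : Fin 6} (hyi : G.Adj y (p i)) : ¬ G.Adj y (p (i + 2)) := by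
  intro hyi2
  have h12 := h.adj (i + 1)
  rw [show i + 1 + 1 = i + 2 by omega] at h12
  exact (hG hyi (h.adj i) h12 hyi2.symm).elim (fun heq => hy ⟨_, heq.symm⟩) (h.ne_add_two i)

theorem eq_or_eq_or_eq_of_adj (h : IsSixTrail G p) (hG : FourCycleFree G) {x y z t : V}
    (hx : x ∉ Set.range p) (hy : y ∈ Set.range p) (hz : z ∈ Set.range p) (ht : t ∈ Set.range p)
    (hxy : G.Adj x y) (hxz : G.Adj x z) (hxt : G.Adj x t) : y = z ∨ z = t ∨ t = y := by
  obtain ⟨i, rfl⟩ := hy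
  obtain ⟨j, rfl⟩ := hz
  obtain ⟨k, rfl⟩ := ht
  have two {a b : Fin 6} (ha : G.Adj x (p a)) (hb : G.Adj x (p b)) : b ≠ a + 2 := by
    rintro rfl
    exact h.not_adj_add_two_of_notMem_range hG hx ha hb
  have hcase : ∀ i j k : Fin 6, i = j ∨ j = k ∨ k = i ∨ j = i + 2 ∨ i = j + 2 ∨ k = j + 2 ∨
      j = k + 2 ∨ i = k + 2 ∨ k = i + 2 := by decide
  rcases hcase i j k with rfl | rfl | rfl | hij | hji | hjk | hkj | hki | hik
  · exact Or.inl rfl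
  · exact Or.inr (Or.inl rfl)
  · exact Or.inr (Or.inr rfl)
  · exact absurd hij (two hxy hxz)
  · exact absurd hji (two hxz hxy)
  · exact absurd hjk (two hxz hxt)
  · exact absurd hkj (two hxt hxz)
  · exact absurd hki (two hxt hxy)
  · exact absurd hik (two hxy hxt)

theorem chord_unique (h : IsSixTrail G p) (hG : FourCycleFree G) (hp : Function.Injective p)
    {i j : Fin 6} (hi : G.Adj (p i) (p (i + 2))) (hj : G.Adj (p j) (p (j + 2))) : i = j := by
  have square {a b c d : Fin 6} (hab : G.Adj (p a) (p b)) (hbc : G.Adj (p b) (p c))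
      (hcd : G.Adj (p c) (p d)) (hda : G.Adj (p d) (p a)) : a = c ∨ b = d :=
    (hG hab hbc hcd hda).imp (@hp _ _) (@hp _ _)
  have side {a b : Fin 6} (hab : b = a + 1) : G.Adj (p a) (p b) := hab ▸ h.adj a
  have hcase : ∀ i j : Fin 6, i = j ∨ j = i + 1 ∨ i = j + 1 ∨ j = i + 2 ∨ i = j + 2 ∨
      j = i + 3 := by decide
  rcases hcase i j with rfl | rfl | rfl | rfl | rfl | rfl
  · rfl
  · have := square hi (side (by omega)) hj.symm (side rfl).symm
    omega
  · have := square hj (side (by omega)) hi.symm (side rfl).symm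
    omega
  · have := square hi hj (side rfl) (side (by omega))
    omega
  · have := square hj hi (side rfl) (side (by omega))
    omega
  · have := square hi (side (by omega)) hj (side (by omega))
    omega

theorem sum_edgeMult_of_injective (h : IsSixTrail G p) (hG : FourCycleFree G)
    (hp : Function.Injective p) (hd : vertices d ⊆ Set.range p) (i : Fin 6) :
    edgeMult d s(p i, p (i + 1)) + edgeMult d s(p (i + 5), p (i + 5 + 1)) +
      edgeMult d s(p i, p (i + 2)) + edgeMult d s(p (i + 4), p (i + 4 + 2)) =
      multidegree d (some (p i)) := by
  have h3 := edgeMult_eq_zero (h.not_adj_add_three hG i) d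
  have h0 := edgeMult_eq_zero (G.irrefl (v := p i)) d
  rw [← sum_edgeMult hp hd, ← Equiv.sum_comp (Equiv.addLeft i), Fin.sum_univ_six]
  simp only [Equiv.coe_addLeft, add_zero, h3, h0, show i + 5 + 1 = i by omega,
    show i + 4 + 2 = i by omega, Sym2.eq_swap (a := p (i + 4)) (b := p i),
    Sym2.eq_swap (a := p (i + 5)) (b := p i)]
  ring

theorem eq_of_edgeMult_eq_of_injective (h : IsSixTrail G p) (hG : FourCycleFree G)
    (hp : Function.Injective p) (hd : vertices d ⊆ Set.range p)
    (hdd' : multidegree d = multidegree d') {i : Fin 6}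
    (hi : edgeMult d s(p i, p (i + 1)) = edgeMult d' s(p i, p (i + 1))) : d = d' := by
  have hd' : vertices d' ⊆ Set.range p := vertices_congr hdd' ▸ hd
  have hrow (j : Fin 6) := (h.sum_edgeMult_of_injective hG hp hd j).trans
    ((congrArg (· (some (p j))) hdd').trans (h.sum_edgeMult_of_injective hG hp hd' j).symm)
  obtain ⟨k, hk⟩ : ∃ k, ∀ j ≠ k, ¬ G.Adj (p j) (p (j + 2)) := by
    by_cases hc : ∃ k, G.Adj (p k) (p (k + 2))
    · exact hc.imp fun k hk j hjk hj => hjk (h.chord_unique hG hp hj hk)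
    · exact ⟨0, fun j _ hj => hc ⟨j, hj⟩⟩
  obtain ⟨hside, hchord⟩ := eq_and_eq_of_hexagon
    (a := fun j => edgeMult d s(p j, p (j + 1))) (a' := fun j => edgeMult d' s(p j, p (j + 1)))
    (c := fun j => edgeMult d s(p j, p (j + 2))) (c' := fun j => edgeMult d' s(p j, p (j + 2)))
    hrow (fun j hj => by rw [edgeMult_eq_zero (hk j hj), edgeMult_eq_zero (hk j hj)]) hi
  refine eq_of_edgeMult_eq hd hd' fun j l => ?_
  have hcase : ∀ j l : Fin 6, l = j ∨ l = j + 1 ∨ j = l + 1 ∨ l = j + 2 ∨ j = l + 2 ∨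
      l = j + 3 := by decide
  rcases hcase j l with rfl | rfl | rfl | rfl | rfl | rfl
  · simp only [edgeMult_eq_zero G.irrefl]
  · exact congrFun hside j
  · simpa only [Sym2.eq_swap] using congrFun hside l
  · exact congrFun hchord j
  · simpa only [Sym2.eq_swap] using congrFun hchord l
  · simp only [edgeMult_eq_zero (h.not_adj_add_three hG j)]

theorem injective_of_eq_add_three (h : IsSixTrail G p) (h03 : p 0 = p 3) :
    Function.Injective (p ∘ ![0, 1, 2, 4, 5]) := by
  have h01 : p 0 ≠ p 1 := (h.adj 0).ne
  have h02 : p 0 ≠ p 2 := h.ne_add_two 0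
  have h04 : p 0 ≠ p 4 := (h.ne_add_two 4).symm
  have h05 : p 0 ≠ p 5 := (h.adj 5).ne.symm
  have h12 : p 1 ≠ p 2 := (h.adj 1).ne
  have h14 : p 1 ≠ p 4 := h.ne_of_eq_add_three h03
  have h15 : p 1 ≠ p 5 := (h.ne_add_two 5).symm
  have h24 : p 2 ≠ p 4 := h.ne_add_two 2
  have h25 : p 2 ≠ p 5 := fun h25 => h.ne_of_eq_add_three (i := 2) h25 h03.symm
  have h45 : p 4 ≠ p 5 := (h.adj 4).ne
  intro i j hij
  fin_cases i <;> fin_cases j <;> first | rfl | exact absurd hij ‹_› | exact absurd hij.symm ‹_›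

theorem range_of_eq_add_three (h03 : p 0 = p 3) :
    Set.range (p ∘ ![0, 1, 2, 4, 5]) = Set.range p := by
  refine (Set.range_comp_subset_range _ _).antisymm (Set.range_subset_iff.2 fun i => ?_)
  fin_cases i
  exacts [⟨0, rfl⟩, ⟨1, rfl⟩, ⟨2, rfl⟩, ⟨0, h03⟩, ⟨3, rfl⟩, ⟨4, rfl⟩]

theorem edgeMult_eq_zero_of_eq_add_three (h : IsSixTrail G p) (hG : FourCycleFree G)
    (h03 : p 0 = p 3) (d : G.edgeSet →₀ ℕ) :
    edgeMult d s(p 1, p 4) = 0 ∧ edgeMult d s(p 2, p 5) = 0 ∧ edgeMult d s(p 1, p 5) = 0 ∧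
      edgeMult d s(p 2, p 4) = 0 := by
  have h20 : G.Adj (p 2) (p 0) := h03 ▸ h.adj 2
  have h04 : G.Adj (p 0) (p 4) := h03 ▸ h.adj 3
  refine ⟨edgeMult_eq_zero (h.not_adj_add_three hG 1) d,
    edgeMult_eq_zero (h.not_adj_add_three hG 2) d, edgeMult_eq_zero (fun h15 => ?_) d,
    edgeMult_eq_zero (fun h24 => ?_) d⟩
  · exact (hG h15 (h.adj 4).symm h04.symm (h.adj 0)).elim (h.ne_of_eq_add_three h03)
      (h.adj 5).ne
  · exact (hG h24 (h.adj 4) (h.adj 5) h20.symm).elim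
      (fun h25 => h.ne_of_eq_add_three (i := 2) h25 h03.symm) (h.ne_add_two 4)

theorem eq_of_forall_edgeMult_eq_of_eq_add_three (h : IsSixTrail G p) (hG : FourCycleFree G)
    (h03 : p 0 = p 3) (hd : vertices d ⊆ Set.range p) (hd' : vertices d' ⊆ Set.range p)
    (hside : ∀ i, edgeMult d s(p i, p (i + 1)) = edgeMult d' s(p i, p (i + 1))) : d = d' := by
  rw [← range_of_eq_add_three h03] at hd hd'
  refine eq_of_edgeMult_eq hd hd' fun j l => ?_
  have hloop (d : G.edgeSet →₀ ℕ) (x : V) : edgeMult d s(x, x) = 0 := edgeMult_eq_zero G.irrefl d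
  have hswap (a b : Fin 6) : s(p a, p b) = s(p b, p a) := Sym2.eq_swap
  have e01 := hside 0
  have e12 := hside 1
  have e02 := hside 2
  have e04 := hside 3
  have e45 := hside 4
  have e05 := hside 5
  simp only [Fin.reduceAdd, zero_add, ← h03, hswap 2 0, hswap 5 0] at e01 e12 e02 e04 e45 e05
  fin_cases j <;> fin_cases l <;>
    simp [hloop, hswap 1 0, hswap 2 0, hswap 4 0, hswap 5 0, hswap 2 1, hswap 4 1, hswap 5 1,
      hswap 4 2, hswap 5 2, hswap 5 4, h.edgeMult_eq_zero_of_eq_add_three hG h03, e01, e02, e04,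
      e05, e12, e45]

theorem eq_of_edgeMult_eq_of_eq_add_three (h : IsSixTrail G p) (hG : FourCycleFree G)
    (h03 : p 0 = p 3) (hd : vertices d ⊆ Set.range p) (hdd' : multidegree d = multidegree d')
    {i : Fin 6} (hi : edgeMult d s(p i, p (i + 1)) = edgeMult d' s(p i, p (i + 1))) : d = d' := by
  have hd' : vertices d' ⊆ Set.range p := vertices_congr hdd' ▸ hd
  refine h.eq_of_forall_edgeMult_eq_of_eq_add_three hG h03 hd hd' fun j => ?_
  rw [← range_of_eq_add_three h03] at hd hd'
  have hinj := h.injective_of_eq_add_three h03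
  have hrow (j : Fin 6) := (sum_edgeMult hinj hd (p j)).trans
    ((congrArg (· (some (p j))) hdd').trans (sum_edgeMult hinj hd' (p j)).symm)
  have hloop (d : G.edgeSet →₀ ℕ) (x : V) : edgeMult d s(x, x) = 0 := edgeMult_eq_zero G.irrefl d
  have hswap (a b : Fin 6) : s(p a, p b) = s(p b, p a) := Sym2.eq_swap
  have h0 := hrow 0
  have h1 := hrow 1
  have h2 := hrow 2
  have h4 := hrow 4
  have h5 := hrow 5
  simp only [Fin.sum_univ_five, Function.comp_apply, Matrix.cons_val, hloop, hswap 1 0, hswap 2 0,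
    hswap 4 0, hswap 5 0, hswap 2 1, hswap 4 1, hswap 5 1, hswap 4 2, hswap 5 2, hswap 5 4,
    h.edgeMult_eq_zero_of_eq_add_three hG h03] at h0 h1 h2 h4 h5
  fin_cases i <;> fin_cases j <;>
    simp only [Fin.zero_eta, Fin.mk_one, Fin.reduceFinMk, Fin.reduceAdd, zero_add, ← h03,
      hswap 2 0, hswap 5 0] at hi ⊢ <;>
    omega

theorem eq_of_multidegree_eq (h : IsSixTrail G p) (hG : FourCycleFree G)
    (hd : vertices d ⊆ Set.range p) (hdd' : multidegree d = multidegree d') {i : Fin 6}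
    (hi : d (walkEdge h.adj i) = d' (walkEdge h.adj i)) : d = d' := by
  have hi' : edgeMult d s(p i, p (i + 1)) = edgeMult d' s(p i, p (i + 1)) := by
    rw [← edgeMult_apply, ← edgeMult_apply] at hi
    exact hi
  obtain hp | ⟨k, hk⟩ := h.injective_or_exists_eq_add_three
  · exact h.eq_of_edgeMult_eq_of_injective hG hp hd hdd' hi'
  · have hr : (Set.range fun j => p (j + k)) = Set.range p :=
      (Equiv.addRight k).surjective.range_comp p
    refine (h.rotate k).eq_of_edgeMult_eq_of_eq_add_three hG ?_ (hr ▸ hd) hdd' (i := i - k) ?_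
    · rw [zero_add, add_comm, ← hk]
    · simpa only [sub_add_cancel, show i - k + 1 + k = i + 1 by omega] using hi'

theorem altEdges_eq_one (h : IsSixTrail G p) {i : Fin 6} {e : G.edgeSet}
    (he : altEdges h.adj i e ≠ 0) : altEdges h.adj i e = 1 := by
  have h02 := h.injective_walkEdge.ne (show i ≠ i + 2 by omega)
  have h04 := h.injective_walkEdge.ne (show i ≠ i + 4 by omega)
  have h24 := h.injective_walkEdge.ne (show i + 2 ≠ i + 4 by omega)
  classical
  simp only [altEdges, Finsupp.add_apply, Finsupp.single_apply] at he ⊢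
  grind

theorem altEdges_one_eq_zero (h : IsSixTrail G p) {e : G.edgeSet}
    (he : altEdges h.adj 0 e ≠ 0) : altEdges h.adj 1 e = 0 := by
  by_contra he'
  rcases eq_walkEdge_of_altEdges_ne_zero he with rfl | rfl | rfl <;>
    rcases eq_walkEdge_of_altEdges_ne_zero he' with heq | heq | heq <;>
    have := h.injective_walkEdge heq <;> omega

theorem isCubicRelation (h : IsSixTrail G p) :
    IsCubicRelation (altEdges h.adj 0) (altEdges h.adj 1) where
  degree_eq := by simp [altEdges]
  multidegree_eq := multidegree_altEdges_zero_eq_one h.adj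
  ne heq := by
    have h0 := altEdges_walkEdge_ne_zero h.adj 0
    exact h0 (heq ▸ h.altEdges_one_eq_zero h0)

theorem exists_add_smul_altEdges_eq_of_apply_le (h : IsSixTrail G p) (hG : FourCycleFree G)
    (hd : vertices d ⊆ Set.range p) (hdd' : multidegree d = multidegree d')
    (hle : d (walkEdge h.adj 0) ≤ d' (walkEdge h.adj 0)) :
    ∃ n : ℕ, d + n • altEdges h.adj 0 = d' + n • altEdges h.adj 1 := by
  obtain ⟨n, hn⟩ := Nat.exists_eq_add_of_le hle
  have h0 := altEdges_walkEdge_ne_zero h.adj 0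
  refine ⟨n, h.eq_of_multidegree_eq hG ?_ ?_ (i := 0) ?_⟩
  · rw [vertices_add, Set.union_subset_iff]
    exact ⟨hd, (vertices_nsmul_subset n _).trans (vertices_altEdges_subset h.adj 0)⟩
  · rw [map_add, map_add, map_nsmul, map_nsmul, hdd',
      h.isCubicRelation.multidegree_eq]
  · simp [h.altEdges_eq_one h0, h.altEdges_one_eq_zero h0, hn]

theorem exists_add_smul_altEdges_eq (h : IsSixTrail G p) (hG : FourCycleFree G)
    (hd : vertices d ⊆ Set.range p) (hdd' : multidegree d = multidegree d') :
    (∃ n : ℕ, d + n • altEdges h.adj 0 = d' + n • altEdges h.adj 1) ∨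
      ∃ n : ℕ, d' + n • altEdges h.adj 0 = d + n • altEdges h.adj 1 :=
  (le_total _ _).imp (h.exists_add_smul_altEdges_eq_of_apply_le hG hd hdd')
    (h.exists_add_smul_altEdges_eq_of_apply_le hG (vertices_congr hdd' ▸ hd) hdd'.symm)

theorem eq_altEdges_of_isCubicRelation (h : IsSixTrail G p) (hG : NoQuadraticRelation G)
    (hd : vertices d ⊆ Set.range p) (hdd' : IsCubicRelation d d') :
    (d = altEdges h.adj 0 ∧ d' = altEdges h.adj 1) ∨
      (d = altEdges h.adj 1 ∧ d' = altEdges h.adj 0) :=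
  (h.exists_add_smul_altEdges_eq hG.fourCycleFree hd hdd'.multidegree_eq).symm.imp
    (fun ⟨_, hn⟩ => (hG.eq_of_add_smul_eq h.isCubicRelation hdd'.symm hn).symm)
    (fun ⟨_, hn⟩ => hG.eq_of_add_smul_eq h.isCubicRelation hdd' hn)

end IsSixTrail

section Exchange

variable {K : Type*} [Field K] {V : Type*} {G : SimpleGraph V} {u v : G.edgeSet →₀ ℕ}
  {e : G.edgeSet} {p : Fin 6 → V}

/-- Replacing some edge of `u` by `e` yields one side of a cubic relation. Such a replacement is
what a linear syzygy produces at the multidegree of `x_e * x ^ u`. -/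
def IsExchangeable (u : G.edgeSet →₀ ℕ) (e : G.edgeSet) : Prop :=
  ∃ (e₁ : G.edgeSet) (r w' : G.edgeSet →₀ ℕ), u = Finsupp.single e₁ 1 + r ∧ e₁ ≠ e ∧
    IsCubicRelation (Finsupp.single e 1 + r) w'

theorem isExchangeable_of_le {w : G.edgeSet →₀ ℕ} (hu : u.degree = 3) {D : MvPolynomial G.edgeSet K}
    (hD : D ∈ toricIdeal K G) (hD3 : D.IsHomogeneous 3) (hDu : coeff u D = 0) (hw : w ∈ D.support)
    (hle : w ≤ Finsupp.single e 1 + u) : IsExchangeable u e := by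
  have hw3 := degree_eq_of_mem_support hD3 hw
  have hwu : w ≠ u := by
    rintro rfl
    exact mem_support_iff.1 hw hDu
  obtain ⟨m, hm⟩ := exists_add_of_le hle
  have hm1 : m.degree = 1 := by
    have := congrArg Finsupp.degree hm
    rw [map_add, map_add, Finsupp.degree_single] at this
    omega
  obtain ⟨e₁, rfl⟩ : ∃ e₁, Finsupp.single e₁ 1 = m := Finsupp.range_single_one.superset hm1
  have he : e₁ ≠ e := by
    rintro rfl
    exact hwu (add_left_cancel (hm.trans (add_comm _ _)).symm)
  have hu₁ : u e₁ ≠ 0 := by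
    have := DFunLike.congr_fun hm e₁
    simp only [Finsupp.add_apply, Finsupp.single_eq_of_ne he, Finsupp.single_eq_same] at this
    omega
  obtain ⟨r, rfl⟩ := exists_eq_single_add hu₁
  obtain rfl : Finsupp.single e 1 + r = w :=
    add_left_cancel (a := Finsupp.single e₁ 1) (by rw [add_left_comm, hm, add_comm])
  obtain ⟨w', hne, hww'⟩ := exists_multidegree_eq_of_mem_toricIdeal hD hw
  exact ⟨e₁, r, w', rfl, he, hw3, hww', hne.symm⟩

namespace HasLinearPresentation

theorem exists_isExchangeable (h : HasLinearPresentation 3 (toricIdeal K G))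
    (huv : IsCubicRelation u v) {g : MvPolynomial G.edgeSet K} (hg : g ∈ toricIdeal K G)
    (hg3 : g.IsHomogeneous 3) (hgu : coeff u g = 0) {u' : G.edgeSet →₀ ℕ} (hu' : u' ∈ g.support) :
    ∃ e, u' e ≠ 0 ∧ IsExchangeable u e := by
  classical
  set f : MvPolynomial G.edgeSet K := monomial u 1 - monomial v 1 with hf
  have hfI : f ∈ toricIdeal K G := monomial_sub_monomial_mem_toricIdeal huv.multidegree_eq
  have hgf : g * f ∈ hyperplaneIdeal (toricIdeal K G) 3 (lcoeff K u) :=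
    Ideal.mul_mem_right _ _ (Ideal.subset_span ⟨hg, hg3, hgu⟩)
  obtain ⟨l, ⟨hl, hlf⟩, m, hm, hmu'⟩ := exists_mem_support_le_of_mem_span
    (h.mem_span_isHomogeneous_one_of_mul_mem hfI
      ((isHomogeneous_monomial 1 huv.degree_eq).sub (isHomogeneous_monomial 1 huv.symm.degree_eq))
      (by simp [hf, coeff_monomial, huv.ne.symm]) hgf) hu'
  obtain ⟨e, rfl⟩ : ∃ e, Finsupp.single e 1 = m :=
    Finsupp.range_single_one.superset (degree_eq_of_mem_support hl hm)
  have hv : ¬ v ≤ Finsupp.single e 1 + u := by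
    intro hle
    have hve : v ≤ Finsupp.single e 1 := fun x => by
      by_cases hx : v x = 0
      · simp [hx]
      · simpa [h.noQuadraticRelation.eq_zero_of_ne_zero huv.symm hx] using hle x
    have := Finsupp.degree_mono hve
    rw [huv.symm.degree_eq, Finsupp.degree_single] at this
    omega
  have hlfu : Finsupp.single e 1 + u ∈ (l * f).support := by
    rw [mem_support_iff, hf, mul_sub, coeff_sub, coeff_mul_monomial, coeff_mul_monomial', if_neg hv]
    simpa using hm
  obtain ⟨D, ⟨hD, hD3, hDu⟩, w, hw, hle⟩ := exists_mem_support_le_of_mem_span hlf hlfu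
  exact ⟨e, (Nat.one_le_iff_ne_zero.1 (Finsupp.single_le_iff.1 hmu')),
    isExchangeable_of_le huv.degree_eq hD hD3 hDu hw hle⟩

end HasLinearPresentation

theorem NoQuadraticRelation.not_isCubicRelation_single_add (hG : NoQuadraticRelation G)
    {e₁ : G.edgeSet} {r : G.edgeSet →₀ ℕ} :
    ¬ IsCubicRelation (Finsupp.single e 1 + r) (Finsupp.single e₁ 1 + r) := fun h =>
  hG.not_isCubicRelation_add (by rintro rfl; simpa using h.degree_eq) (by simp) rfl h

theorem HasLinearPresentation.exists_isExchangeable_of_isCubicRelation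
    (h : HasLinearPresentation 3 (toricIdeal K G)) {e₁ : G.edgeSet} {r w' : G.edgeSet →₀ ℕ}
    (huv : IsCubicRelation (Finsupp.single e₁ 1 + r) v) (hne : e₁ ≠ e)
    (hw : IsCubicRelation (Finsupp.single e 1 + r) w') :
    ∃ e', w' e' ≠ 0 ∧ IsExchangeable (Finsupp.single e₁ 1 + r) e' := by
  classical
  have hw' : w' ≠ Finsupp.single e₁ 1 + r := by
    rintro rfl
    exact h.noQuadraticRelation.not_isCubicRelation_single_add hw
  have he : Finsupp.single e 1 ≠ Finsupp.single e₁ 1 := fun he =>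
    hne (Finsupp.single_left_injective one_ne_zero he).symm
  exact h.exists_isExchangeable huv
    (monomial_sub_monomial_mem_toricIdeal (K := K) hw.multidegree_eq)
    ((isHomogeneous_monomial 1 hw.degree_eq).sub (isHomogeneous_monomial 1 hw.symm.degree_eq))
    (by simp [coeff_monomial, hw', he]) (by simp [coeff_monomial, hw.ne])

namespace IsSixTrail

theorem vertices_subset_range (hp : IsSixTrail G p) {d r : G.edgeSet →₀ ℕ}
    (hu : altEdges hp.adj 0 = d + r) : vertices r ⊆ Set.range p :=
  (Set.subset_union_right.trans_eq ((vertices_add d r).symm.trans (congrArg _ hu.symm))).trans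
    (vertices_altEdges_subset hp.adj 0)

theorem not_isExchangeable_of_mem_range (hp : IsSixTrail G p) (hG : NoQuadraticRelation G)
    {x y : V} (hx : x ∈ Set.range p) (hy : y ∈ Set.range p) (hxy : G.Adj x y) :
    ¬ IsExchangeable (altEdges hp.adj 0) ⟨s(x, y), hxy⟩ := by
  rintro ⟨e₁, r, w', hu, hne, hw⟩
  have hsub : vertices (Finsupp.single ⟨s(x, y), hxy⟩ 1 + r) ⊆ Set.range p := by
    rw [vertices_add, vertices_single_mk hxy one_ne_zero]
    exact Set.union_subset (Set.pair_subset hx hy) (hp.vertices_subset_range hu)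
  obtain ⟨hw0, -⟩ | ⟨hw1, -⟩ := hp.eq_altEdges_of_isCubicRelation hG hsub hw
  · rw [hu] at hw0
    exact hne (Finsupp.single_left_injective one_ne_zero (add_right_cancel hw0)).symm
  · have := hp.isCubicRelation
    rw [hu, ← hw1] at this
    exact hG.not_isCubicRelation_single_add this

end IsSixTrail

end Exchange

section OuterVertex

variable {K : Type*} [Field K] {V : Type*} {G : SimpleGraph V} {p : Fin 6 → V} {x y z t : V}
  {r r' : G.edgeSet →₀ ℕ}

theorem mem_vertices_of_single_add_multidegree_eq
    (h : Finsupp.single (some z) 1 + multidegree r = Finsupp.single (some t) 1 + multidegree r')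
    (htz : t ≠ z) : t ∈ vertices r := by
  intro (ht : multidegree r (some t) = 0)
  have := DFunLike.congr_fun h (some t)
  simp [ht, htz.symm] at this
  omega

theorem vertices_subset_insert_of_single_add_multidegree_eq
    (h : Finsupp.single (some z) 1 + multidegree r = Finsupp.single (some t) 1 + multidegree r') :
    vertices r' ⊆ insert z (vertices r) := by
  intro x hx
  refine or_iff_not_imp_left.2 fun hxz (hxr : multidegree r (some x) = 0) => hx ?_
  have := DFunLike.congr_fun h (some x)
  simp [hxr, Ne.symm hxz] at this
  omega

theorem NoQuadraticRelation.exists_eq_single_add_of_isCubicRelation (hG : NoQuadraticRelation G)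
    {w' : G.edgeSet →₀ ℕ} (hyz : G.Adj y z)
    (hw : IsCubicRelation (Finsupp.single ⟨s(y, z), hyz⟩ 1 + r) w') :
    ∃ (t : V) (hyt : G.Adj y t) (r' : G.edgeSet →₀ ℕ),
      w' = Finsupp.single ⟨s(y, t), hyt⟩ 1 + r' ∧ t ≠ z ∧ (∀ e, r e ≠ 0 → r' e = 0) ∧
      Finsupp.single (some z) 1 + multidegree r = Finsupp.single (some t) 1 + multidegree r' := by
  have hyw' : y ∈ vertices w' := by
    rw [← vertices_congr hw.multidegree_eq, vertices_add, vertices_single_mk hyz one_ne_zero]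
    simp
  obtain ⟨t, hyt, r', rfl⟩ := exists_eq_single_add_of_mem_vertices hyw'
  have hdisj (e : G.edgeSet) := hG.eq_zero_of_ne_zero hw (e := e)
  refine ⟨t, hyt, r', rfl, ?_, fun e he => ?_, ?_⟩
  · rintro rfl
    simpa using hdisj ⟨s(y, t), hyz⟩ (by simp)
  · exact (Nat.add_eq_zero_iff.1 (hdisj e (by simp [he]))).2
  · have := hw.multidegree_eq
    rw [map_add, map_add, multidegree_single_mk, multidegree_single_mk] at this
    refine add_left_cancel (a := Finsupp.single (some y) 1 + Finsupp.single none 1) ?_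
    convert this using 1 <;> abel

namespace IsSixTrail

theorem exists_isExchangeable_adj (hp : IsSixTrail G p)
    (h : HasLinearPresentation 3 (toricIdeal K G)) (hz : z ∈ Set.range p) (hyz : G.Adj y z)
    (hex : IsExchangeable (altEdges hp.adj 0) ⟨s(y, z), hyz⟩) :
    ∃ t ∈ Set.range p, t ≠ z ∧
      (∃ hyt : G.Adj y t, IsExchangeable (altEdges hp.adj 0) ⟨s(y, t), hyt⟩) ∧
      ∃ (e₁ : G.edgeSet) (r r' : G.edgeSet →₀ ℕ), altEdges hp.adj 0 = Finsupp.single e₁ 1 + r ∧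
        (∀ e, r e ≠ 0 → r' e = 0) ∧
        Finsupp.single (some z) 1 + multidegree r = Finsupp.single (some t) 1 + multidegree r' := by
  have hG := h.noQuadraticRelation
  obtain ⟨e₁, r, w', hu, hne, hw⟩ := hex
  obtain ⟨t, hyt, r', rfl, htz, hdisj, hzt⟩ := hG.exists_eq_single_add_of_isCubicRelation hyz hw
  have hr := hp.vertices_subset_range hu
  have hr' : vertices r' ⊆ Set.range p :=
    (vertices_subset_insert_of_single_add_multidegree_eq hzt).trans (Set.insert_subset hz hr)
  refine ⟨t, hr (mem_vertices_of_single_add_multidegree_eq hzt htz), htz, ⟨hyt, ?_⟩,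
    e₁, r, r', hu, hdisj, hzt⟩
  obtain ⟨⟨⟨a, b⟩, hab⟩, he', hex'⟩ := h.exists_isExchangeable_of_isCubicRelation
    (hu ▸ hp.isCubicRelation) hne hw
  rw [← hu] at hex'
  by_cases hr'e : r' ⟨s(a, b), hab⟩ = 0
  · rw [Finsupp.add_apply, hr'e, add_zero, Finsupp.single_apply_ne_zero] at he'
    exact he'.1 ▸ hex'
  · refine absurd hex' (hp.not_isExchangeable_of_mem_range hG ?_ ?_ hab) <;>
      exact hr' (mem_vertices_iff.2 ⟨_, hr'e, by simp⟩)

theorem exists_altEdges_ne_zero (hp : IsSixTrail G p) (e₁ e₂ : G.edgeSet) :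
    ∃ e, altEdges hp.adj 0 e ≠ 0 ∧ e ≠ e₁ ∧ e ≠ e₂ := by
  have h0 : altEdges hp.adj 0 (walkEdge hp.adj 0) ≠ 0 := by simp [altEdges]
  have h2 : altEdges hp.adj 0 (walkEdge hp.adj 2) ≠ 0 := by simp [altEdges]
  have h4 : altEdges hp.adj 0 (walkEdge hp.adj 4) ≠ 0 := by simp [altEdges]
  have h02 := hp.injective_walkEdge.ne (show (0 : Fin 6) ≠ 2 by decide)
  have h04 := hp.injective_walkEdge.ne (show (0 : Fin 6) ≠ 4 by decide)
  have h24 := hp.injective_walkEdge.ne (show (2 : Fin 6) ≠ 4 by decide)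
  grind

theorem multidegree_add_ne (hp : IsSixTrail G p) (hG : FourCycleFree G) {e₁ e₂ : G.edgeSet}
    {r₁ r₂ r₁' r₂' : G.edgeSet →₀ ℕ} (h₁ : altEdges hp.adj 0 = Finsupp.single e₁ 1 + r₁)
    (h₂ : altEdges hp.adj 0 = Finsupp.single e₂ 1 + r₂) (hr₁ : ∀ e, r₁ e ≠ 0 → r₁' e = 0)
    (hr₂ : ∀ e, r₂ e ≠ 0 → r₂' e = 0) :
    multidegree (r₁ + r₂) ≠ multidegree (r₁' + r₂') := by
  classical
  intro hdeg
  have hsub : vertices (r₁ + r₂) ⊆ Set.range p := vertices_add r₁ r₂ ▸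
    Set.union_subset (hp.vertices_subset_range h₁) (hp.vertices_subset_range h₂)
  have key (e : G.edgeSet) (he : altEdges hp.adj 0 e ≠ 0) :
      r₁ e = (if e = e₁ then 0 else 1) ∧ r₂ e = if e = e₂ then 0 else 1 := by
    have hr₁e := DFunLike.congr_fun h₁ e
    have hr₂e := DFunLike.congr_fun h₂ e
    rw [hp.altEdges_eq_one he, Finsupp.add_apply, Finsupp.single_apply] at hr₁e hr₂e
    grind
  obtain ⟨e, he, hee₁, hee₂⟩ := hp.exists_altEdges_ne_zero e₁ e₂
  have he₁ : altEdges hp.adj 0 e₁ ≠ 0 := by simp [h₁]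
  have hr₁e : r₁ e = 1 := by simp [key e he, hee₁]
  have hr₂e : r₂ e = 1 := by simp [key e he, hee₂]
  have hr₁'e : r₁' e = 0 := hr₁ e (by simp [hr₁e])
  have hr₂'e : r₂' e = 0 := hr₂ e (by simp [hr₂e])
  have hr₁e₁ : r₁ e₁ = 0 := by simp [key e₁ he₁]
  have hr₂e₁ : r₂ e₁ ≤ 1 := by
    rw [(key e₁ he₁).2]
    split_ifs <;> simp
  -- The coefficients at `e` force `n = 2` in the second alternative; those at `e₁` refute it.
  obtain ⟨n, hn⟩ | ⟨n, hn⟩ := hp.exists_add_smul_altEdges_eq hG hsub hdeg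
  · have hne := DFunLike.congr_fun hn e
    simp only [Finsupp.add_apply, Finsupp.smul_apply, smul_eq_mul, hp.altEdges_eq_one he,
      hp.altEdges_one_eq_zero he] at hne
    omega
  · have hne := DFunLike.congr_fun hn e
    have hne₁ := DFunLike.congr_fun hn e₁
    simp only [Finsupp.add_apply, Finsupp.smul_apply, smul_eq_mul, hp.altEdges_eq_one he,
      hp.altEdges_one_eq_zero he, hp.altEdges_eq_one he₁, hp.altEdges_one_eq_zero he₁] at hne hne₁
    omega

theorem not_isExchangeable_of_notMem_range (hp : IsSixTrail G p)
    (h : HasLinearPresentation 3 (toricIdeal K G)) (hy : y ∉ Set.range p) (hz : z ∈ Set.range p)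
    (hyz : G.Adj y z) : ¬ IsExchangeable (altEdges hp.adj 0) ⟨s(y, z), hyz⟩ := by
  intro hex
  have hG := h.noQuadraticRelation.fourCycleFree
  obtain ⟨t, ht, htz, ⟨hyt, hex'⟩, e₁, r₁, r₁', h₁, hr₁, heq₁⟩ :=
    hp.exists_isExchangeable_adj h hz hyz hex
  obtain ⟨z', hz', hz't, ⟨hyz', -⟩, e₂, r₂, r₂', h₂, hr₂, heq₂⟩ :=
    hp.exists_isExchangeable_adj h ht hyt hex'
  obtain rfl : z' = z := by
    rcases hp.eq_or_eq_or_eq_of_adj hG hy hz ht hz' hyz hyt hyz' with h | h | h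
    exacts [absurd h.symm htz, absurd h.symm hz't, h]
  refine hp.multidegree_add_ne hG h₁ h₂ hr₁ hr₂ ?_
  rw [map_add, map_add]
  refine add_left_cancel (a := Finsupp.single (some z') 1 + Finsupp.single (some t) 1) ?_
  rw [add_add_add_comm, heq₁, heq₂]
  abel

theorem notMem_range_of_isExchangeable (hp : IsSixTrail G p)
    (h : HasLinearPresentation 3 (toricIdeal K G)) {e : G.edgeSet}
    (hex : IsExchangeable (altEdges hp.adj 0) e) (hx : x ∈ (e : Sym2 V)) : x ∉ Set.range p := by
  intro hxp
  obtain ⟨_, he⟩ := e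
  obtain ⟨y, rfl⟩ := hx
  have hxy : G.Adj x y := he
  by_cases hy : y ∈ Set.range p
  · exact hp.not_isExchangeable_of_mem_range h.noQuadraticRelation hxp hy hxy hex
  · have hswap : (⟨s(x, y), hxy⟩ : G.edgeSet) = ⟨s(y, x), hxy.symm⟩ := Subtype.ext Sym2.eq_swap
    exact hp.not_isExchangeable_of_notMem_range h hy hxp hxy.symm (hswap ▸ hex)

theorem not_isExchangeable (hp : IsSixTrail G p) (h : HasLinearPresentation 3 (toricIdeal K G))
    (e : G.edgeSet) : ¬ IsExchangeable (altEdges hp.adj 0) e := by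
  intro hex
  obtain ⟨e₁, r, w', hu, hne, hw⟩ := id hex
  obtain ⟨e', he', hex'⟩ := h.exists_isExchangeable_of_isCubicRelation
    (hu ▸ hp.isCubicRelation) hne hw
  rw [← hu] at hex'
  have hend (x : V) (hx : x ∈ (e' : Sym2 V)) : x ∈ (e : Sym2 V) := by
    obtain ⟨e₂, he₂, hxe₂⟩ :=
      mem_vertices_iff.1 (vertices_congr hw.multidegree_eq ▸ mem_vertices_iff.2 ⟨e', he', hx⟩)
    have hr : r e₂ = 0 := by
      by_contra hr
      exact hp.notMem_range_of_isExchangeable h hex' hx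
        (hp.vertices_subset_range hu (mem_vertices_iff.2 ⟨e₂, hr, hxe₂⟩))
    rw [Finsupp.add_apply, hr, add_zero, Finsupp.single_apply_ne_zero] at he₂
    exact he₂.1 ▸ hxe₂
  have hee' : e = e' := by
    obtain ⟨⟨a, b⟩, hab⟩ := e'
    exact Subtype.ext
      ((Sym2.mem_and_mem_iff (G.ne_of_adj hab)).1 ⟨hend a (by simp), hend b (by simp)⟩)
  exact he' (h.noQuadraticRelation.eq_zero_of_ne_zero hw (by simp [hee']))

end IsSixTrail

end OuterVertex

section Generators

variable {K : Type*} [Field K] {V : Type*} {G : SimpleGraph V}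

theorem walkBinom_mem_toricIdeal {v : ℕ → V} (h : ∀ k, k < 6 → G.Adj (v k) (v (k + 1)))
    (hv : v 6 = v 0) : walkBinom K G v h ∈ toricIdeal K G := by
  simp only [walkBinom, X, monomial_mul, mul_one]
  refine monomial_sub_monomial_mem_toricIdeal ?_
  simp only [map_add, multidegree, Finsupp.linearCombination_single, edgeExponent, Sym2.lift_mk,
    one_smul, hv]
  abel

theorem exists_walkBinom_eq {p : Fin 6 → V} (hp : ∀ i, G.Adj (p i) (p (i + 1))) :
    ∃ (v : ℕ → V) (h : ∀ k, k < 6 → G.Adj (v k) (v (k + 1))),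
      v 6 = v 0 ∧ monomial (altEdges hp 0) 1 - monomial (altEdges hp 1) 1 = walkBinom K G v h := by
  refine ⟨fun k => p (Fin.ofNat 6 k), fun k hk => ?_, rfl, ?_⟩
  · interval_cases k
    exacts [hp 0, hp 1, hp 2, hp 3, hp 4, hp 5]
  · simp only [walkBinom, X, monomial_mul, mul_one]
    rfl

namespace HasLinearPresentation

theorem toricIdeal_eq_span_walkBinom (h : HasLinearPresentation 3 (toricIdeal K G)) :
    toricIdeal K G = Ideal.span
      {f : MvPolynomial G.edgeSet K |
        ∃ (v : ℕ → V) (h : ∀ k, k < 6 → G.Adj (v k) (v (k + 1))),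
          v 6 = v 0 ∧ f = walkBinom K G v h} := by
  refine le_antisymm (h.le_of_forall_isHomogeneous fun f hf hf3 => ?_) (Ideal.span_le.2 ?_)
  · refine mem_of_monomial_sub_monomial_mem hf fun d hd d' hdd' => ?_
    by_cases hne : d = d'
    · simp [hne]
    obtain ⟨p, hp, rfl, rfl⟩ := h.noQuadraticRelation.exists_altEdges_eq
      ⟨degree_eq_of_mem_support hf3 hd, hdd', hne⟩
    exact Ideal.subset_span (exists_walkBinom_eq hp)
  · rintro _ ⟨v, hv, hv6, rfl⟩
    exact walkBinom_mem_toricIdeal hv hv6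

theorem toricIdeal_eq_span_singleton (h : HasLinearPresentation 3 (toricIdeal K G))
    {u v : G.edgeSet →₀ ℕ} (huv : IsCubicRelation u v) :
    toricIdeal K G = Ideal.span {monomial u 1 - monomial v 1} := by
  classical
  obtain ⟨p, hp, rfl, rfl⟩ := h.noQuadraticRelation.exists_altEdges_eq huv
  have hp := h.noQuadraticRelation.isSixTrail huv
  set u := altEdges hp.adj 0
  set f : MvPolynomial G.edgeSet K := monomial u 1 - monomial (altEdges hp.adj 1) 1 with hf
  have hfI : f ∈ toricIdeal K G := monomial_sub_monomial_mem_toricIdeal huv.multidegree_eq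
  have hf3 : f.IsHomogeneous 3 :=
    (isHomogeneous_monomial 1 huv.degree_eq).sub (isHomogeneous_monomial 1 huv.symm.degree_eq)
  have hfu : coeff u f = 1 := by simp [hf, coeff_monomial, huv.ne.symm]
  refine le_antisymm (h.le_of_forall_isHomogeneous fun g hg hg3 => ?_)
    ((Ideal.span_singleton_le_iff_mem _).2 hfI)
  have hgf : g - C (coeff u g) * f = 0 := by
    by_contra hne
    obtain ⟨u', hu'⟩ := support_nonempty.2 hne
    obtain ⟨e, -, hex⟩ := h.exists_isExchangeable huv (sub_mem hg (Ideal.mul_mem_left _ _ hfI))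
      (hg3.sub (hf3.C_mul _)) (by rw [coeff_sub, coeff_C_mul, hfu, mul_one, sub_self]) hu'
    exact hp.not_isExchangeable h e hex
  rw [sub_eq_zero.1 hgf]
  exact Ideal.mul_mem_left _ _ (Ideal.mem_span_singleton_self f)

theorem isPrincipal_toricIdeal (h : HasLinearPresentation 3 (toricIdeal K G)) :
    (toricIdeal K G).IsPrincipal := by
  by_cases hrel : ∃ u v : G.edgeSet →₀ ℕ, IsCubicRelation u v
  · obtain ⟨u, v, huv⟩ := hrel
    exact ⟨_, h.toricIdeal_eq_span_singleton huv⟩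
  · refine ⟨0, le_antisymm (h.le_of_forall_isHomogeneous fun f hf hf3 => ?_) (by simp)⟩
    refine mem_of_monomial_sub_monomial_mem hf fun d hd d' hdd' => ?_
    obtain rfl : d = d' := by
      by_contra hne
      exact hrel ⟨d, d', degree_eq_of_mem_support hf3 hd, hdd', hne⟩
    simp

end HasLinearPresentation

end Generators

theorem toricIdeal_of_three_linear_resolution_general
    {V : Type*} (K : Type*) [Field K] (G : SimpleGraph V)
    (h : HasLinearPresentation 3 (toricIdeal K G)) :
    toricIdeal K G = Ideal.span
      {f : MvPolynomial G.edgeSet K |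
        ∃ (v : ℕ → V) (h : ∀ k, k < 6 → G.Adj (v k) (v (k + 1))),
          v 6 = v 0 ∧ f = walkBinom K G v h} ∧
    (toricIdeal K G).IsPrincipal :=
  ⟨h.toricIdeal_eq_span_walkBinom, h.isPrincipal_toricIdeal⟩

/-- If the edge ring `K[G]` of a finite connected simple graph has a
`3`-linear resolution, then the toric ideal `I_G` is generated by the degree-`3`
binomials `f_Γ` arising from even closed walks `Γ` of length `6`, and `I_G` is
generated by at most two elements. -/
theorem toricIdeal_of_three_linear_resolution
    {N : ℕ} (K : Type*) [Field K] (G : SimpleGraph (Fin N)) (hG : G.Connected)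
    (h3 : HasLinearResolution 3 (toricIdeal K G)) :
    toricIdeal K G = Ideal.span
      {f : MvPolynomial G.edgeSet K |
        ∃ (v : ℕ → Fin N) (h : ∀ k, k < 6 → G.Adj (v k) (v (k + 1))),
          v 6 = v 0 ∧ f = walkBinom K G v h} ∧
    ∃ f g : MvPolynomial G.edgeSet K,
      toricIdeal K G = Ideal.span {f, g} := by
  obtain ⟨hspan, f, hf⟩ :=
    toricIdeal_of_three_linear_resolution_general K G h3.hasLinearPresentation
  exact ⟨hspan, f, f, by rw [Set.pair_eq_singleton, hf]⟩
end
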